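/- Let G be a finite group with a normal subgroup H such that G/H is supersoluble. Suppose that every maximal subgroup of every non-cyclic Sylow subgroup of the generalized Fitting subgroup F*(H) that has no supersoluble supplement in G is 𝔘ₛ-quasinormal in G. Then G is supersoluble. -/

import Mathlib

open scoped Pointwise

universe u

/-- `M` is a maximal subgroup of `K` (within the subgroup lattice of the ambient group). -/
def IsMaximalIn {G : Type*} [Group G] (M K : Subgroup G) : Prop :=
  M < K ∧ ∀ L : Subgroup G, M < L → L ≤ K → L = K

/-- `P` is a Sylow `p`-subgroup of the subgroup `E`. -/
def IsSylowIn {G : Type*} [Group G] (p : ℕ) (P E : Subgroup G) : Prop :=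
  P ≤ E ∧ IsPGroup p P ∧ ¬ p ∣ (P.subgroupOf E).index

/-- `H` is s-permutable in `G`: it permutes with every Sylow subgroup of `G`. -/
def SPermutable {G : Type*} [Group G] (H : Subgroup G) : Prop :=
  ∀ q : ℕ, q.Prime → ∀ Q : Subgroup G, IsSylowIn q Q ⊤ →
    (H : Set G) * (Q : Set G) = (Q : Set G) * (H : Set G)

/-- `A/B` is a chief factor of the ambient group. -/
def IsChiefFactor {G : Type*} [Group G] (A B : Subgroup G) : Prop :=
  A.Normal ∧ B.Normal ∧ B < A ∧ ∀ L : Subgroup G, L.Normal → B < L → L < A → False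

/-- The 𝔘-hypercenter: the product of all normal subgroups `N` such that every chief
factor `A/B` with `A ≤ N` has prime order. -/
def UHypercenter (G : Type*) [Group G] : Subgroup G :=
  sSup {N : Subgroup G | N.Normal ∧
    ∀ A B : Subgroup G, IsChiefFactor A B → A ≤ N → (B.relIndex A).Prime}

/-- The 𝔖-hypercenter: the product of all normal subgroups `N` such that every chief
factor `A/B` with `A ≤ N` is abelian with `G/C_G(A/B)` soluble. -/
def SHypercenter (G : Type*) [Group G] : Subgroup G :=
  sSup {N : Subgroup G | N.Normal ∧
    ∀ A B : Subgroup G, IsChiefFactor A B → A ≤ N →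
      (∀ a ∈ A, ∀ b ∈ A, a * b * a⁻¹ * b⁻¹ ∈ B) ∧
      ∃ C : Subgroup G, ∃ _ : C.Normal,
        (∀ g : G, g ∈ C ↔ ∀ h ∈ A, g * h * g⁻¹ * h⁻¹ ∈ B) ∧ IsSolvable (G ⧸ C)}

/-- `H` is 𝔘ₛ-quasinormal in `G`. -/
def UsQuasinormal {G : Type*} [Group G] (H : Subgroup G) : Prop :=
  ∃ T : Subgroup G, T.Normal ∧ SPermutable (H ⊔ T) ∧
    ∀ x ∈ H ⊓ T,
      (QuotientGroup.mk x : G ⧸ H.normalCore) ∈ UHypercenter (G ⧸ H.normalCore)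

/-- `H` is 𝔖ₛ-quasinormal in `G`. -/
def SsQuasinormal {G : Type*} [Group G] (H : Subgroup G) : Prop :=
  ∃ T : Subgroup G, T.Normal ∧ SPermutable (H ⊔ T) ∧
    ∀ x ∈ H ⊓ T,
      (QuotientGroup.mk x : G ⧸ H.normalCore) ∈ SHypercenter (G ⧸ H.normalCore)

/-- A group is supersoluble if it has a chain of subgroups, each normal in the whole
group, reaching from `⊥` to `⊤`, with all successive factors cyclic. -/
def IsSupersoluble (G : Type*) [Group G] : Prop :=
  ∃ (k : ℕ) (c : Fin (k + 1) → Subgroup G),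
    c 0 = ⊥ ∧ c (Fin.last k) = ⊤ ∧ (∀ i, (c i).Normal) ∧
    (∀ i : Fin k, c i.castSucc ≤ c i.succ) ∧
    ∀ i : Fin k, ∃ g ∈ c i.succ, ∀ x ∈ c i.succ, ∃ m : ℤ, x⁻¹ * g ^ m ∈ c i.castSucc

/-- `A` is subnormal in `G`. -/
def IsSubnormal {G : Type*} [Group G] (A : Subgroup G) : Prop :=
  ∃ (n : ℕ) (c : Fin (n + 1) → Subgroup G), c 0 = A ∧ c (Fin.last n) = ⊤ ∧
    ∀ i : Fin n, c i.castSucc ≤ c i.succ ∧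
      ∀ x ∈ c i.succ, ∀ a ∈ c i.castSucc, x * a * x⁻¹ ∈ c i.castSucc

/-- `H` has a supersoluble supplement in the ambient group. -/
def HasSupersolubleSupplement {G : Type*} [Group G] (H : Subgroup G) : Prop :=
  ∃ T : Subgroup G, IsSupersoluble T ∧ (H : Set G) * (T : Set G) = Set.univ

/-- A group is `p`-nilpotent if it has a normal subgroup of order prime to `p`
and of `p`-power index (a normal `p`-complement). -/
def IsPNilpotent (p : ℕ) (G : Type*) [Group G] : Prop :=
  ∃ N : Subgroup G, N.Normal ∧ Nat.Coprime (Nat.card N) p ∧ ∃ k : ℕ, N.index = p ^ k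

/-- `H` has a `p`-nilpotent supplement in the ambient group. -/
def HasPNilpotentSupplement {G : Type*} [Group G] (p : ℕ) (H : Subgroup G) : Prop :=
  ∃ T : Subgroup G, IsPNilpotent p T ∧ (H : Set G) * (T : Set G) = Set.univ

/-- `H` is an `n`-maximal subgroup of `P`: there is a chain
`H = Hₙ < ⋯ < H₁ < H₀ = P` with each term maximal in the preceding one. -/
def IsNMaximalIn {G : Type*} [Group G] (n : ℕ) (H P : Subgroup G) : Prop :=
  ∃ c : Fin (n + 1) → Subgroup G, c 0 = P ∧ c (Fin.last n) = H ∧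
    ∀ i : Fin n, IsMaximalIn (c i.succ) (c i.castSucc)

/-- A group is quasinilpotent if every element induces an inner automorphism
on every chief factor. -/
def IsQuasinilpotentGroup (G : Type*) [Group G] : Prop :=
  ∀ A B : Subgroup G, IsChiefFactor A B →
    ∀ x : G, ∃ y ∈ A, ∀ h ∈ A, (x * h * x⁻¹) * (y * h * y⁻¹)⁻¹ ∈ B

/-- The generalized Fitting subgroup: the product of all normal quasinilpotent
subgroups. -/
def generalizedFitting (G : Type*) [Group G] : Subgroup G :=
  sSup {N : Subgroup G | N.Normal ∧ IsQuasinilpotentGroup N}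

/-- The generalized Fitting subgroup of a subgroup `H`, as a subgroup of `G`. -/
def FStarIn {G : Type*} [Group G] (H : Subgroup G) : Subgroup G :=
  (generalizedFitting H).map H.subtype

/-- The Fitting subgroup: the product of all nilpotent normal subgroups. -/
def fittingSubgroup (G : Type*) [Group G] : Subgroup G :=
  sSup {N : Subgroup G | N.Normal ∧ Group.IsNilpotent N}

/-- The Fitting subgroup of a subgroup `H`, as a subgroup of `G`. -/
def FittingIn {G : Type*} [Group G] (H : Subgroup G) : Subgroup G :=
  (fittingSubgroup H).map H.subtype

set_option linter.unusedVariables false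
namespace Ss
variable {G : Type*} [Group G]

def NB (K A : Subgroup G) : Prop := ∀ k ∈ K, ∀ a ∈ A, k * a * k⁻¹ ∈ A

lemma NB.inv {K A : Subgroup G} (h : NB K A) {k a : G} (hk : k ∈ K) (ha : a ∈ A) :
    k⁻¹ * a * k ∈ A := by
  simpa using h k⁻¹ (K.inv_mem hk) a ha

lemma NB.le_normalizer {K A : Subgroup G} (h : NB K A) : K ≤ Subgroup.normalizer (A : Set G) := by
  intro k hk
  rw [Subgroup.mem_normalizer_iff]
  intro a
  refine ⟨h k hk a, fun h' => ?_⟩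
  have := h.inv hk h'
  simpa [mul_assoc] using this

lemma NB_iff {K A : Subgroup G} : NB K A ↔ K ≤ Subgroup.normalizer (A : Set G) :=
  ⟨NB.le_normalizer, fun h k hk a ha => (Subgroup.mem_normalizer_iff.1 (h hk) a).1 ha⟩

lemma NB.of_normal (K A : Subgroup G) [hA : A.Normal] : NB K A :=
  fun k _ a ha => hA.conj_mem a ha k

lemma NB.normal {A : Subgroup G} (h : NB ⊤ A) : A.Normal := ⟨fun a ha g => h g trivial a ha⟩

lemma NB.mono {K L A : Subgroup G} (h : NB K A) (hl : L ≤ K) : NB L A :=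
  fun k hk => h k (hl hk)

lemma NB.self (A : Subgroup G) : NB A A := fun k hk a ha =>
  A.mul_mem (A.mul_mem hk ha) (A.inv_mem hk)

lemma NB.inf {K A B : Subgroup G} (h : NB K A) (h' : NB K B) : NB K (A ⊓ B) :=
  fun k hk a ha => ⟨h k hk a ha.1, h' k hk a ha.2⟩

lemma NB.inf_self {K A : Subgroup G} (h : NB K A) : NB K (A ⊓ K) := h.inf (NB.self K)

lemma NB.ssup {K : Subgroup G} {S : Set (Subgroup G)} (h : ∀ A ∈ S, NB K A) : NB K (sSup S) := by
  intro k hk a ha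
  have : sSup S ≤ (sSup S).comap (MulAut.conj k).toMonoidHom := by
    apply sSup_le
    intro A hA x hx
    exact (le_sSup hA : A ≤ sSup S) (h A hA k hk x hx)
  exact this ha

lemma NB.sup {K A B : Subgroup G} (h : NB K A) (h' : NB K B) : NB K (A ⊔ B) := by
  rw [← sSup_pair]
  apply NB.ssup
  rintro C (rfl | rfl) <;> assumption

lemma NB.sup_left {K L A : Subgroup G} (h : NB K A) (h' : NB L A) : NB (K ⊔ L) A := by
  rw [NB_iff] at *
  exact sup_le h h'

lemma mem_sup_NB {A B : Subgroup G} (h : NB A B) {x : G} :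
    x ∈ A ⊔ B ↔ ∃ a ∈ A, ∃ b ∈ B, a * b = x := by
  constructor
  · intro hx
    let S : Subgroup G :=
      { carrier := {x | ∃ a ∈ A, ∃ b ∈ B, a * b = x}
        one_mem' := ⟨1, A.one_mem, 1, B.one_mem, by simp⟩
        mul_mem' := by
          rintro _ _ ⟨a, ha, b, hb, rfl⟩ ⟨c, hc, d, hd, rfl⟩
          exact ⟨a * c, A.mul_mem ha hc, (c⁻¹ * b * c) * d, B.mul_mem (h.inv hc hb) hd, by group⟩
        inv_mem' := by
          rintro _ ⟨a, ha, b, hb, rfl⟩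
          exact ⟨a⁻¹, A.inv_mem ha, a * b⁻¹ * a⁻¹, h a ha _ (B.inv_mem hb), by group⟩ }
    have : A ⊔ B ≤ S := sup_le (fun a ha => ⟨a, ha, 1, B.one_mem, by simp⟩)
      (fun b hb => ⟨1, A.one_mem, b, hb, by simp⟩)
    exact this hx
  · rintro ⟨a, ha, b, hb, rfl⟩
    exact Subgroup.mul_mem_sup ha hb

/-- elements centralizing `A/B` (and normalizing `B`) -/
def Cz (A B : Subgroup G) : Subgroup G where
  carrier := {c | c ∈ Subgroup.normalizer (B : Set G) ∧ ∀ h ∈ A, c * h * c⁻¹ * h⁻¹ ∈ B}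
  one_mem' := ⟨Subgroup.one_mem _, fun h _ => by simp⟩
  mul_mem' := by
    rintro c d ⟨hc, hc'⟩ ⟨hd, hd'⟩
    refine ⟨Subgroup.mul_mem _ hc hd, fun h hh => ?_⟩
    have e : c * d * h * (c * d)⁻¹ * h⁻¹ =
      (c * (d * h * d⁻¹ * h⁻¹) * c⁻¹) * (c * h * c⁻¹ * h⁻¹) := by group
    rw [e]
    exact B.mul_mem ((Subgroup.mem_normalizer_iff.1 hc _).1 (hd' h hh)) (hc' h hh)
  inv_mem' := by
    rintro c ⟨hc, hc'⟩
    refine ⟨Subgroup.inv_mem _ hc, fun h hh => ?_⟩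
    rw [Subgroup.mem_normalizer_iff.1 hc]
    have e : c * (c⁻¹ * h * c⁻¹⁻¹ * h⁻¹) * c⁻¹ = (c * h * c⁻¹ * h⁻¹)⁻¹ := by group
    rw [e]; exact B.inv_mem (hc' h hh)

lemma mem_Cz {A B : Subgroup G} {c : G} : c ∈ Cz A B ↔
    c ∈ Subgroup.normalizer (B : Set G) ∧ ∀ h ∈ A, c * h * c⁻¹ * h⁻¹ ∈ B := Iff.rfl

lemma mem_Cz' {K A B : Subgroup G} (hB : NB K B) {c : G} (hc : c ∈ K) : c ∈ Cz A B ↔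
    ∀ h ∈ A, c * h * c⁻¹ * h⁻¹ ∈ B :=
  ⟨fun h => h.2, fun h => ⟨hB.le_normalizer hc, h⟩⟩

lemma NB.Cz {K A B : Subgroup G} (hA : NB K A) (hB : NB K B) : NB K (Cz A B) := by
  intro k hk c hc
  have hk' := hB.le_normalizer hk
  refine ⟨Subgroup.mul_mem _ (Subgroup.mul_mem _ hk' hc.1) (Subgroup.inv_mem _ hk'), fun h hh => ?_⟩
  have := hB k hk _ (hc.2 _ (hA.inv hk hh))
  convert this using 1
  group

/-- chief factors of the subgroup `K` -/
structure RelChief (K A B : Subgroup G) : Prop where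
  le : A ≤ K
  lt : B < A
  nA : NB K A
  nB : NB K B
  max : ∀ L, NB K L → B ≤ L → L ≤ A → L = B ∨ L = A

def QNin (K : Subgroup G) : Prop := ∀ A B, RelChief K A B → K ≤ A ⊔ (Cz A B ⊓ K)

lemma QN_iff {Γ : Type*} [Group Γ] (f : Γ →* G) (hf : Function.Injective f) :
    IsQuasinilpotentGroup Γ ↔ QNin f.range := by
  constructor
  · intro h A B hAB
    have hch : IsChiefFactor (A.comap f) (B.comap f) := by
      refine ⟨⟨fun a ha g => ?_⟩, ⟨fun a ha g => ?_⟩, ?_, ?_⟩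
      · simpa using hAB.nA (f g) ⟨g, rfl⟩ _ ha
      · simpa using hAB.nB (f g) ⟨g, rfl⟩ _ ha
      · refine lt_of_le_of_ne (Subgroup.comap_mono hAB.lt.le) fun he => hAB.lt.not_ge ?_
        intro a ha
        obtain ⟨g, rfl⟩ := hAB.le ha
        have : g ∈ A.comap f := ha
        rw [← he] at this; exact this
      · intro L hL h1 h2
        have hn : NB f.range (L.map f) := by
          rintro _ ⟨k, rfl⟩ _ ⟨l, hl, rfl⟩
          exact ⟨k * l * k⁻¹, hL.conj_mem l hl k, by simp⟩
        have hBr : B ≤ f.range := hAB.lt.le.trans hAB.le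
        have i1 : B ≤ L.map f := by
          intro b hb
          obtain ⟨g, rfl⟩ := hBr hb
          exact ⟨g, h1.le hb, rfl⟩
        have i2 : L.map f ≤ A := by
          rw [Subgroup.map_le_iff_le_comap]; exact h2.le
        rcases hAB.max (L.map f) hn i1 i2 with e | e
        · apply h1.ne; rw [← e, Subgroup.comap_map_eq_self_of_injective hf]
        · apply h2.ne; rw [← e, Subgroup.comap_map_eq_self_of_injective hf]
    rintro _ ⟨x, rfl⟩
    obtain ⟨y, hy, hyx⟩ := h _ _ hch x
    have : f x = f y * (f y⁻¹ * f x) := by simp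
    rw [this]
    refine Subgroup.mul_mem_sup hy ⟨(mem_Cz' hAB.nB ⟨y⁻¹ * x, by simp⟩).2 ?_, ⟨y⁻¹ * x, by simp⟩⟩
    intro a ha
    obtain ⟨g, rfl⟩ := hAB.le ha
    have h1 := hyx g ha
    have h2 := hAB.nB (f y⁻¹) ⟨_, rfl⟩ _ h1
    convert h2 using 1
    simp only [← map_mul, ← map_inv]; congr 1; group
  · intro h A B hAB x
    obtain ⟨hA, hB, hlt, hmax⟩ := hAB
    have hch : RelChief f.range (A.map f) (B.map f) := by
      refine ⟨?_, ?_, ?_, ?_, ?_⟩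
      · rintro _ ⟨a, _, rfl⟩; exact ⟨a, rfl⟩
      · exact (Subgroup.map_lt_map_iff_of_injective hf).2 hlt
      · rintro _ ⟨k, rfl⟩ _ ⟨l, hl, rfl⟩
        exact ⟨k * l * k⁻¹, hA.conj_mem l hl k, by simp⟩
      · rintro _ ⟨k, rfl⟩ _ ⟨l, hl, rfl⟩
        exact ⟨k * l * k⁻¹, hB.conj_mem l hl k, by simp⟩
      · intro L hL h1 h2
        have hLr : L ≤ f.range := h2.trans (by rintro _ ⟨a, _, rfl⟩; exact ⟨a, rfl⟩)
        have hLL : (L.comap f).map f = L := Subgroup.map_comap_eq_self hLr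
        have hLn : (L.comap f).Normal := ⟨fun a ha g => by
          simpa using hL (f g) ⟨g, rfl⟩ _ ha⟩
        have h1' : B ≤ L.comap f := by rwa [← Subgroup.map_le_iff_le_comap]
        have h2' : L.comap f ≤ A := by
          rw [← hLL] at h2
          exact (Subgroup.map_le_map_iff_of_injective hf).1 h2
        by_contra hcon
        push Not at hcon
        refine hmax _ hLn (lt_of_le_of_ne h1' ?_) (lt_of_le_of_ne h2' ?_)
        · intro e; apply hcon.1; rw [e, hLL]
        · intro e; apply hcon.2; rw [← e, hLL]
    have := h _ _ hch (show f x ∈ f.range from ⟨x, rfl⟩)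
    obtain ⟨_, ⟨y, hy, rfl⟩, c, hc, e⟩ := (mem_sup_NB (((hch.nA.Cz hch.nB).inf_self).mono hch.le)).1 this
    refine ⟨y, hy, fun g hg => ?_⟩
    have h1 := hc.1.2 (f g) ⟨g, hg, rfl⟩
    have h2 := hch.nB (f y) ⟨_, rfl⟩ _ h1
    have e' : c = f y⁻¹ * f x := by rw [← e]; simp
    rw [← Subgroup.mem_map_iff_mem hf]
    convert h2 using 1
    rw [e']
    simp only [← map_mul, ← map_inv]; congr 1; group

end Ss

set_option linter.unusedVariables false
namespace Ss
variable {G : Type*} [Group G]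

def cj (g : G) (A : Subgroup G) : Subgroup G := A.map (MulAut.conj g).toMonoidHom

lemma mem_cj {g x : G} {A : Subgroup G} : x ∈ cj g A ↔ g⁻¹ * x * g ∈ A := by
  constructor
  · rintro ⟨a, ha, rfl⟩
    simpa [mul_assoc] using ha
  · intro h
    exact ⟨_, h, by simp [mul_assoc]⟩

lemma cj_mono {g : G} {A B : Subgroup G} (h : A ≤ B) : cj g A ≤ cj g B := Subgroup.map_mono h

lemma cj_inv_cj (g : G) (A : Subgroup G) : cj g⁻¹ (cj g A) = A := by
  ext x; simp [mem_cj, mul_assoc]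

lemma cj_cj_inv (g : G) (A : Subgroup G) : cj g (cj g⁻¹ A) = A := by
  ext x; simp [mem_cj, mul_assoc]

lemma cj_eq {K A : Subgroup G} (h : NB K A) {k : G} (hk : k ∈ K) : cj k A = A := by
  ext x
  rw [mem_cj]
  refine ⟨fun hx => ?_, fun hx => h.inv hk hx⟩
  simpa [mul_assoc] using h k hk _ hx

lemma cj_le_iff {g : G} {A B : Subgroup G} : cj g A ≤ B ↔ A ≤ cj g⁻¹ B := by
  constructor
  · intro h; rw [← cj_inv_cj g A]; exact cj_mono h
  · intro h; rw [← cj_cj_inv g B]; exact cj_mono h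

lemma le_cj_iff {g : G} {A B : Subgroup G} : A ≤ cj g B ↔ cj g⁻¹ A ≤ B := by
  rw [cj_le_iff, inv_inv]

lemma NB.cj {K A : Subgroup G} (h : NB K A) (g : G) : NB (cj g K) (cj g A) := by
  intro k hk a ha
  rw [mem_cj] at *
  convert h _ hk _ ha using 1
  group

lemma RelChief.cj {K A B : Subgroup G} (h : RelChief K A B) (g : G) :
    RelChief (cj g K) (cj g A) (cj g B) := by
  refine ⟨cj_mono h.le, lt_of_le_of_ne (cj_mono h.lt.le) fun e => h.lt.ne ?_, h.nA.cj g, h.nB.cj g, ?_⟩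
  · rw [← cj_inv_cj g B, e, cj_inv_cj]
  · intro L hL h1 h2
    have := hL.cj g⁻¹
    rw [cj_inv_cj] at this
    rcases h.max _ this (by rwa [cj_le_iff] at h1) (by rwa [le_cj_iff] at h2) with e | e
    · left; rw [← e, cj_cj_inv]
    · right; rw [← e, cj_cj_inv]

lemma QNin.cj {N : Subgroup G} (h : QNin N) (g : G) : QNin (cj g N) := by
  have h1 : IsQuasinilpotentGroup N := (QN_iff N.subtype N.subtype_injective).2 (by
    rwa [Subgroup.range_subtype])
  have h2 := (QN_iff ((MulAut.conj g).toMonoidHom.comp N.subtype)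
    ((MulAut.conj g).injective.comp N.subtype_injective)).1 h1
  rw [MonoidHom.range_comp, Subgroup.range_subtype] at h2
  exact h2

lemma Cz_sup {c : G} {X Y B : Subgroup G} (h1 : c ∈ Cz X B) (h2 : c ∈ Cz Y B) (hXY : NB X Y)
    (hXB : NB X B) : c ∈ Cz (X ⊔ Y) B := by
  refine ⟨h1.1, fun h hh => ?_⟩
  obtain ⟨a, ha, b, hb, rfl⟩ := (mem_sup_NB hXY).1 hh
  have e : c * (a * b) * c⁻¹ * (a * b)⁻¹ =
    (c * a * c⁻¹ * a⁻¹) * (a * (c * b * c⁻¹ * b⁻¹) * a⁻¹) := by group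
  rw [e]
  exact B.mul_mem (h1.2 a ha) (hXB a ha _ (h2.2 b hb))

lemma comm_mem_inf {A B : Subgroup G} {a b : G} (ha : a ∈ A) (hb : b ∈ B)
    (h1 : b * a * b⁻¹ ∈ A) (h2 : a * b * a⁻¹ ∈ B) : a * b * a⁻¹ * b⁻¹ ∈ A ⊓ B := by
  constructor
  · have : a * b * a⁻¹ * b⁻¹ = a * (b * a * b⁻¹)⁻¹ := by group
    rw [this]; exact A.mul_mem ha (A.inv_mem h1)
  · exact B.mul_mem h2 (B.inv_mem hb)

lemma exists_min_over [Finite G] {N A B : Subgroup G} (hA : NB N A) (hB : NB N B) (hlt : B < A)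
    (hAN : A ≤ N) : ∃ V ≤ A, RelChief N V B := by
  obtain ⟨V, hV⟩ := (Set.toFinite {V : Subgroup G | NB N V ∧ B < V ∧ V ≤ A}).exists_minimal
    ⟨A, hA, hlt, le_rfl⟩
  obtain ⟨⟨h1, h2, h3⟩, h4⟩ := hV
  refine ⟨V, h3, h3.trans hAN, h2, h1, hB, fun L hL hBL hLV => ?_⟩
  by_cases e : L = B
  · exact Or.inl e
  · right
    exact le_antisymm hLV (h4 ⟨hL, lt_of_le_of_ne hBL (Ne.symm e), hLV.trans h3⟩ hLV)

lemma QN_half [Finite G] {K N A B : Subgroup G} (hN : QNin N) (hNK : N ≤ K) (hnN : NB K N)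
    (hc : RelChief K A B) : N ≤ A ⊔ (Cz A B ⊓ K) := by
  by_cases hAN : A ⊓ N ≤ B
  · refine le_trans (fun n hn => ?_) le_sup_right
    refine ⟨(mem_Cz' hc.nB (hNK hn)).2 fun h hh => hAN ?_, hNK hn⟩
    have := comm_mem_inf hn hh (hnN h (hc.le hh) n hn) (hc.nA n (hNK hn) h hh)
    exact ⟨this.2, this.1⟩
  have hB1K : NB K (B ⊓ N) := hc.nB.inf hnN
  have hA1K : NB K (A ⊓ N) := hc.nA.inf hnN
  have hlt : B ⊓ N < A ⊓ N := lt_of_le_of_ne (inf_le_inf_right _ hc.lt.le) fun e =>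
    hAN (e ▸ inf_le_left)
  have hAsup : A ≤ (A ⊓ N) ⊔ B := by
    rcases hc.max ((A ⊓ N) ⊔ B) (hA1K.sup hc.nB) le_sup_right (sup_le inf_le_left hc.lt.le) with e | e
    · exact absurd (e ▸ le_sup_left) hAN
    · exact e.ge
  obtain ⟨W, hW⟩ := (Set.toFinite {W : Subgroup G | NB N W ∧ B ⊓ N ≤ W ∧ W ≤ A ⊓ N ∧
    N ≤ W ⊔ (Cz W (B ⊓ N) ⊓ N)}).exists_maximal ⟨B ⊓ N, hB1K.mono hNK, le_rfl, hlt.le, by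
      refine le_trans (fun n hn => ?_) le_sup_right
      refine ⟨(mem_Cz' hB1K (hNK hn)).2 fun h hh => ?_, hn⟩
      exact (B ⊓ N).mul_mem (hB1K n (hNK hn) h hh) (Subgroup.inv_mem _ hh)⟩
  obtain ⟨⟨hW1, hW2, hW3, hW4⟩, hW5⟩ := hW
  have hWA : A ⊓ N ≤ W := by
    obtain ⟨V, hVA, hV⟩ := exists_min_over (hA1K.mono hNK) (hB1K.mono hNK) hlt inf_le_right
    have hVk : ∀ k ∈ K, RelChief N (cj k V) (B ⊓ N) := by
      intro k hk
      have := hV.cj k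
      rwa [cj_eq hnN hk, cj_eq hB1K hk] at this
    have hVkA : ∀ k ∈ K, cj k V ≤ A ⊓ N := by
      intro k hk
      have := cj_mono (g := k) hVA
      rwa [cj_eq hA1K hk] at this
    by_cases hall : ∀ k ∈ K, cj k V ≤ W
    · set U := sSup {X | ∃ k ∈ K, X = cj k V} with hU
      have hUW : U ≤ W := sSup_le (by rintro _ ⟨k, hk, rfl⟩; exact hall k hk)
      have hVU : V ≤ U := le_sSup ⟨1, K.one_mem, by ext x; simp [mem_cj]⟩
      have hUK : NB K U := by
        intro k hk u hu
        have : U ≤ cj k⁻¹ U := by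
          apply sSup_le
          rintro _ ⟨l, hl, rfl⟩
          rw [← cj_le_iff]
          exact le_sSup ⟨k * l, K.mul_mem hk hl, by ext x; simp [mem_cj, mul_assoc]⟩
        simpa [mem_cj] using this hu
      rcases hc.max (U ⊔ B) (hUK.sup hc.nB) le_sup_right
        (sup_le (hUW.trans (hW3.trans inf_le_left)) hc.lt.le) with e | e
      · exfalso
        apply hV.lt.not_ge
        exact le_inf (hVU.trans (le_sup_left.trans e.le)) hV.le
      · intro a ha
        have : a ∈ U ⊔ B := e.ge ha.1
        obtain ⟨u, hu, b, hb, rfl⟩ := (mem_sup_NB (hc.nB.mono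
          (hUW.trans (hW3.trans (inf_le_right.trans hNK))))).1 this
        refine W.mul_mem (hUW hu) (hW2 ⟨hb, ?_⟩)
        have h1 : u ∈ N := (hW3 (hUW hu)).2
        simpa using N.mul_mem (N.inv_mem h1) ha.2
    · push Not at hall
      obtain ⟨k, hk, hkW⟩ := hall
      have hV' := hVk k hk
      set V' := cj k V
      exfalso
      apply hkW
      have hinf : V' ⊓ W = B ⊓ N := by
        rcases hV'.max (V' ⊓ W) (hV'.nA.inf hW1) (le_inf hV'.lt.le hW2) inf_le_left with e | e
        · exact e
        · exact absurd (e ▸ inf_le_right) hkW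
      have hWN : W ≤ N := hW3.trans inf_le_right
      refine le_sup_right.trans (hW5 (y := W ⊔ V') ⟨hW1.sup hV'.nA, hW2.trans le_sup_left,
        sup_le hW3 (hVkA k hk), ?_⟩ le_sup_left)
      intro x hx
      obtain ⟨w, hw, c, hc', rfl⟩ := (mem_sup_NB (((hW1.Cz hV'.nB).inf_self).mono hWN)).1 (hW4 hx)
      obtain ⟨v, hv, d, hd, rfl⟩ := (mem_sup_NB (((hV'.nA.Cz hV'.nB).inf_self).mono hV'.le)).1
        (hN _ _ hV' hc'.2)
      have hvC : v ∈ Cz W (B ⊓ N) := by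
        refine (mem_Cz' hV'.nB (hV'.le hv)).2 fun h hh => ?_
        rw [← hinf]
        exact comm_mem_inf hv hh (hV'.nA h (hWN hh) v hv) (hW1 v (hV'.le hv) h hh)
      have hdC : d ∈ Cz W (B ⊓ N) := by
        have := Subgroup.mul_mem _ (Subgroup.inv_mem _ hvC) hc'.1
        simpa using this
      rw [← mul_assoc]
      refine Subgroup.mul_mem_sup (Subgroup.mul_mem_sup hw hv) ⟨?_, hd.2⟩
      exact Cz_sup hdC hd.1 (hV'.nA.mono hWN) (hV'.nB.mono hWN)
  have hWe : W = A ⊓ N := le_antisymm hW3 hWA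
  rw [hWe] at hW4
  refine hW4.trans (sup_le (inf_le_left.trans le_sup_left) (le_trans ?_ le_sup_right))
  intro c hc'
  refine ⟨?_, hNK hc'.2⟩
  have hcN := hc.nB.le_normalizer (hNK hc'.2)
  have h1 : c ∈ Cz ((A ⊓ N) ⊔ B) B := Cz_sup ⟨hcN, fun h hh => (hc'.1.2 h hh).1⟩
    ⟨hcN, fun h hh => B.mul_mem (hc.nB c (hNK hc'.2) h hh) (B.inv_mem hh)⟩
    (hc.nB.mono (inf_le_left.trans hc.le)) (hc.nB.mono (inf_le_left.trans hc.le))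
  exact ⟨hcN, fun h hh => h1.2 h (hAsup hh)⟩

lemma QN_sup [Finite G] {N M : Subgroup G} (hN : QNin N) (hM : QNin M) (h1 : NB M N) (h2 : NB N M) :
    QNin (N ⊔ M) := by
  intro A B hc
  refine sup_le ?_ ?_
  · exact QN_half hN le_sup_left ((NB.self N).sup_left h1) hc
  · exact QN_half hM le_sup_right (h2.sup_left (NB.self M)) hc

def QS (H : Subgroup G) : Set (Subgroup G) := {N | N ≤ H ∧ NB H N ∧ QNin N}

lemma QN_bot : QNin (⊥ : Subgroup G) := fun A B h => bot_le

lemma FStar_eq (H : Subgroup G) : FStarIn H = sSup (QS H) := by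
  apply le_antisymm
  · rw [FStarIn, Subgroup.map_le_iff_le_comap]
    apply sSup_le
    rintro N ⟨hN, hq⟩
    rw [← Subgroup.map_le_iff_le_comap]
    apply le_sSup
    refine ⟨Subgroup.map_subtype_le N, ?_, ?_⟩
    · rintro k hk _ ⟨n, hn, rfl⟩
      exact ⟨_, hN.conj_mem n hn ⟨k, hk⟩, by simp⟩
    · have := (QN_iff (H.subtype.comp N.subtype)
        (H.subtype_injective.comp N.subtype_injective)).1 hq
      rwa [MonoidHom.range_comp, Subgroup.range_subtype] at this
  · apply sSup_le
    rintro N ⟨hNH, hNn, hq⟩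
    have e : (N.subgroupOf H).map H.subtype = N := by simpa using hNH
    rw [← e]
    apply Subgroup.map_mono
    apply le_sSup
    refine ⟨⟨fun a ha g => hNn g g.2 a ha⟩, ?_⟩
    refine (QN_iff (H.subtype.comp (N.subgroupOf H).subtype)
        (H.subtype_injective.comp (N.subgroupOf H).subtype_injective)).2 ?_
    rw [MonoidHom.range_comp, Subgroup.range_subtype, e]
    exact hq

lemma sSup_mem_of_sup [Finite G] {S : Set (Subgroup G)} (h0 : ⊥ ∈ S)
    (h : ∀ A ∈ S, ∀ B ∈ S, A ⊔ B ∈ S) : sSup S ∈ S := by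
  obtain ⟨W, hW⟩ := (Set.toFinite S).exists_maximal ⟨⊥, h0⟩
  have : sSup S = W := by
    apply le_antisymm
    · apply sSup_le
      intro A hA
      exact le_sup_right.trans (hW.2 (h W hW.1 A hA) le_sup_left)
    · exact le_sSup hW.1
  rw [this]; exact hW.1

lemma FStar_mem [Finite G] (H : Subgroup G) : FStarIn H ∈ QS H := by
  rw [FStar_eq]
  apply sSup_mem_of_sup
  · exact ⟨bot_le, fun k _ a ha => by simp_all, QN_bot⟩
  · rintro A ⟨h1, h2, h3⟩ B ⟨k1, k2, k3⟩
    exact ⟨sup_le h1 k1, h2.sup k2, QN_sup h3 k3 (h2.mono k1) (k2.mono h1)⟩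

lemma FStar_normal (H : Subgroup G) (hH : H.Normal) : (FStarIn H).Normal := by
  rw [FStar_eq]
  refine ⟨fun a ha g => ?_⟩
  have : sSup (QS H) ≤ cj g⁻¹ (sSup (QS H)) := by
    apply sSup_le
    rintro N ⟨h1, h2, h3⟩
    rw [← cj_le_iff]
    apply le_sSup
    have e : cj g H = H := cj_eq (K := ⊤) (NB.of_normal _ _) trivial
    refine ⟨?_, ?_, h3.cj g⟩
    · have := cj_mono (g := g) h1
      rwa [e] at this
    · have := h2.cj g
      rwa [e] at this
  simpa [mem_cj] using this ha

/-- `C_H(F*(H)) ≤ F*(H)`. -/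
lemma cent_FStar [Finite G] (H : Subgroup G) {c : G} (hc : c ∈ H)
    (hcF : ∀ f ∈ FStarIn H, c * f = f * c) : c ∈ FStarIn H := by
  by_contra hcon
  obtain ⟨hF1, hF2, hF3⟩ := FStar_mem H
  set F := FStarIn H with hFdef
  have hC0 : NB H (Subgroup.centralizer (F : Set G) ⊓ H) := by
    refine NB.inf (fun k hk a ha => ?_) (NB.self H)
    rw [Subgroup.mem_centralizer_iff] at *
    intro f hf
    have := ha _ (hF2.inv hk hf)
    calc f * (k * a * k⁻¹) = k * ((k⁻¹ * f * k) * a) * k⁻¹ := by group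
      _ = k * (a * (k⁻¹ * f * k)) * k⁻¹ := by rw [this]
      _ = _ := by group
  obtain ⟨N, ⟨hN1, hN2, hN3⟩, hN4⟩ := (Set.toFinite {N : Subgroup G | NB H N ∧
    N ≤ Subgroup.centralizer (F : Set G) ⊓ H ∧ ¬ N ≤ F}).exists_minimal ⟨_, hC0, le_rfl, fun h =>
      hcon (h ⟨Subgroup.mem_centralizer_iff.2 fun f hf => (hcF f hf).symm, hc⟩)⟩
  have hNH : N ≤ H := hN2.trans inf_le_right
  set Z := N ⊓ F with hZ
  have hZH : NB H Z := hN1.inf hF2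
  have hZcomm : ∀ z ∈ Z, ∀ n ∈ N, z * n = n * z := fun z hz n hn =>
    Subgroup.mem_centralizer_iff.1 (hN2 hn).1 z hz.2
  have hZlt : Z < N := lt_of_le_of_ne inf_le_left fun e => hN3 (e ▸ inf_le_right)
  obtain ⟨V, hVN, hV⟩ := exists_min_over (NB.self N) (hZH.mono hNH) hZlt le_rfl
  have hVk : ∀ k ∈ H, RelChief N (cj k V) Z := by
    intro k hk
    have := hV.cj k
    rwa [cj_eq hN1 hk, cj_eq hZH hk] at this
  set U := sSup {X | ∃ k ∈ H, X = cj k V} with hU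
  have hVU : V ≤ U := le_sSup ⟨1, H.one_mem, by ext x; simp [mem_cj]⟩
  have hUH : NB H U := by
    intro k hk u hu
    have : U ≤ cj k⁻¹ U := by
      apply sSup_le
      rintro _ ⟨l, hl, rfl⟩
      rw [← cj_le_iff]
      exact le_sSup ⟨k * l, H.mul_mem hk hl, by ext x; simp [mem_cj, mul_assoc]⟩
    simpa [mem_cj] using this hu
  have hUN : U ≤ N := sSup_le (by rintro _ ⟨k, hk, rfl⟩; exact (hVk k hk).le)
  have hNU : N ≤ U := hN4 ⟨hUH, hUN.trans hN2, fun h => hV.lt.not_ge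
    (le_inf hV.le (hVU.trans h))⟩ hUN
  apply hN3
  rw [hFdef, FStar_eq]
  apply le_sSup
  refine ⟨hNH, hN1, fun A B hAB => ?_⟩
  by_cases hcen : N ≤ Cz A B
  · exact (le_inf hcen le_rfl).trans le_sup_right
  have hZA : Z ⊓ A ≤ B := by
    rcases hAB.max ((Z ⊓ A) ⊔ B) (((hZH.mono hNH).inf hAB.nA).sup hAB.nB) le_sup_right
      (sup_le inf_le_right hAB.lt.le) with e | e
    · exact le_sup_left.trans e.le
    · exfalso
      apply hcen
      intro n hn
      have h1 : n ∈ Cz ((Z ⊓ A) ⊔ B) B := by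
        have hnB := hAB.nB.le_normalizer hn
        refine Cz_sup ⟨hnB, fun h hh => ?_⟩
          ⟨hnB, fun h hh => B.mul_mem (hAB.nB n hn h hh) (B.inv_mem hh)⟩
          (hAB.nB.mono (inf_le_right.trans hAB.le)) (hAB.nB.mono (inf_le_right.trans hAB.le))
        rw [← hZcomm h hh.1 n hn]; simp [B.one_mem]
      rwa [e] at h1
  have hex : ∃ k ∈ H, ¬ cj k V ≤ Cz A B := by
    by_contra hno
    push Not at hno
    exact hcen (hNU.trans (sSup_le (by rintro _ ⟨k, hk, rfl⟩; exact hno k hk)))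
  obtain ⟨k, hk, hkV⟩ := hex
  have hY := hVk k hk
  set Y := cj k V with hYdef
  have hYA : Y ≤ A ⊔ Z := by
    rcases hY.max ((Y ⊓ A) ⊔ Z) ((hY.nA.inf hAB.nA).sup hY.nB) le_sup_right
      (sup_le inf_le_left hY.lt.le) with e | e
    · exfalso
      apply hkV
      intro y hy
      refine (mem_Cz' hAB.nB (hY.le hy)).2 fun a ha => hZA ?_
      have := comm_mem_inf hy ha (hY.nA a (hAB.le ha) y hy) (hAB.nA y (hY.le hy) a ha)
      exact ⟨e.le (Subgroup.mem_sup_left this), this.2⟩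
    · exact e.ge.trans (sup_le_sup_right inf_le_right _)
  have hAsup : A ≤ (Y ⊓ A) ⊔ B := by
    rcases hAB.max ((Y ⊓ A) ⊔ B) ((hY.nA.inf hAB.nA).sup hAB.nB) le_sup_right
      (sup_le inf_le_right hAB.lt.le) with e | e
    · exfalso
      apply hkV
      intro y hy
      refine (mem_Cz' hAB.nB (hY.le hy)).2 fun a ha => ?_
      have := comm_mem_inf hy ha (hY.nA a (hAB.le ha) y hy) (hAB.nA y (hY.le hy) a ha)
      exact e.le (Subgroup.mem_sup_left this)
    · exact e.ge
  -- elements centralizing `Y` modulo `Z` centralize `A/B`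
  have hD : ∀ d ∈ N, (∀ y ∈ Y, d * y * d⁻¹ * y⁻¹ ∈ Z) → d ∈ Cz A B := by
    intro d hd h
    have hnB := hAB.nB.le_normalizer hd
    have h1 : d ∈ Cz ((Y ⊓ A) ⊔ B) B := by
      refine Cz_sup ⟨hnB, fun y hy => hZA ⟨h y hy.1, ?_⟩⟩
        ⟨hnB, fun h hh => B.mul_mem (hAB.nB d hd h hh) (B.inv_mem hh)⟩
        (hAB.nB.mono (inf_le_right.trans hAB.le)) (hAB.nB.mono (inf_le_right.trans hAB.le))
      exact A.mul_mem (hAB.nA d hd y hy.2) (A.inv_mem hy.2)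
    exact ⟨hnB, fun a ha => h1.2 a (hAsup ha)⟩
  have hZC : Z ≤ Cz A B := fun z hz => hD z hz.1 fun y hy => by
    rw [hZcomm z hz y (hY.le hy)]; simp [Z.one_mem]
  refine hNU.trans (sSup_le ?_)
  rintro _ ⟨l, hl, rfl⟩
  have hX := hVk l hl
  set X := cj l V
  by_cases hXY : X = Y
  · rw [hXY]
    exact hYA.trans (sup_le_sup_left (le_inf hZC inf_le_left) _)
  · refine le_trans (b := Cz A B ⊓ N) (fun x hx => ⟨hD x (hX.le hx) fun y hy => ?_, hX.le hx⟩) le_sup_right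
    have hin : X ⊓ Y = Z := by
      rcases hX.max (X ⊓ Y) (hX.nA.inf hY.nA) (le_inf hX.lt.le hY.lt.le) inf_le_left with e | e
      · exact e
      · rcases hY.max (X ⊓ Y) (hX.nA.inf hY.nA) (le_inf hX.lt.le hY.lt.le) inf_le_right with e' | e'
        · exact e'
        · exact absurd (e.symm.trans e') hXY
    rw [← hin]
    exact comm_mem_inf hx hy (hX.nA y (hY.le hy) x hx) (hY.nA x (hX.le hx) y hy)

end Ss

set_option linter.unusedVariables false
namespace Ss
variable {G : Type*} [Group G]

def CycMod (B A : Subgroup G) : Prop := ∃ g ∈ A, ∀ x ∈ A, ∃ m : ℤ, x⁻¹ * g ^ m ∈ B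

def SStep (B A : Subgroup G) : Prop := B.Normal ∧ A.Normal ∧ B ≤ A ∧ CycMod B A

lemma ss_of_chain {A : Subgroup G} (h : Relation.ReflTransGen SStep ⊥ A) :
    ∃ (k : ℕ) (c : Fin (k + 1) → Subgroup G),
    c 0 = ⊥ ∧ c (Fin.last k) = A ∧ (∀ i, (c i).Normal) ∧
    (∀ i : Fin k, c i.castSucc ≤ c i.succ) ∧
    ∀ i : Fin k, ∃ g ∈ c i.succ, ∀ x ∈ c i.succ, ∃ m : ℤ, x⁻¹ * g ^ m ∈ c i.castSucc := by
  induction h with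
  | refl => exact ⟨0, fun _ => ⊥, rfl, rfl, fun _ => inferInstance, fun i => i.elim0, fun i => i.elim0⟩
  | @tail B A _ hs ih =>
    obtain ⟨k, c, h0, h1, h2, h3, h4⟩ := ih
    refine ⟨k + 1, Fin.snoc (α := fun _ => Subgroup G) c A, ?_, ?_, ?_, ?_, ?_⟩
    · have : (0 : Fin (k+2)) = Fin.castSucc (0 : Fin (k+1)) := rfl
      rw [this, Fin.snoc_castSucc, h0]
    · rw [Fin.snoc_last]
    · intro i
      refine Fin.lastCases ?_ (fun i => ?_) i
      · rw [Fin.snoc_last]; exact hs.2.1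
      · rw [Fin.snoc_castSucc]; exact h2 i
    · intro i
      refine Fin.lastCases ?_ (fun i => ?_) i
      · rw [Fin.snoc_castSucc, Fin.succ_last, Fin.snoc_last, h1]; exact hs.2.2.1
      · rw [Fin.snoc_castSucc, Fin.succ_castSucc, Fin.snoc_castSucc]; exact h3 i
    · intro i
      refine Fin.lastCases ?_ (fun i => ?_) i
      · rw [Fin.snoc_castSucc, Fin.succ_last, Fin.snoc_last, h1]; exact hs.2.2.2
      · rw [Fin.snoc_castSucc, Fin.succ_castSucc, Fin.snoc_castSucc]; exact h4 i

lemma ss_iff : IsSupersoluble G ↔ Relation.ReflTransGen (SStep (G := G)) ⊥ ⊤ := by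
  refine ⟨?_, fun h => ss_of_chain h⟩
  rintro ⟨k, c, h0, h1, h2, h3, h4⟩
  have : ∀ i : Fin (k+1), Relation.ReflTransGen (SStep (G := G)) ⊥ (c i) := by
    intro i
    induction i using Fin.induction with
    | zero => rw [h0]
    | succ i ih => exact ih.tail ⟨h2 _, h2 _, h3 i, h4 i⟩
  rw [← h1]; exact this _

lemma CycMod.isCyclic {A B : Subgroup G} [B.Normal] (h : CycMod B A) :
    IsCyclic (A.map (QuotientGroup.mk' B)) := by
  obtain ⟨g, hg, h⟩ := h
  refine ⟨⟨⟨QuotientGroup.mk' B g, Subgroup.mem_map_of_mem _ hg⟩, ?_⟩⟩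
  rintro ⟨_, x, hx, rfl⟩
  obtain ⟨m, hm⟩ := h x hx
  refine ⟨m, Subtype.ext ?_⟩
  simp only [SubgroupClass.coe_zpow]
  rw [← map_zpow]
  exact ((QuotientGroup.eq (s := B)).2 hm).symm

lemma CycMod.of_hom {Γ Δ : Type*} [Group Γ] [Group Δ] (ψ : Γ →* Δ) (A : Subgroup Γ)
    (h : IsCyclic (A.map ψ)) : CycMod ψ.ker A := by
  obtain ⟨⟨⟨_, x, hx, rfl⟩, hg⟩⟩ := h
  refine ⟨x, hx, fun y hy => ?_⟩
  obtain ⟨m, hm⟩ := hg ⟨ψ y, Subgroup.mem_map_of_mem _ hy⟩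
  refine ⟨m, ?_⟩
  have := congrArg Subtype.val hm
  simp only [SubgroupClass.coe_zpow] at this
  rw [MonoidHom.mem_ker, map_mul, map_zpow, this, map_inv, inv_mul_cancel]

lemma SStep.comap {Γ : Type*} [Group Γ] (f : Γ →* G) {B A : Subgroup G} (h : SStep B A) :
    SStep (B.comap f) (A.comap f) := by
  have := h.1
  refine ⟨h.1.comap f, h.2.1.comap f, Subgroup.comap_mono h.2.2.1, ?_⟩
  have h1 := h.2.2.2.isCyclic
  have h2 : IsCyclic ((A.comap f).map ((QuotientGroup.mk' B).comp f)) := by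
    refine Subgroup.isCyclic_of_le (H' := A.map (QuotientGroup.mk' B)) ?_
    rw [← Subgroup.map_map]
    exact Subgroup.map_mono (Subgroup.map_comap_le _ _)
  have h3 := CycMod.of_hom _ _ h2
  rwa [← MonoidHom.comap_ker, QuotientGroup.ker_mk'] at h3

lemma SStep.map {Γ : Type*} [Group Γ] (f : G →* Γ) (hf : Function.Surjective f)
    {B A : Subgroup G} (h : SStep B A) :
    SStep (B.map f) (A.map f) := by
  obtain ⟨h1, h2, h3, g, hg, h4⟩ := h
  refine ⟨h1.map f hf, h2.map f hf, Subgroup.map_mono h3, f g, Subgroup.mem_map_of_mem _ hg, ?_⟩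
  rintro _ ⟨x, hx, rfl⟩
  obtain ⟨m, hm⟩ := h4 x hx
  exact ⟨m, x⁻¹ * g ^ m, hm, by simp⟩

lemma ss_inj {Γ : Type*} [Group Γ] (f : Γ →* G) (hf : Function.Injective f)
    (h : IsSupersoluble G) : IsSupersoluble Γ := by
  rw [ss_iff] at h ⊢
  have : Relation.ReflTransGen SStep ((⊥ : Subgroup G).comap f) ((⊤ : Subgroup G).comap f) := h.lift (p := SStep) (fun A => A.comap f) (fun _ _ h => h.comap f)
  rwa [MonoidHom.comap_bot, (MonoidHom.ker_eq_bot_iff f).2 hf, Subgroup.comap_top] at this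

lemma ss_surj {Γ : Type*} [Group Γ] (f : G →* Γ) (hf : Function.Surjective f)
    (h : IsSupersoluble G) : IsSupersoluble Γ := by
  rw [ss_iff] at h ⊢
  have : Relation.ReflTransGen SStep ((⊥ : Subgroup G).map f) ((⊤ : Subgroup G).map f) := h.lift (p := SStep) (fun A => A.map f) (fun _ _ h => h.map f hf)
  rwa [Subgroup.map_bot, Subgroup.map_top_of_surjective f hf] at this

lemma ss_prime_normal [Finite G] [Nontrivial G] (h : IsSupersoluble G) :
    ∃ N : Subgroup G, N.Normal ∧ (Nat.card N).Prime := by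
  rw [ss_iff] at h
  have key : ∀ C : Subgroup G, Relation.ReflTransGen SStep ⊥ C →
      C = ⊥ ∨ ∃ A : Subgroup G, A ≠ ⊥ ∧ SStep ⊥ A := by
    intro C hC
    induction hC with
    | refl => exact Or.inl rfl
    | @tail B A _ hs ih =>
      rcases ih with rfl | h
      · by_cases e : A = ⊥
        · exact Or.inl e
        · exact Or.inr ⟨A, e, hs⟩
      · exact Or.inr h
  rcases key ⊤ h with e | ⟨A, hA, -, hn, -, a, ha, hc⟩
  · exact absurd e top_ne_bot
  have hc' : ∀ x ∈ A, ∃ m : ℤ, x = a ^ m := fun x hx => by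
    obtain ⟨m, hm⟩ := hc x hx
    exact ⟨m, (inv_mul_eq_one.1 (Subgroup.mem_bot.1 hm))⟩
  have : Nat.card A ≠ 1 := fun e => hA ((Subgroup.card_eq_one).1 e)
  obtain ⟨s, hs, hd⟩ := Nat.exists_prime_and_dvd this
  have := Fact.mk hs
  obtain ⟨x, hx⟩ := exists_prime_orderOf_dvd_card' s hd
  refine ⟨Subgroup.zpowers (x : G), ⟨?_⟩, ?_⟩
  · rintro _ ⟨k, rfl⟩ g
    obtain ⟨m, hm⟩ := hc' x x.2
    obtain ⟨j, hj⟩ := hc' _ (hn.conj_mem a ha g)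
    refine ⟨j * k, ?_⟩
    have e1 : (g * (x:G) * g⁻¹) = (x:G)^j := by
      rw [hm, ← conj_zpow, hj, ← zpow_mul, ← zpow_mul, mul_comm]
    simp only
    rw [zpow_mul, ← e1, conj_zpow]
  · rw [Nat.card_zpowers, Subgroup.orderOf_coe, hx]; exact hs

lemma relIndex_of_prod {S Q Y : Subgroup G} (hQ : Q ≤ Y)
    (h : ∀ y ∈ Y, ∃ q ∈ Q, ∃ s ∈ S, y = q * s) : S.relIndex Y = S.relIndex Q := by
  symm
  refine Nat.card_congr (Equiv.ofBijective (Subgroup.quotientSubgroupOfEmbeddingOfLE S hQ)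
    ⟨(Subgroup.quotientSubgroupOfEmbeddingOfLE S hQ).injective, ?_⟩)
  intro y
  induction y using QuotientGroup.induction_on with
  | H y =>
    obtain ⟨q, hq, s, hs, e⟩ := h y y.2
    refine ⟨QuotientGroup.mk ⟨q, hq⟩, ?_⟩
    rw [Subgroup.quotientSubgroupOfEmbeddingOfLE_apply_mk]
    refine (QuotientGroup.eq).2 ?_
    rw [Subgroup.mem_subgroupOf]
    simp [e, hs]

lemma relIndex_dvd_of_NB {S K Y : Subgroup G} (hS : S ≤ Y) (hK : K ≤ Y) (hn : NB Y K) :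
    S.relIndex K ∣ S.relIndex Y := by
  have h1 : S.relIndex (K ⊔ S) = S.relIndex K := by
    refine relIndex_of_prod le_sup_left fun y hy => ?_
    rw [sup_comm, mem_sup_NB (hn.mono hS)] at hy
    obtain ⟨a, ha, b, hb, rfl⟩ := hy
    exact ⟨a * b * a⁻¹, hn a (hS ha) b hb, a, ha, by group⟩
  rw [← h1, ← Subgroup.relIndex_mul_relIndex S (K ⊔ S) Y le_sup_right (sup_le hK hS)]
  exact dvd_mul_right _ _

lemma ST : ∀ (n : ℕ) (Y : Type*) [Group Y] [Finite Y], Nat.card Y = n → IsSupersoluble Y →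
    ∀ r : ℕ, r.Prime → (∀ s : ℕ, s.Prime → s ∣ Nat.card Y → s ≤ r) →
    ∀ R : Sylow r Y, (R : Subgroup Y).Normal := by
  intro n
  induction n using Nat.strong_induction_on with
  | _ n ih =>
  intro Y _ _ hn hss r hr hmax R
  have := Fact.mk hr
  by_cases hY : Nontrivial Y
  swap
  · have := not_nontrivial_iff_subsingleton.1 hY
    exact ⟨fun x hx g => by rwa [Subsingleton.elim (g * x * g⁻¹) x]⟩
  obtain ⟨N, hN, hp⟩ := ss_prime_normal hss
  have hlt : Nat.card (Y ⧸ N) < n := by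
    rw [← hn, ← Subgroup.index_eq_card]
    have := N.card_mul_index
    have h2 := hp.two_le
    have h3 : 0 < N.index := Nat.pos_of_ne_zero Subgroup.FiniteIndex.index_ne_zero
    nlinarith
  have hq := ih _ hlt (Y ⧸ N) rfl (ss_surj (QuotientGroup.mk' N) (QuotientGroup.mk'_surjective N) hss)
    r hr (fun s hs hd => hmax s hs (hd.trans (by rw [← Subgroup.index_eq_card]; exact N.index_dvd_card)))
    (R.mapSurjective (QuotientGroup.mk'_surjective N))
  have hK : ((R : Subgroup Y) ⊔ N).Normal := by
    have h1 := hq.comap (QuotientGroup.mk' N)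
    rwa [Sylow.coe_mapSurjective, Subgroup.comap_map_eq, QuotientGroup.ker_mk'] at h1
  have hRK : (R : Subgroup Y) ≤ (R : Subgroup Y) ⊔ N := le_sup_left
  have hfr := Sylow.normalizer_sup_eq_top (N := (R : Subgroup Y) ⊔ N) (R.subtype hRK)
  have hm : ((R.subtype hRK : Sylow r ((R : Subgroup Y) ⊔ N : Subgroup Y)) : Subgroup _).map
      ((R : Subgroup Y) ⊔ N).subtype = R := by
    rw [Sylow.coe_subtype, Subgroup.subgroupOf_map_subtype]
    exact inf_of_le_left hRK
  rw [hm] at hfr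
  have hfr' : Subgroup.normalizer (R : Subgroup Y) ⊔ N = ⊤ := by
    rw [eq_top_iff, ← hfr]
    exact sup_le le_sup_left (sup_le (Subgroup.le_normalizer.trans le_sup_left) le_sup_right)
  have hidx : (Subgroup.normalizer ((R : Subgroup Y) : Set Y)).index ∣ Nat.card N := by
    rw [← Subgroup.relIndex_top_right, relIndex_of_prod (Q := N) le_top]
    swap
    · intro y _
      have hy : y ∈ N ⊔ Subgroup.normalizer ((R : Subgroup Y) : Set Y) := by
        rw [sup_comm]; exact hfr' ▸ Subgroup.mem_top y
      obtain ⟨a, ha, b, hb, e⟩ := Subgroup.mem_sup_of_normal_left.1 hy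
      exact ⟨a, ha, b, hb, e.symm⟩
    exact Subgroup.relIndex_dvd_card _ _
  have hcn : Nat.card (Sylow r Y) = (Subgroup.normalizer ((R : Subgroup Y) : Set Y)).index := R.card_eq_index_normalizer
  rw [← hcn] at hidx
  have hmod := card_sylow_modEq_one r Y
  have h1 : Nat.card (Sylow r Y) = 1 := by
    by_cases e : Nat.card N = r
    · have hNp : IsPGroup r N := IsPGroup.of_card (n := 1) (by rw [e, pow_one])
      have hNR : N ≤ R := by
        have h2 := hNp.le_sylow_of_normal R
        exact h2
      rw [hcn]
      rw [Subgroup.index_eq_one, ← hfr']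
      exact (sup_eq_left.2 (hNR.trans Subgroup.le_normalizer)).symm
    · have h2 := hmax _ hp (Subgroup.card_subgroup_dvd_card N)
      have h3 : Nat.card N < r := lt_of_le_of_ne h2 e
      have h4 := Nat.le_of_dvd hp.pos hidx
      exact Nat.ModEq.eq_of_lt_of_lt hmod (by omega) hr.one_lt
  have : Subsingleton (Sylow r Y) := (Nat.card_eq_one_iff_unique.1 h1).1
  exact Sylow.normal_of_subsingleton R

end Ss

set_option linter.unusedVariables false
open scoped Pointwise
namespace Ss
variable {G : Type*} [Group G]

lemma L0 [Finite G] {E K : Subgroup G}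
    (h : ∀ q : ℕ, q.Prime → ∀ z ∈ E, (∃ k, orderOf z = q ^ k) → z ∈ K) : E ≤ K := by
  rw [← Subgroup.relIndex_eq_one]
  by_contra hne
  obtain ⟨q, hq, hd⟩ := Nat.exists_prime_and_dvd hne
  have := Fact.mk hq
  obtain ⟨S⟩ : Nonempty (Sylow q E) := inferInstance
  have h1 : (S : Subgroup E) ≤ K.subgroupOf E := by
    intro z hz
    rw [Subgroup.mem_subgroupOf]
    refine h q hq z z.2 ?_
    obtain ⟨k, hk⟩ := IsPGroup.iff_orderOf.1 S.2 ⟨z, hz⟩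
    refine ⟨k, ?_⟩
    rw [Subgroup.orderOf_coe, ← hk]; exact (Subgroup.orderOf_mk z hz).symm
  exact S.not_dvd_index (hd.trans (Subgroup.index_dvd_of_le h1))

lemma pgroup_coatom {Γ : Type*} [Group Γ] [Finite Γ] {p : ℕ} [hp : Fact p.Prime] (hP : IsPGroup p Γ)
    {M : Subgroup Γ} (hM : IsCoatom M) : M.Normal ∧ M.index = p := by
  have hnil := hP.isNilpotent
  have hMn : M.Normal := Subgroup.NormalizerCondition.normal_of_coatom _ Group.normalizerCondition_of_isNilpotent hM
  refine ⟨hMn, ?_⟩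
  obtain ⟨n, hn⟩ := IsPGroup.iff_card.1 (hP.to_subgroup M)
  obtain ⟨m, hm⟩ := IsPGroup.iff_card.1 hP
  have hlt : n < m := by
    have h1 : Nat.card M < Nat.card Γ := by
      refine lt_of_le_of_ne (Nat.le_of_dvd Nat.card_pos (Subgroup.card_subgroup_dvd_card M)) ?_
      intro e
      exact hM.1 ((Subgroup.card_eq_iff_eq_top M).1 e)
    rw [hn, hm] at h1
    exact (Nat.pow_lt_pow_iff_right hp.out.one_lt).1 h1
  obtain ⟨K, hK, hMK⟩ := Sylow.exists_subgroup_card_pow_succ (p := p) (n := n) (H := M)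
    (by rw [hm]; exact pow_dvd_pow _ hlt) hn
  have hKt : K = ⊤ := by
    refine hM.2 K (lt_of_le_of_ne hMK ?_)
    rintro rfl
    rw [hn] at hK
    have := Nat.pow_right_injective hp.out.two_le hK
    omega
  have h2 := M.card_mul_index
  rw [hn, ← Subgroup.card_top, ← hKt, hK, pow_succ] at h2
  exact Nat.eq_of_mul_eq_mul_left (pow_pos hp.out.pos _) h2

lemma maxIn_coatom {M P : Subgroup G} (h : IsMaximalIn M P) : IsCoatom (M.subgroupOf P) := by
  refine ⟨fun e => h.1.not_ge (Subgroup.subgroupOf_eq_top.1 e), fun L hL => ?_⟩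
  have h1 : M < L.map P.subtype := by
    have := (Subgroup.map_lt_map_iff_of_injective P.subtype_injective).2 hL
    rwa [Subgroup.subgroupOf_map_subtype, inf_of_le_left h.1.le] at this
  have := h.2 _ h1 (Subgroup.map_subtype_le L)
  apply Subgroup.map_injective P.subtype_injective
  rw [this, ← MonoidHom.range_eq_map, Subgroup.range_subtype]

lemma maxIn_pgroup [Finite G] {p : ℕ} [hp : Fact p.Prime] {M P : Subgroup G} (hP : IsPGroup p P)
    (h : IsMaximalIn M P) : NB P M ∧ M.relIndex P = p ∧ (∀ x ∈ P, x ^ p ∈ M) ∧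
      ∀ x ∈ P, ∀ y ∈ P, x * y * x⁻¹ * y⁻¹ ∈ M := by
  obtain ⟨h1, h2⟩ := pgroup_coatom hP (maxIn_coatom h)
  refine ⟨fun k hk a ha => h1.conj_mem ⟨a, h.1.le ha⟩ (Subgroup.mem_subgroupOf.2 ha) ⟨k, hk⟩, h2, ?_, ?_⟩
  · intro x hx
    have := Subgroup.pow_index_mem (M.subgroupOf P) ⟨x, hx⟩
    rw [h2] at this
    exact this
  · intro x hx y hy
    have hc : Nat.card (P ⧸ M.subgroupOf P) = p := by rw [← Subgroup.index_eq_card, h2]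
    have hcyc : IsCyclic (P ⧸ M.subgroupOf P) := isCyclic_of_prime_card hc
    have hmc := hcyc.isMulCommutative
    have e : (QuotientGroup.mk (⟨x, hx⟩ * ⟨y, hy⟩ * ⟨x, hx⟩⁻¹ * ⟨y, hy⟩⁻¹ : P) : P ⧸ M.subgroupOf P) = 1 := by
      simp only [QuotientGroup.mk_mul, QuotientGroup.mk_inv]
      rw [mul_comm' (QuotientGroup.mk ⟨x, hx⟩ : P ⧸ M.subgroupOf P)]
      group
    exact (QuotientGroup.eq_one_iff (N := M.subgroupOf P) _).1 e

lemma exists_maxIn [Finite G] {L P : Subgroup G} (h : L < P) : ∃ M, L ≤ M ∧ IsMaximalIn M P := by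
  obtain ⟨M, hM⟩ := (Set.toFinite {M : Subgroup G | L ≤ M ∧ M < P}).exists_maximal ⟨L, le_rfl, h⟩
  refine ⟨M, hM.prop.1, hM.prop.2, fun N hMN hN => ?_⟩
  by_contra hne
  exact hMN.not_ge (hM.le_of_ge ⟨hM.prop.1.trans hMN.le, lt_of_le_of_ne hN hne⟩ hMN.le)

def Fr (P : Subgroup G) : Subgroup G := sInf ({P} ∪ {M | IsMaximalIn M P})

lemma mem_Fr {P : Subgroup G} {x : G} : x ∈ Fr P ↔ x ∈ P ∧ ∀ M, IsMaximalIn M P → x ∈ M := by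
  simp [Fr, Subgroup.mem_sInf]

lemma Fr_le (P : Subgroup G) : Fr P ≤ P := fun x hx => (mem_Fr.1 hx).1

lemma Fr_le_max {P M : Subgroup G} (h : IsMaximalIn M P) : Fr P ≤ M := fun x hx => (mem_Fr.1 hx).2 M h

lemma Fr_nongen [Finite G] {P L : Subgroup G} (h : P ≤ L ⊔ Fr P) (hL : L ≤ P) : L = P := by
  by_contra hne
  obtain ⟨M, hLM, hM⟩ := exists_maxIn (lt_of_le_of_ne hL hne)
  exact hM.1.not_ge (h.trans (sup_le hLM (Fr_le_max hM)))

lemma maxIn_cj {M P : Subgroup G} (h : IsMaximalIn M P) (g : G) :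
    IsMaximalIn (cj g M) (cj g P) := by
  refine ⟨lt_of_le_of_ne (cj_mono h.1.le) fun e => h.1.ne ?_, fun L hL hLP => ?_⟩
  · rw [← cj_inv_cj g M, e, cj_inv_cj]
  · have h1 : M ≤ Ss.cj g⁻¹ L := by rw [← cj_inv_cj g M]; exact cj_mono hL.le
    have h2 : Ss.cj g⁻¹ L ≤ P := by rw [← cj_inv_cj g P]; exact cj_mono hLP
    have h3 := h.2 _ (lt_of_le_of_ne h1 ?_) h2
    · rw [← h3, cj_cj_inv]
    · intro e; exact hL.ne (by rw [e, cj_cj_inv])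

lemma Fr_normal {P : Subgroup G} (hP : P.Normal) : (Fr P).Normal := by
  refine ⟨fun x hx g => mem_Fr.2 ⟨hP.conj_mem x (Fr_le P hx) g, fun M hM => ?_⟩⟩
  have e : Ss.cj g⁻¹ P = P := cj_eq (NB.of_normal ⊤ P) (Subgroup.mem_top _)
  have := maxIn_cj hM g⁻¹
  rw [e] at this
  have h := Fr_le_max this hx
  rw [mem_cj] at h
  simpa using h

lemma Fr_comm [Finite G] {p : ℕ} [hp : Fact p.Prime] {P : Subgroup G} (hP : IsPGroup p P) {x y : G}
    (hx : x ∈ P) (hy : y ∈ P) : x * y * x⁻¹ * y⁻¹ ∈ Fr P :=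
  mem_Fr.2 ⟨P.mul_mem (P.mul_mem (P.mul_mem hx hy) (P.inv_mem hx)) (P.inv_mem hy),
    fun M hM => (maxIn_pgroup hP hM).2.2.2 x hx y hy⟩

lemma Fr_pow [Finite G] {p : ℕ} [hp : Fact p.Prime] {P : Subgroup G} (hP : IsPGroup p P) {x : G}
    (hx : x ∈ P) : x ^ p ∈ Fr P :=
  mem_Fr.2 ⟨P.pow_mem hx _, fun M hM => (maxIn_pgroup hP hM).2.2.1 x hx⟩

lemma NB_of_Fr [Finite G] {p : ℕ} [hp : Fact p.Prime] {P M : Subgroup G} (hP : IsPGroup p P)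
    (hM : Fr P ≤ M) (hMP : M ≤ P) : NB P M := fun k hk a ha => by
  have := M.mul_mem (hM (Fr_comm hP hk (hMP ha))) ha
  simpa using this

lemma mem_of_pow_coprime {N : Subgroup G} {y : G} {p k : ℤ} (h : IsCoprime p k) (h1 : y ^ p ∈ N)
    (h2 : y ^ k ∈ N) : y ∈ N := by
  obtain ⟨a, b, e⟩ := h
  have : y = (y ^ p) ^ a * (y ^ k) ^ b := by
    rw [← zpow_mul, ← zpow_mul, ← zpow_add, mul_comm p, mul_comm k, e, zpow_one]
  rw [this]
  exact N.mul_mem (N.zpow_mem h1 _) (N.zpow_mem h2 _)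

lemma avoid [Finite G] {p : ℕ} [hp : Fact p.Prime] {P L : Subgroup G} (hP : IsPGroup p P)
    (hFL : Fr P ≤ L) (hL : L ≤ P) {x : G} (hx : x ∈ P) (hxL : x ∉ L) :
    ∃ M, IsMaximalIn M P ∧ L ≤ M ∧ x ∉ M := by
  obtain ⟨M, hM⟩ := (Set.toFinite {M : Subgroup G | L ≤ M ∧ M ≤ P ∧ x ∉ M}).exists_maximal
    ⟨L, le_rfl, hL, hxL⟩
  obtain ⟨hLM, hMP, hxM⟩ := hM.prop
  have hmax : ∀ N, M < N → N ≤ P → x ∈ N := fun N hMN hN => by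
    by_contra hxN
    exact hMN.not_ge (hM.le_of_ge ⟨hLM.trans hMN.le, hN, hxN⟩ hMN.le)
  refine ⟨M, ⟨lt_of_le_of_ne hMP fun e => hxM (e ▸ hx), fun N hMN hN => ?_⟩, hLM, hxM⟩
  by_contra hne
  obtain ⟨y, hyP, hyN⟩ := SetLike.not_le_iff_exists.1 fun h => hne (le_antisymm hN h)
  have hMn := NB_of_Fr hP (hFL.trans hLM) hMP
  have hz : NB (Subgroup.zpowers y) M := hMn.mono (by rwa [Subgroup.zpowers_le])
  have hxy : x ∈ Subgroup.zpowers y ⊔ M := by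
    refine hmax _ (lt_of_le_of_ne le_sup_right fun e => hyN (hMN.le ?_)) (sup_le (by rwa [Subgroup.zpowers_le]) hMP)
    rw [e]; exact Subgroup.mem_sup_left (Subgroup.mem_zpowers y)
  obtain ⟨_, ⟨k, rfl⟩, m, hm, e⟩ := (mem_sup_NB hz).1 hxy
  have hyp : y ^ (p : ℤ) ∈ M := by
    rw [zpow_natCast]; exact (hFL.trans hLM) (Fr_pow hP hyP)
  have hyk : y ^ k ∈ N := by
    have : y ^ k = x * m⁻¹ := by rw [← e]; simp
    rw [this]; exact N.mul_mem (hmax N hMN hN) (N.inv_mem (hMN.le hm))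
  refine hyN (mem_of_pow_coprime (p := p) (k := k) ?_ (hMN.le hyp) hyk)
  rw [Prime.coprime_iff_not_dvd (Nat.prime_iff_prime_int.1 hp.out)]
  rintro ⟨j, rfl⟩
  refine hxM ?_
  rw [← e]
  refine M.mul_mem ?_ hm
  simp only [zpow_mul]
  exact M.zpow_mem hyp _

/-! permuting subgroups -/
def PQ (A Q : Subgroup G) : Prop := ∀ a ∈ A, ∀ x ∈ Q, ∃ x' ∈ Q, ∃ a' ∈ A, a * x = x' * a'

lemma PQ.of_set {A Q : Subgroup G} (h : (A : Set G) * (Q : Set G) = (Q : Set G) * (A : Set G)) :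
    PQ A Q := by
  intro a ha x hx
  have : a * x ∈ (Q : Set G) * (A : Set G) := h ▸ Set.mul_mem_mul ha hx
  obtain ⟨x', hx', a', ha', e⟩ := this
  exact ⟨x', hx', a', ha', e.symm⟩

lemma PQ.sup_mem {A Q : Subgroup G} (h : PQ A Q) {y : G} (hy : y ∈ A ⊔ Q) :
    ∃ q ∈ Q, ∃ s ∈ A, y = q * s := by
  rw [Subgroup.sup_eq_closure] at hy
  have key : ∀ x, x ∈ A ∨ x ∈ Q → ∀ y, (∃ q ∈ Q, ∃ s ∈ A, y = q * s) → ∃ q ∈ Q, ∃ s ∈ A, x * y = q * s := by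
    rintro x (hx | hx) _ ⟨q, hq, s, hs, rfl⟩
    · obtain ⟨x', hx', a', ha', e⟩ := h x hx q hq
      exact ⟨x', hx', a' * s, A.mul_mem ha' hs, by rw [← mul_assoc, e, mul_assoc]⟩
    · exact ⟨x * q, Q.mul_mem hx hq, s, hs, by rw [mul_assoc]⟩
  induction hy using Subgroup.closure_induction_left with
  | one => exact ⟨1, Q.one_mem, 1, A.one_mem, by simp⟩
  | mul_left x hx y hy ih => exact key x hx y ih
  | inv_mul_cancel x hx y hy ih =>
    exact key x⁻¹ (hx.imp (fun h => A.inv_mem h) (fun h => Q.inv_mem h)) y ih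

lemma PQ.sup {A B Q : Subgroup G} (hA : PQ A Q) (hB : PQ B Q) : PQ (A ⊔ B) Q := by
  intro a ha
  have ha' := ha
  rw [Subgroup.sup_eq_closure] at ha
  have key : ∀ x, x ∈ A ∨ x ∈ B → ∀ y, (∀ z ∈ Q, ∃ x' ∈ Q, ∃ a' ∈ A ⊔ B, y * z = x' * a') →
      (∀ z ∈ Q, ∃ x' ∈ Q, ∃ a' ∈ A ⊔ B, x * y * z = x' * a') := by
    intro x hx y ih z hz
    obtain ⟨x', hx', a', ha', e⟩ := ih z hz
    have : ∃ x'' ∈ Q, ∃ a'' ∈ A ⊔ B, x * x' = x'' * a'' := by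
      rcases hx with hx | hx
      · obtain ⟨u, hu, v, hv, e⟩ := hA x hx x' hx'
        exact ⟨u, hu, v, Subgroup.mem_sup_left hv, e⟩
      · obtain ⟨u, hu, v, hv, e⟩ := hB x hx x' hx'
        exact ⟨u, hu, v, Subgroup.mem_sup_right hv, e⟩
    obtain ⟨u, hu, v, hv, e'⟩ := this
    exact ⟨u, hu, v * a', mul_mem hv ha', by rw [mul_assoc, e, ← mul_assoc, e', mul_assoc]⟩
  induction ha using Subgroup.closure_induction_left with
  | one => intro z hz; exact ⟨z, hz, 1, one_mem _, by simp⟩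
  | mul_left x hx y hy ih => exact key x hx y (ih (by rw [Subgroup.sup_eq_closure]; exact hy))
  | inv_mul_cancel x hx y hy ih =>
    exact key x⁻¹ (hx.imp (fun h => A.inv_mem h) (fun h => B.inv_mem h)) y (ih (by rw [Subgroup.sup_eq_closure]; exact hy))

lemma PQ.cj {A Q : Subgroup G} (g : G) (h : PQ A (Ss.cj g⁻¹ Q)) : PQ (Ss.cj g A) Q := by
  intro a ha x hx
  rw [mem_cj] at ha
  obtain ⟨x', hx', a', ha', e⟩ := h _ ha (g⁻¹ * x * g) (by rw [mem_cj]; simpa [mul_assoc] using hx)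
  rw [mem_cj] at hx'
  refine ⟨g * x' * g⁻¹, by simpa [mul_assoc] using hx', g * a' * g⁻¹, by rw [mem_cj]; simpa [mul_assoc] using ha', ?_⟩
  have : a * x = g * ((g⁻¹ * a * g) * (g⁻¹ * x * g)) * g⁻¹ := by group
  rw [this, e]; group

lemma lemmaK [Finite G] {q : ℕ} [hq : Fact q.Prime] {F S Q : Subgroup G} (hF : F.Normal)
    (h : PQ S Q) (hQ : IsPGroup q Q) : ∃ k, S.relIndex ((S ⊔ Q) ⊓ F) = q ^ k := by
  have h1 : S.relIndex (S ⊔ Q) = S.relIndex Q :=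
    relIndex_of_prod le_sup_right fun y hy => h.sup_mem hy
  obtain ⟨n, hn⟩ := IsPGroup.iff_card.1 hQ
  have h2 : S.relIndex ((S ⊔ Q) ⊓ F) ∣ S.relIndex (S ⊔ Q) :=
    relIndex_dvd_of_NB le_sup_left inf_le_left (NB.inf (NB.self _) (NB.of_normal _ F))
  rw [h1] at h2
  have h3 := h2.trans (Subgroup.relIndex_dvd_card S Q)
  rw [hn] at h3
  obtain ⟨k, -, hk⟩ := (Nat.dvd_prime_pow hq.out).1 h3
  exact ⟨k, hk⟩

lemma sperm_PQ [Finite G] {q : ℕ} [hq : Fact q.Prime] {S : Subgroup G} (h : SPermutable S)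
    (Q : Sylow q G) : PQ S Q := by
  refine PQ.of_set (h q hq.out Q ⟨le_top, Q.2, ?_⟩)
  have := Q.not_dvd_index
  rwa [← Subgroup.relIndex_top_right] at this

lemma sylow_cj [Finite G] {q : ℕ} [hq : Fact q.Prime] (Q : Sylow q G) (g : G) :
    ∃ Q' : Sylow q G, (Q' : Subgroup G) = cj g Q := by
  refine ⟨g • Q, ?_⟩
  ext x
  rw [mem_cj, Sylow.coe_subgroup_smul, Subgroup.mem_pointwise_smul_iff_inv_smul_mem]
  simp [MulAut.smul_def]

end Ss

set_option linter.unusedVariables false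
open scoped Pointwise
namespace Ss
variable {G : Type*} [Group G]

lemma ded {X Y Z : Subgroup G} (h : NB X Y) (hXZ : X ≤ Z) : (X ⊔ Y) ⊓ Z ≤ X ⊔ (Y ⊓ Z) := by
  rintro z ⟨hz, hzZ⟩
  obtain ⟨a, ha, b, hb, rfl⟩ := (mem_sup_NB h).1 hz
  refine mul_mem (Subgroup.mem_sup_left ha) (Subgroup.mem_sup_right ⟨hb, ?_⟩)
  have := Z.mul_mem (Z.inv_mem (hXZ ha)) hzZ
  simpa using this

lemma IsChief.eq {A B : Subgroup G} (h : IsChiefFactor A B) {L : Subgroup G} (hL : L.Normal) (hB : B ≤ L)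
    (hA : L ≤ A) : L = B ∨ L = A := by
  by_contra hne
  push Not at hne
  exact h.2.2.2 L hL (lt_of_le_of_ne hB hne.1.symm) (lt_of_le_of_ne hA hne.2)

lemma relIndex_sup_left_NB {S Q : Subgroup G} (h : NB Q S) : S.relIndex (S ⊔ Q) = S.relIndex Q := by
  refine relIndex_of_prod le_sup_right fun y hy => ?_
  rw [sup_comm, mem_sup_NB h] at hy
  obtain ⟨a, ha, b, hb, e⟩ := hy
  exact ⟨a, ha, b, hb, e.symm⟩

def HU (N : Subgroup G) : Prop := N.Normal ∧
    ∀ A B : Subgroup G, IsChiefFactor A B → A ≤ N → (B.relIndex A).Prime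

lemma chief_inf {A B N : Subgroup G} (h : IsChiefFactor A B) (hN : N.Normal) (hAN : ¬ A ⊓ N ≤ B) :
    IsChiefFactor (A ⊓ N) (B ⊓ N) ∧ (B ⊓ N).relIndex (A ⊓ N) = B.relIndex A := by
  obtain ⟨hA, hB, hBA, hm⟩ := h
  have hsup : B ⊔ (A ⊓ N) = A := by
    rcases IsChief.eq ⟨hA, hB, hBA, hm⟩ (L := B ⊔ (A ⊓ N)) inferInstance le_sup_left (sup_le hBA.le inf_le_left) with e | e
    · exact absurd (le_sup_right.trans e.le) hAN
    · exact e
  refine ⟨⟨inferInstance, inferInstance, lt_of_le_of_ne (inf_le_inf_right _ hBA.le) fun e => hAN (e ▸ inf_le_left), ?_⟩, ?_⟩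
  · intro L hL h1 h2
    rcases IsChief.eq ⟨hA, hB, hBA, hm⟩ (L := L ⊔ B) inferInstance le_sup_right (sup_le (h2.le.trans inf_le_left) hBA.le) with e | e
    · exact h1.not_ge (le_inf (le_sup_left.trans e.le) (h2.le.trans inf_le_right))
    · have := ded (NB.of_normal L B) (h2.le.trans inf_le_right : L ≤ N)
      rw [e] at this
      exact h2.not_ge (this.trans (sup_le le_rfl h1.le))
  · have e2 : B ⊓ N = B ⊓ (A ⊓ N) := by
      rw [← inf_assoc, inf_of_le_left hBA.le]
    rw [e2, Subgroup.inf_relIndex_right]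
    have := relIndex_sup_left_NB (S := B) (Q := A ⊓ N) (NB.of_normal _ _)
    rw [hsup] at this
    exact this.symm

lemma chief_sup {A B N : Subgroup G} (h : IsChiefFactor A B) (hN : N.Normal) (hAN : A ⊓ N ≤ B) :
    IsChiefFactor (A ⊔ N) (B ⊔ N) ∧ (B ⊔ N).relIndex (A ⊔ N) = B.relIndex A := by
  obtain ⟨hA, hB, hBA, hm⟩ := h
  have e0 : (B ⊔ N) ⊓ A = B := by
    refine le_antisymm ((ded (NB.of_normal B N) hBA.le).trans (sup_le le_rfl ?_)) (le_inf le_sup_left hBA.le)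
    rw [inf_comm]; exact hAN
  refine ⟨⟨inferInstance, inferInstance, lt_of_le_of_ne (sup_le_sup_right hBA.le _) fun e => ?_, ?_⟩, ?_⟩
  · rw [e] at e0
    exact hBA.ne (e0.symm.trans (inf_of_le_right le_sup_left))
  · intro L hL h1 h2
    have hle : L ≤ N ⊔ (A ⊓ L) := by
      have := ded (NB.of_normal N A) ((le_sup_right.trans h1.le) : N ≤ L)
      rw [sup_comm N A, inf_of_le_right h2.le] at this
      exact this
    rcases IsChief.eq ⟨hA, hB, hBA, hm⟩ (L := A ⊓ L) inferInstance (le_inf hBA.le (le_sup_left.trans h1.le)) inf_le_left with e | e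
    · rw [e, sup_comm] at hle; exact h1.not_ge hle
    · rw [e, sup_comm] at hle
      have : A ≤ L := by rw [← e]; exact inf_le_right
      exact h2.not_ge (sup_le this (le_sup_right.trans h1.le))
  · have := relIndex_sup_left_NB (S := B ⊔ N) (Q := A) (NB.of_normal _ _)
    rw [sup_assoc, sup_comm N A, ← sup_assoc, sup_of_le_right hBA.le] at this
    rw [this, ← Subgroup.inf_relIndex_right, e0]

lemma HU.sup {M N : Subgroup G} (hM : HU M) (hN : HU N) : HU (M ⊔ N) := by
  have := hM.1
  have := hN.1
  refine ⟨inferInstance, fun A B h hA => ?_⟩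
  by_cases h1 : A ⊓ M ≤ B
  · obtain ⟨h2, e⟩ := chief_sup h hM.1 h1
    rw [← e]
    by_cases h3 : (A ⊔ M) ⊓ N ≤ B ⊔ M
    · exfalso
      have := ded (NB.of_normal M N) (le_sup_right : M ≤ A ⊔ M)
      rw [inf_of_le_right (sup_le hA le_sup_left)] at this
      refine h2.2.2.1.not_ge (this.trans (sup_le le_sup_right ?_))
      rw [inf_comm]; exact h3
    · obtain ⟨h4, e4⟩ := chief_inf h2 hN.1 h3
      rw [← e4]; exact hN.2 _ _ h4 inf_le_right
  · obtain ⟨h4, e4⟩ := chief_inf h hM.1 h1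
    rw [← e4]; exact hM.2 _ _ h4 inf_le_right

lemma HU_hyper (G : Type*) [Group G] [Finite G] : HU (UHypercenter G) := by
  refine sSup_mem_of_sup (S := {N : Subgroup G | HU N}) ?_ ?_
  · refine ⟨inferInstance, fun A B h hA => ?_⟩
    exact absurd (h.2.2.1.trans_le hA) not_lt_bot
  · intro A hA B hB; exact HU.sup hA hB

lemma exists_chief_below [Finite G] {A C : Subgroup G} (hA : A.Normal) (hC : C.Normal) (h : C < A) :
    ∃ B, C ≤ B ∧ IsChiefFactor A B := by
  obtain ⟨B, hB⟩ := (Set.toFinite {B : Subgroup G | B.Normal ∧ C ≤ B ∧ B < A}).exists_maximal ⟨C, hC, le_rfl, h⟩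
  refine ⟨B, hB.prop.2.1, hA, hB.prop.1, hB.prop.2.2, fun L hL h1 h2 => ?_⟩
  exact h1.not_ge (hB.le_of_ge ⟨hL, hB.prop.2.1.trans h1.le, h2⟩ h1.le)

lemma exists_chief_above [Finite G] {A C : Subgroup G} (hA : A.Normal) (hC : C.Normal) (h : C < A) :
    ∃ B, B ≤ A ∧ IsChiefFactor B C := by
  obtain ⟨B, hB⟩ := (Set.toFinite {B : Subgroup G | B.Normal ∧ C < B ∧ B ≤ A}).exists_minimal ⟨A, hA, h, le_rfl⟩
  refine ⟨B, hB.prop.2.2, hB.prop.1, hC, hB.prop.2.1, fun L hL h1 h2 => ?_⟩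
  exact h2.not_ge (hB.le_of_le ⟨hL, h1, h2.le.trans hB.prop.2.2⟩ h2.le)

lemma HU_solvable [Finite G] {N : Subgroup G} (hN : HU N) : Group.IsSolvable N := by
  have key : ∀ n, ∀ L : Subgroup G, Nat.card L = n → L.Normal → L ≤ N → Group.IsSolvable L := by
    intro n
    induction n using Nat.strong_induction_on with
    | _ n ih =>
    intro L hn hL hLN
    by_cases h0 : L = ⊥
    · subst h0; infer_instance
    obtain ⟨B, -, hB⟩ := exists_chief_below hL inferInstance (bot_lt_iff_ne_bot.2 h0)
    have hBs := ih (Nat.card B) (hn ▸ Set.ncard_lt_ncard (SetLike.coe_ssubset_coe.2 hB.2.2.1) (Set.toFinite _)) B rfl hB.2.1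
      (hB.2.2.1.le.trans hLN)
    have hp := hN.2 L B hB hLN
    have := hB.2.1
    have := Fact.mk hp
    have hc : IsCyclic (L ⧸ B.subgroupOf L) := isCyclic_of_prime_card (p := B.relIndex L) rfl
    have hcm := hc.isMulCommutative
    have hq : Group.IsSolvable (L ⧸ B.subgroupOf L) := Group.isSolvable_of_comm fun a b => mul_comm' a b
    refine Group.isSolvable_of_ker_le_range (Subgroup.inclusion hB.2.2.1.le) (QuotientGroup.mk' (B.subgroupOf L)) ?_
    rw [QuotientGroup.ker_mk']
    intro x hx
    exact ⟨⟨x, hx⟩, rfl⟩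
  exact key _ N rfl hN.1 le_rfl

lemma chief_map {A B K : Subgroup G} [K.Normal] (h : IsChiefFactor A B) (hK : K ≤ B) :
    IsChiefFactor (A.map (QuotientGroup.mk' K)) (B.map (QuotientGroup.mk' K)) ∧
    (B.map (QuotientGroup.mk' K)).relIndex (A.map (QuotientGroup.mk' K)) = B.relIndex A := by
  have hs := QuotientGroup.mk'_surjective K
  have hc : ∀ L : Subgroup G, K ≤ L → (L.map (QuotientGroup.mk' K)).comap (QuotientGroup.mk' K) = L := fun L hL => by
    rw [Subgroup.comap_map_eq, QuotientGroup.ker_mk', sup_of_le_left hL]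
  refine ⟨⟨h.1.map _ hs, h.2.1.map _ hs, lt_of_le_of_ne (Subgroup.map_mono h.2.2.1.le) fun e => ?_, ?_⟩, ?_⟩
  · apply h.2.2.1.ne
    rw [← hc B hK, e, hc A (hK.trans h.2.2.1.le)]
  · intro L hL h1 h2
    refine h.2.2.2 (L.comap (QuotientGroup.mk' K)) (hL.comap _) ?_ ?_
    · rw [← hc B hK]
      exact (Subgroup.comap_lt_comap_of_surjective hs).2 h1
    · rw [← hc A (hK.trans h.2.2.1.le)]
      exact (Subgroup.comap_lt_comap_of_surjective hs).2 h2
  · rw [Subgroup.relIndex_map_map, QuotientGroup.ker_mk', sup_of_le_left hK, sup_of_le_left (hK.trans h.2.2.1.le)]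

def ZU (K : Subgroup G) [K.Normal] : Subgroup G := (UHypercenter (G ⧸ K)).comap (QuotientGroup.mk' K)

lemma ZU_normal [Finite G] (K : Subgroup G) [K.Normal] : (ZU K).Normal := (HU_hyper (G ⧸ K)).1.comap _

lemma ZU_prime [Finite G] {A B K : Subgroup G} [K.Normal] (h : IsChiefFactor A B) (hK : K ≤ B)
    (hA : A ≤ ZU K) : (B.relIndex A).Prime := by
  obtain ⟨h1, e⟩ := chief_map h hK
  rw [← e]
  exact (HU_hyper (G ⧸ K)).2 _ _ h1 (Subgroup.map_le_iff_le_comap.2 hA)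

lemma ZU_solvable [Finite G] (K : Subgroup G) [K.Normal] (hK : Group.IsSolvable K) : Group.IsSolvable (ZU K) := by
  have h1 : Group.IsSolvable (UHypercenter (G ⧸ K)) := HU_solvable (HU_hyper (G ⧸ K))
  have hKZ : K ≤ ZU K := fun x hx => by
    have : QuotientGroup.mk' K x = 1 := (QuotientGroup.eq_one_iff x).2 hx
    rw [ZU, Subgroup.mem_comap, this]; exact one_mem _
  refine Group.isSolvable_of_ker_le_range (Subgroup.inclusion hKZ)
    (((QuotientGroup.mk' K).comp (ZU K).subtype).codRestrict (UHypercenter (G ⧸ K)) fun x => x.2) ?_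
  intro x hx
  rw [MonoidHom.mem_ker] at hx
  have := congrArg Subtype.val hx
  exact ⟨⟨x, (QuotientGroup.eq_one_iff (x : G)).1 this⟩, rfl⟩

end Ss

set_option linter.unusedVariables false
open scoped Pointwise
namespace Ss
variable {G : Type*} [Group G]

lemma relIndex_map_dvd {Γ Δ : Type*} [Group Γ] [Group Δ] (f : Γ →* Δ) (H K : Subgroup Γ) :
    (H.map f).relIndex (K.map f) ∣ H.relIndex K := by
  rw [Subgroup.relIndex_map_map]
  rw [relIndex_of_prod (Q := K) le_sup_left]
  · exact Subgroup.relIndex_dvd_of_le_left K le_sup_left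
  · intro y hy
    obtain ⟨a, ha, b, hb, e⟩ := Subgroup.mem_sup_of_normal_right.1 hy
    exact ⟨a, ha, b, Subgroup.mem_sup_right hb, e.symm⟩

variable {F : Subgroup G} {X : Type*} [Group X]

def im (φ : F →* X) (L : Subgroup G) : Subgroup X := (L.subgroupOf F).map φ

lemma mem_im {φ : F →* X} {L : Subgroup G} {x : X} : x ∈ im φ L ↔ ∃ f : F, (f : G) ∈ L ∧ φ f = x := Iff.rfl

lemma im_mono (φ : F →* X) {A B : Subgroup G} (h : A ≤ B) : im φ A ≤ im φ B := by
  rintro _ ⟨f, hf, rfl⟩; exact ⟨f, h hf, rfl⟩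

lemma im_relIndex (φ : F →* X) (A B : Subgroup G) : (im φ A).relIndex (im φ B) ∣ A.relIndex (B ⊓ F) := by
  refine (relIndex_map_dvd φ _ _).trans ?_
  rw [Subgroup.subgroupOf, Subgroup.relIndex_comap, Subgroup.subgroupOf_map_subtype]

lemma im_normal {φ : F →* X} (hφ : Function.Surjective φ) {L : Subgroup G} (hL : L.Normal) : (im φ L).Normal :=
  (hL.comap F.subtype).map φ hφ

lemma im_inf (φ : F →* X) (L : Subgroup G) : im φ (L ⊓ F) = im φ L := by
  simp [im, Subgroup.inf_subgroupOf_right]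

lemma im_F {φ : F →* X} (hφ : Function.Surjective φ) : im φ F = ⊤ := by
  simp [im, Subgroup.map_top_of_surjective φ hφ]

lemma caseSS [Finite G] [Finite X] {φ : F →* X} (hφ : Function.Surjective φ)
    {p r : ℕ} [hp : Fact p.Prime] [hr : Fact r.Prime] (hpr : r ≠ p)
    (hmax : ∀ s : ℕ, s.Prime → s ∣ Nat.card X → s ≤ r) {M : Subgroup G} (hMF : M ≤ F) (hM : IsPGroup p M)
    (hs : HasSupersolubleSupplement M) (R R' : Sylow r X) : ∃ m ∈ im φ M, R' = m • R := by
  obtain ⟨T, hT, hMT⟩ := hs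
  have hprod : ∀ x : X, ∃ m ∈ im φ M, ∃ t ∈ im φ T, x = m * t := by
    intro x
    obtain ⟨f, rfl⟩ := hφ x
    have : (f : G) ∈ (M : Set G) * (T : Set G) := hMT ▸ Set.mem_univ _
    obtain ⟨m, hm, t, ht, e⟩ := this
    have htF : t ∈ F := by
      have : t = m⁻¹ * f := by rw [← e]; simp
      rw [this]; exact F.mul_mem (F.inv_mem (hMF hm)) f.2
    refine ⟨φ ⟨m, hMF hm⟩, ⟨⟨m, hMF hm⟩, hm, rfl⟩, φ ⟨t, htF⟩, ⟨⟨t, htF⟩, ht, rfl⟩, ?_⟩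
    rw [← map_mul]
    congr 1
    exact Subtype.ext e.symm
  set Y := im φ T with hY
  have hYss : IsSupersoluble Y := by
    have h1 : IsSupersoluble (T.subgroupOf F) :=
      ss_inj (((F.subtype).comp (T.subgroupOf F).subtype).codRestrict T fun x => x.2) (by
        intro a b h
        have := congrArg Subtype.val h
        exact Subtype.ext (Subtype.ext this)) hT
    exact ss_surj (φ.subgroupMap (T.subgroupOf F)) (φ.subgroupMap_surjective _) h1
  have hidx : ¬ r ∣ Y.index := by
    have h1 : Y.relIndex ⊤ = Y.relIndex (im φ M) := relIndex_of_prod le_top fun y _ => hprod y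
    have h2 : IsPGroup p (im φ M) :=
      (hM.of_injective ((F.subtype.comp (M.subgroupOf F).subtype).codRestrict M fun x => x.2) (by
        intro a b h
        have := congrArg Subtype.val h
        exact Subtype.ext (Subtype.ext this))).map φ
    obtain ⟨k, hk⟩ := IsPGroup.iff_card.1 h2
    rw [← Subgroup.relIndex_top_right, h1]
    intro h
    have := h.trans (Subgroup.relIndex_dvd_card _ _)
    rw [hk] at this
    exact hpr ((Nat.prime_dvd_prime_iff_eq hr.out hp.out).1 (hr.out.dvd_of_dvd_pow this))
  obtain ⟨S⟩ : Nonempty (Sylow r Y) := inferInstance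
  have hSn := ST _ Y rfl hYss r hr.out (fun s hs h => hmax s hs (h.trans (Subgroup.card_subgroup_dvd_card Y))) S
  have hS0 : IsPGroup r ((S : Subgroup Y).map Y.subtype) := S.2.map _
  have hS1 : ¬ r ∣ ((S : Subgroup Y).map Y.subtype).index := by
    rw [Subgroup.index_map_subtype]
    intro h
    rcases hr.out.dvd_mul.1 h with h | h
    · exact S.not_dvd_index h
    · exact hidx h
  let R0 : Sylow r X := hS0.toSylow hS1
  have hR0 : (R0 : Subgroup X) = (S : Subgroup Y).map Y.subtype := rfl
  have hfix : ∀ y ∈ Y, y • R0 = R0 := by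
    intro y hy
    rw [Sylow.smul_eq_iff_mem_normalizer]
    have h3 := Subgroup.le_normalizer_map (H := (S : Subgroup Y)) Y.subtype
    rw [Subgroup.normalizer_eq_top_iff.2 hSn] at h3
    exact h3 ⟨⟨y, hy⟩, Subgroup.mem_top _, rfl⟩
  have key : ∀ R : Sylow r X, ∃ m ∈ im φ M, R = m • R0 := by
    intro R
    obtain ⟨x, hx⟩ := MulAction.exists_smul_eq X R0 R
    obtain ⟨m, hm, t, ht, rfl⟩ := hprod x
    exact ⟨m, hm, by rw [← hx, mul_smul, hfix t ht]⟩
  obtain ⟨m, hm, e⟩ := key R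
  obtain ⟨m', hm', e'⟩ := key R'
  exact ⟨m' * m⁻¹, mul_mem hm' (inv_mem hm), by rw [e, e', mul_smul, inv_smul_smul]⟩

lemma caseTop [Finite G] [Finite X] {φ : F →* X} (hφ : Function.Surjective φ) (hF : F.Normal)
    {p : ℕ} [hp : Fact p.Prime] {M P T : Subgroup G} (hPF : P ≤ F) (hP : IsPGroup p P)
    (hPi : ¬ p ∣ P.relIndex F) (hM : IsMaximalIn M P) (hT : T.Normal) (hTt : im φ T = ⊤)
    (hMT : im φ (M ⊓ T) = ⊥) : Nat.card (im φ P) ∣ p := by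
  have h1 : im φ (P ⊓ T) = im φ P := by
    refine le_antisymm (im_mono φ inf_le_left) ?_
    rw [← Subgroup.relIndex_eq_one]
    have ha : (im φ (P ⊓ T)).relIndex (im φ P) ∣ Nat.card (im φ P) := Subgroup.relIndex_dvd_card _ _
    have hb : IsPGroup p (im φ P) :=
      (hP.of_injective ((F.subtype.comp (P.subgroupOf F).subtype).codRestrict P fun x => x.2) (by
        intro a b h
        have := congrArg Subtype.val h
        exact Subtype.ext (Subtype.ext this))).map φ
    obtain ⟨k, hk⟩ := IsPGroup.iff_card.1 hb
    rw [hk] at ha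
    obtain ⟨j, -, hj⟩ := (Nat.dvd_prime_pow hp.out).1 ha
    rcases Nat.eq_zero_or_pos j with rfl | hj0
    · rw [hj, pow_zero]
    · exfalso
      apply hPi
      have h2 : p ∣ (im φ (P ⊓ T)).relIndex (im φ P) := by rw [hj]; exact dvd_pow_self _ hj0.ne'
      have h3 : (im φ (P ⊓ T)).relIndex (im φ P) ∣ (im φ (P ⊓ T)).relIndex (im φ T) := by
        rw [hTt, Subgroup.relIndex_top_right]
        exact Subgroup.relIndex_dvd_index_of_le (im_mono φ inf_le_left)
      have h4 := im_relIndex φ (P ⊓ T) T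
      have h5 : (P ⊓ T).relIndex (T ⊓ F) = P.relIndex (T ⊓ F) := by
        rw [← Subgroup.inf_relIndex_right, ← Subgroup.inf_relIndex_right P]
        congr 1
        rw [inf_assoc, ← inf_assoc T, inf_idem]
      rw [h5] at h4
      have h6 : P.relIndex (T ⊓ F) ∣ P.relIndex F :=
        relIndex_dvd_of_NB hPF inf_le_right (NB.inf (NB.of_normal _ T) (NB.self _))
      exact h2.trans (h3.trans (h4.trans h6))
  have h2 := im_relIndex φ (M ⊓ T) (P ⊓ T)
  rw [hMT, h1, Subgroup.relIndex_bot_left] at h2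
  have h3 : (M ⊓ T).relIndex (P ⊓ T ⊓ F) = M.relIndex (P ⊓ T) := by
    rw [inf_of_le_left (inf_le_left.trans hPF : P ⊓ T ≤ F), ← Subgroup.inf_relIndex_right, ← Subgroup.inf_relIndex_right M]
    congr 1
    rw [inf_assoc, ← inf_assoc T, inf_comm T P, inf_assoc P, inf_idem]
  rw [h3] at h2
  have h4 : M.relIndex (P ⊓ T) ∣ M.relIndex P :=
    relIndex_dvd_of_NB hM.1.le inf_le_left (NB.inf (NB.self _) (NB.of_normal _ T))
  rw [(maxIn_pgroup hP hM).2.1] at h4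
  exact h2.trans h4

lemma caseKegel [Finite G] [Finite X] [IsSimpleGroup X] {φ : F →* X} (hφ : Function.Surjective φ) (hF : F.Normal)
    {p q : ℕ} [hp : Fact p.Prime] [hq : Fact q.Prime] (hpq : q ≠ p) (hqX : q ∣ Nat.card X)
    {S : Subgroup G} (hS : ∀ Q : Sylow q G, PQ S Q) (hpS : p ∣ (im φ S).index) (hne : im φ S ≠ ⊥) : False := by
  obtain ⟨A, hA⟩ := (Set.toFinite {A : Subgroup G | S ≤ A ∧ (∀ Q : Sylow q G, PQ A Q) ∧ p ∣ (im φ A).index}).exists_maximal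
    ⟨S, le_rfl, hS, hpS⟩
  obtain ⟨hSA, hAQ, hpA⟩ := hA.prop
  have hnorm : ∀ Q : Sylow q G, ∀ x ∈ Q, cj x A ≤ A := by
    intro Q x hx
    have hmem : (A ⊔ cj x A) ∈ {A : Subgroup G | S ≤ A ∧ (∀ Q : Sylow q G, PQ A Q) ∧ p ∣ (im φ A).index} := by
      refine ⟨hSA.trans le_sup_left, fun Q' => (hAQ Q').sup (PQ.cj x ?_), ?_⟩
      · obtain ⟨Q'', e⟩ := sylow_cj Q' x⁻¹
        rw [← e]; exact hAQ Q''
      · have hU : A ⊔ cj x A ≤ A ⊔ Q := by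
          refine sup_le le_sup_left fun y hy => ?_
          rw [mem_cj] at hy
          have hx' : x ∈ A ⊔ (Q : Subgroup G) := Subgroup.mem_sup_right hx
          have : y = x * (x⁻¹ * y * x) * x⁻¹ := by group
          rw [this]
          exact mul_mem (mul_mem hx' (Subgroup.mem_sup_left hy)) (inv_mem hx')
        have h1 := Subgroup.relIndex_mul_index (im_mono φ (le_sup_left : A ≤ A ⊔ cj x A))
        rw [← h1] at hpA
        rcases hp.out.dvd_mul.1 hpA with h | h
        swap
        · exact h
        · exfalso
          have h2 := h.trans (im_relIndex φ A (A ⊔ cj x A))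
          obtain ⟨k, hk⟩ := lemmaK hF (hAQ Q) Q.2
          have h3 : A.relIndex ((A ⊔ cj x A) ⊓ F) ∣ A.relIndex ((A ⊔ Q) ⊓ F) := by
            have e : ∀ B : Subgroup G, A ≤ B → A.relIndex (B ⊓ F) = (A ⊓ F).relIndex (B ⊓ F) := fun B hB => by
              rw [← Subgroup.inf_relIndex_right]
              congr 1
              rw [← inf_assoc, inf_of_le_left hB]
            rw [e _ le_sup_left, e _ le_sup_left]
            exact Dvd.intro _ (Subgroup.relIndex_mul_relIndex _ _ _ (inf_le_inf_right _ le_sup_left) (inf_le_inf_right _ hU))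
          rw [hk] at h3
          exact hpq ((Nat.prime_dvd_prime_iff_eq hp.out hq.out).1 (hp.out.dvd_of_dvd_pow (h2.trans h3))).symm
    exact le_sup_right.trans (hA.le_of_ge hmem le_sup_left)
  set O : Subgroup G := ⨆ Q : Sylow q G, (Q : Subgroup G) with hO
  have hOn : O.Normal := by
    refine NB.normal fun g _ x hx => ?_
    have : O ≤ cj g⁻¹ O := by
      refine iSup_le fun Q => ?_
      rw [← cj_inv_cj g (Q : Subgroup G)]
      refine cj_mono ?_
      obtain ⟨Q', e⟩ := sylow_cj Q g
      rw [← e]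
      exact le_iSup (fun Q : Sylow q G => (Q : Subgroup G)) Q'
    have := this hx
    rw [mem_cj] at this
    simpa using this
  have hON : O ≤ Subgroup.normalizer (A : Set G) := by
    refine iSup_le fun Q => NB.le_normalizer ?_
    intro k hk a ha
    apply hnorm Q k hk
    rw [mem_cj]
    simpa [mul_assoc] using ha
  have hOX : im φ O = ⊤ := by
    rcases (im_normal hφ hOn).eq_bot_or_eq_top with h | h
    · exfalso
      obtain ⟨Q⟩ : Nonempty (Sylow q G) := inferInstance
      have h1 : ¬ q ∣ O.index := fun hd => Q.not_dvd_index (hd.trans (Subgroup.index_dvd_of_le (le_iSup (fun Q : Sylow q G => (Q : Subgroup G)) Q)))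
      apply h1
      have h2 := im_relIndex φ O F
      rw [h, im_F hφ, inf_idem, Subgroup.relIndex_top_right, Subgroup.index_bot] at h2
      exact hqX.trans (h2.trans (Subgroup.relIndex_dvd_index_of_normal O F))
    · exact h
  have hAn : (im φ A).Normal := by
    refine ⟨fun x hx g => ?_⟩
    obtain ⟨f, hf, rfl⟩ := hx
    have hg : g ∈ im φ O := hOX ▸ Subgroup.mem_top g
    obtain ⟨o, ho, rfl⟩ := hg
    refine ⟨o * f * o⁻¹, ?_, by simp⟩
    exact (Subgroup.mem_normalizer_iff.1 (hON ho) f).1 hf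
  rcases hAn.eq_bot_or_eq_top with h | h
  · exact hne (le_bot_iff.1 (h ▸ im_mono φ hSA))
  · rw [h, Subgroup.index_top] at hpA
    exact hp.out.one_lt.ne' (Nat.dvd_one.1 hpA)

end Ss

set_option linter.unusedVariables false
open scoped Pointwise
namespace Ss
variable {G : Type*} [Group G]

variable {F : Subgroup G} {X : Type*} [Group X]

lemma simple_pgroup [Finite X] [IsSimpleGroup X] (hX : ¬ Group.IsSolvable X) {p : ℕ} [hp : Fact p.Prime]
    (h : IsPGroup p X) : False := by
  have := h.isNilpotent
  exact hX inferInstance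

lemma sylow_not_cyclic [Finite X] [IsSimpleGroup X] (hX : ¬ Group.IsSolvable X) {p : ℕ} [hp : Fact p.Prime]
    (hpm : p = (Nat.card X).minFac) (P : Sylow p X) : ¬ IsCyclic P := by
  intro hc
  have h := IsCyclic.isComplement' (P := P) hpm.symm hc
  rcases (inferInstance : (MonoidHom.transferSylow P
    (hc.normalizer_le_centralizer hpm.symm)).ker.Normal).eq_bot_or_eq_top with e | e
  · rw [e, Subgroup.isComplement'_bot_left] at h
    have h2 := P.2
    have h3 : IsPGroup p (⊤ : Subgroup X) := h ▸ P.2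
    exact simple_pgroup hX (h3.of_equiv Subgroup.topEquiv)
  · rw [e, Subgroup.isComplement'_top_left] at h
    have h1 : p ∣ Nat.card X := hpm ▸ Nat.minFac_dvd _
    have := P.not_dvd_index
    rw [h, Subgroup.index_bot] at this
    exact this h1

lemma stepA_core [Finite G] (hF : F.Normal) [Finite X] [IsSimpleGroup X] (hX : ¬ Group.IsSolvable X)
    (φ : F →* X) (hφ : Function.Surjective φ)
    (hyp : ∀ p : ℕ, p.Prime → ∀ P : Subgroup G, IsSylowIn p P F →
      ¬ IsCyclic P → ∀ M : Subgroup G, IsMaximalIn M P →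
        ¬ HasSupersolubleSupplement M → UsQuasinormal M) : False := by
  have hcard : Nat.card X ≠ 1 := Finite.one_lt_card.ne'
  obtain ⟨p, hpm⟩ : ∃ p, p = (Nat.card X).minFac := ⟨_, rfl⟩
  have hp : Fact p.Prime := ⟨hpm ▸ Nat.minFac_prime hcard⟩
  have hpX : p ∣ Nat.card X := hpm ▸ Nat.minFac_dvd _
  -- largest prime
  obtain ⟨r, hrm⟩ := (Set.Finite.subset (Set.finite_le_nat (Nat.card X))
    (t := {s : ℕ | s.Prime ∧ s ∣ Nat.card X}) (fun s hs => Nat.le_of_dvd Nat.card_pos hs.2)).exists_maximal ⟨p, hp.out, hpX⟩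
  have hr : Fact r.Prime := ⟨hrm.prop.1⟩
  have hmax : ∀ s : ℕ, s.Prime → s ∣ Nat.card X → s ≤ r := fun s hs hd => by
    rcases le_total s r with h | h
    · exact h
    · exact hrm.le_of_ge ⟨hs, hd⟩ h
  have hpr : r ≠ p := by
    rintro rfl
    have : ∀ {d : ℕ}, d.Prime → d ∣ Nat.card X → d = r := fun {d} hd hdX =>
      le_antisymm (hmax d hd hdX) (hpm ▸ Nat.minFac_le_of_dvd hd.two_le hdX)
    have h1 := Nat.eq_prime_pow_of_unique_prime_dvd (Nat.card_pos.ne' : Nat.card X ≠ 0) this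
    exact simple_pgroup hX (IsPGroup.of_card h1)
  obtain ⟨S⟩ : Nonempty (Sylow p F) := inferInstance
  set P : Subgroup G := (S : Subgroup F).map F.subtype with hPdef
  have hPF : P ≤ F := Subgroup.map_subtype_le _
  have hPS : P.subgroupOf F = S := by
    rw [hPdef, Subgroup.subgroupOf, Subgroup.comap_map_eq_self_of_injective F.subtype_injective]
  have hPp : IsPGroup p P := S.2.map _
  have hPi : ¬ p ∣ P.relIndex F := by
    rw [Subgroup.relIndex, hPS]; exact S.not_dvd_index
  have hPsyl : IsSylowIn p P F := ⟨hPF, hPp, hPi⟩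
  set P1 : Sylow p X := S.mapSurjective hφ with hP1
  have himP : im φ P = P1 := by
    rw [im, hPS, hP1, Sylow.coe_mapSurjective]
  have hP1c : ¬ IsCyclic P1 := sylow_not_cyclic hX hpm P1
  have hPc : ¬ IsCyclic P := by
    intro h
    apply hP1c
    have h1 : IsCyclic (P.subgroupOf F) :=
      isCyclic_of_injective ((F.subtype.comp (P.subgroupOf F).subtype).codRestrict P fun x => x.2) (by
        intro a b h
        have := congrArg Subtype.val h
        exact Subtype.ext (Subtype.ext this))
    have h2 : IsCyclic (im φ P) := isCyclic_of_surjective (φ.subgroupMap (P.subgroupOf F)) (φ.subgroupMap_surjective _)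
    rw [himP] at h2
    exact h2
  -- transitivity
  have htrans : ∀ M1 : Subgroup X, IsMaximalIn M1 (P1 : Subgroup X) → ∀ R R' : Sylow r X, ∃ m ∈ M1, R' = m • R := by
    intro M1 hM1
    set M : Subgroup G := P ⊓ (M1.comap φ).map F.subtype with hMdef
    have hmemM : ∀ f : F, (f : G) ∈ M ↔ (f : G) ∈ P ∧ φ f ∈ M1 := by
      intro f
      rw [hMdef, Subgroup.mem_inf]
      refine and_congr_right fun _ => ⟨?_, fun h => ⟨f, h, rfl⟩⟩
      rintro ⟨f', hf', e⟩
      rwa [Subtype.ext e] at hf'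
    have hMP : M ≤ P := inf_le_left
    have himM : im φ M = M1 := by
      apply le_antisymm
      · rintro _ ⟨f, hf, rfl⟩; exact ((hmemM f).1 hf).2
      · intro x hx
        have : x ∈ im φ P := himP ▸ hM1.1.le hx
        obtain ⟨f, hf, rfl⟩ := this
        exact ⟨f, (hmemM f).2 ⟨hf, hx⟩, rfl⟩
    have hMmax : IsMaximalIn M P := by
      refine ⟨lt_of_le_of_ne hMP fun e => hM1.1.ne ?_, fun L hML hLP => le_antisymm hLP ?_⟩
      · rw [← himM, e, himP]
      · have hL : im φ L = P1 := by
          refine hM1.2 _ (lt_of_le_of_ne (himM ▸ im_mono φ hML.le) fun e => ?_) (himP ▸ im_mono φ hLP)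
          apply hML.not_ge
          intro l hl
          refine (hmemM ⟨l, hPF (hLP hl)⟩).2 ⟨hLP hl, ?_⟩
          rw [e]
          exact ⟨⟨l, hPF (hLP hl)⟩, hl, rfl⟩
        intro x hx
        have h1 : φ ⟨x, hPF hx⟩ ∈ im φ L := by rw [hL, ← himP]; exact ⟨⟨x, hPF hx⟩, hx, rfl⟩
        obtain ⟨l, hl, e⟩ := h1
        have h2 : (l : G)⁻¹ * x ∈ M := by
          refine (hmemM (l⁻¹ * ⟨x, hPF hx⟩)).2 ⟨P.mul_mem (P.inv_mem (hLP hl)) hx, ?_⟩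
          rw [map_mul, map_inv, e, inv_mul_cancel]; exact M1.one_mem
        have := L.mul_mem hl (hML.le h2)
        simpa using this
    have hMp : IsPGroup p M := hPp.to_le hMP
    by_cases hss : HasSupersolubleSupplement M
    · intro R R'
      have := caseSS hφ hpr hmax (hMP.trans hPF) hMp hss R R'
      rwa [himM] at this
    · exfalso
      obtain ⟨T, hT, hsp, hz⟩ := hyp p hp.out P hPsyl hPc M hMmax hss
      have hM1ne : M1 ≠ ⊥ := by
        rintro rfl
        have hi := (maxIn_pgroup P1.2 hM1).2.1
        rw [Subgroup.relIndex_bot_left] at hi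
        exact hP1c (isCyclic_of_prime_card hi)
      rcases (im_normal hφ hT).eq_bot_or_eq_top with hTb | hTt
      · have himS : im φ (M ⊔ T) = M1 := by
          apply le_antisymm
          · rintro _ ⟨f, hf, rfl⟩
            obtain ⟨m, hm, t, ht, e⟩ := Subgroup.mem_sup_of_normal_right.1 hf
            have hmF := hPF (hMP hm)
            have htF : t ∈ F := by
              have : t = m⁻¹ * (f : G) := by change _ = _ * F.subtype f; rw [← e]; simp
              rw [this]; exact F.mul_mem (F.inv_mem hmF) f.2
            have h1 : φ ⟨t, htF⟩ = 1 := by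
              have : φ ⟨t, htF⟩ ∈ im φ T := ⟨⟨t, htF⟩, ht, rfl⟩
              rwa [hTb, Subgroup.mem_bot] at this
            have h2 : f = ⟨m, hmF⟩ * ⟨t, htF⟩ := Subtype.ext e.symm
            rw [h2, map_mul, h1, mul_one]
            exact ((hmemM ⟨m, hmF⟩).1 hm).2
          · rw [← himM]; exact im_mono φ le_sup_left
        refine caseKegel hφ hF hpr hrm.prop.2 (S := M ⊔ T) (fun Q => sperm_PQ hsp Q) (p := p) ?_ (by rwa [himS])
        rw [himS, ← (maxIn_pgroup P1.2 hM1).2.1]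
        exact Subgroup.relIndex_dvd_index_of_le hM1.1.le
      · have hcore : IsPGroup p M.normalCore := hMp.to_le (Subgroup.normalCore_le M)
        have hcn := hcore.isNilpotent
        have hZs := ZU_solvable M.normalCore inferInstance
        have hZn := ZU_normal M.normalCore
        have hMT : im φ (M ⊓ T) = ⊥ := by
          rw [eq_bot_iff]
          have h1 : im φ (M ⊓ T) ≤ im φ (ZU M.normalCore) := im_mono φ fun x hx => hz x hx
          refine h1.trans ?_
          rcases (im_normal hφ hZn).eq_bot_or_eq_top with h | h
          · exact h.le
          · exfalso
            apply hX
            have h2 : Group.IsSolvable ((ZU M.normalCore).subgroupOf F) :=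
              Group.isSolvable_of_isSolvable_injective (f := ((F.subtype.comp ((ZU M.normalCore).subgroupOf F).subtype).codRestrict (ZU M.normalCore) fun x => x.2)) (by
                intro a b h
                have := congrArg Subtype.val h
                exact Subtype.ext (Subtype.ext this))
            have h3 : Group.IsSolvable (im φ (ZU M.normalCore)) :=
              Group.isSolvable_of_surjective (φ.subgroupMap_surjective ((ZU M.normalCore).subgroupOf F))
            rw [h] at h3
            exact Group.isSolvable_of_surjective (f := (Subgroup.topEquiv : (⊤ : Subgroup X) ≃* X).toMonoidHom) (Subgroup.topEquiv).surjective
        have h4 := caseTop hφ hF hPF hPp hPi hMmax hT hTt hMT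
        rw [himP] at h4
        rcases (Nat.dvd_prime hp.out).1 h4 with h5 | h5
        · exact hP1c (by
            have : Subsingleton P1 := (Nat.card_eq_one_iff_unique.1 h5).1
            exact isCyclic_of_subsingleton)
        · exact hP1c (isCyclic_of_prime_card h5)
  -- final contradiction
  have hP1ne : (P1 : Subgroup X) ≠ ⊥ := by
    intro e
    apply hP1c
    have : IsCyclic (⊥ : Subgroup X) := isCyclic_of_subsingleton
    rw [← e] at this
    exact this
  obtain ⟨R⟩ : Nonempty (Sylow r X) := inferInstance
  by_cases hst : (P1 : Subgroup X) ≤ Subgroup.normalizer ((R : Subgroup X) : Set X)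
  · obtain ⟨M1, -, hM1⟩ := exists_maxIn (bot_lt_iff_ne_bot.2 hP1ne)
    have hsub : ∀ R' : Sylow r X, R' = R := fun R' => by
      obtain ⟨m, hm, e⟩ := htrans M1 hM1 R R'
      rw [e]
      exact Sylow.smul_eq_iff_mem_normalizer.2 (hst (hM1.1.le hm))
    have : Subsingleton (Sylow r X) := ⟨fun a b => by rw [hsub a, hsub b]⟩
    have hRn := Sylow.normal_of_subsingleton R
    rcases hRn.eq_bot_or_eq_top with e | e
    · have h1 := R.not_dvd_index
      rw [e, Subgroup.index_bot] at h1
      exact h1 hrm.prop.2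
    · have h3 : IsPGroup r (⊤ : Subgroup X) := e ▸ R.2
      exact simple_pgroup hX (h3.of_equiv Subgroup.topEquiv)
  · have hlt : (P1 : Subgroup X) ⊓ Subgroup.normalizer ((R : Subgroup X) : Set X) < P1 :=
      lt_of_le_of_ne inf_le_left fun e => hst (e ▸ inf_le_right)
    obtain ⟨M1, hle, hM1⟩ := exists_maxIn hlt
    obtain ⟨u, hu, huM⟩ := SetLike.exists_of_lt hM1.1
    obtain ⟨m, hm, e⟩ := htrans M1 hM1 R (u • R)
    have h1 : (m⁻¹ * u) • R = R := by rw [mul_smul, e, inv_smul_smul]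
    have h2 := hle ⟨(P1 : Subgroup X).mul_mem ((P1 : Subgroup X).inv_mem (hM1.1.le hm)) hu, Sylow.smul_eq_iff_mem_normalizer.1 h1⟩
    have := M1.mul_mem hm h2
    rw [mul_inv_cancel_left] at this
    exact huM this

lemma exists_simple_quot {Γ : Type*} [Group Γ] [Finite Γ] (hq : IsQuasinilpotentGroup Γ) (hs : ¬ Group.IsSolvable Γ) :
    ∃ D : Subgroup Γ, ∃ _ : D.Normal, IsSimpleGroup (Γ ⧸ D) ∧ ¬ Group.IsSolvable (Γ ⧸ D) := by
  obtain ⟨S, hS⟩ := (Set.toFinite {S : Subgroup Γ | S.Normal ∧ Group.IsSolvable S}).exists_maximal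
    ⟨⊥, inferInstance, inferInstance⟩
  obtain ⟨hSn, hSs⟩ := hS.prop
  have hSt : S < ⊤ := by
    refine lt_top_iff_ne_top.2 ?_
    rintro rfl
    exact hs (Group.isSolvable_of_surjective (f := (Subgroup.topEquiv : (⊤ : Subgroup Γ) ≃* Γ).toMonoidHom) (Subgroup.topEquiv).surjective)
  obtain ⟨A, -, hA⟩ := exists_chief_above inferInstance hSn hSt
  have hAn := hA.1
  have hAs : ¬ Group.IsSolvable A := fun h => hA.2.2.1.not_ge (hS.le_of_ge ⟨hA.1, h⟩ hA.2.2.1.le)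
  set D := Cz A S with hD
  have hDmem : ∀ d, d ∈ D ↔ ∀ a ∈ A, d * a * d⁻¹ * a⁻¹ ∈ S := fun d =>
    mem_Cz' (NB.of_normal ⊤ S) (Subgroup.mem_top d)
  have hDn : D.Normal := NB.normal (NB.Cz (NB.of_normal _ _) (NB.of_normal _ _))
  have hAD : ∀ x : Γ, ∃ y ∈ A, ∃ d ∈ D, x = y * d := by
    intro x
    obtain ⟨y, hy, h⟩ := hq A S hA x
    refine ⟨y, hy, y⁻¹ * x, (hDmem _).2 fun a ha => ?_, by group⟩
    have h1 := hSn.conj_mem _ (h a ha) y⁻¹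
    convert h1 using 1
    group
  have hcomm : A ⊓ D = S ∨ A ⊓ D = A := IsChief.eq hA inferInstance
    (le_inf hA.2.2.1.le fun s hs => (hDmem s).2 fun a ha => by
      have := S.mul_mem hs (hSn.conj_mem _ (S.inv_mem hs) a)
      convert this using 1; group) inf_le_left
  have hsolv : ∀ (E : Subgroup Γ) [E.Normal], A ⊓ E ≤ S → Group.IsSolvable (Γ ⧸ E) → Group.IsSolvable A := by
    intro E _ hE h
    refine Group.isSolvable_of_ker_le_range (Subgroup.inclusion hA.2.2.1.le) ((QuotientGroup.mk' E).comp A.subtype) ?_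
    intro x hx
    rw [MonoidHom.mem_ker] at hx
    exact ⟨⟨x, hE ⟨x.2, (QuotientGroup.eq_one_iff (x : Γ)).1 hx⟩⟩, rfl⟩
  have hAD' : A ⊓ D = S := by
    rcases hcomm with e | e
    · exact e
    · exfalso
      apply hAs
      have hAD : A ≤ D := by rw [← e]; exact inf_le_right
      have h1 : Group.IsSolvable (A ⧸ S.subgroupOf A) := Group.isSolvable_of_comm fun a b => by
        induction a using QuotientGroup.induction_on with
        | H a =>
        induction b using QuotientGroup.induction_on with
        | H b =>
        rw [← QuotientGroup.mk_mul, ← QuotientGroup.mk_mul]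
        refine (QuotientGroup.eq).2 ?_
        have := (hDmem _).1 (hAD (inv_mem b.2)) _ (inv_mem a.2)
        rw [Subgroup.mem_subgroupOf]
        convert this using 1
        simp [mul_assoc]
      refine Group.isSolvable_of_ker_le_range (Subgroup.inclusion hA.2.2.1.le) (QuotientGroup.mk' (S.subgroupOf A)) ?_
      rw [QuotientGroup.ker_mk']
      intro x hx
      exact ⟨⟨x, hx⟩, rfl⟩
  refine ⟨D, hDn, ?_, fun h => hAs (hsolv D hAD'.le h)⟩
  have hsurj := QuotientGroup.mk'_surjective D
  have hDt : D ≠ ⊤ := by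
    intro e
    rw [e, inf_top_eq] at hAD'
    exact hA.2.2.1.ne hAD'.symm
  have : Nontrivial (Γ ⧸ D) := QuotientGroup.nontrivial_iff.2 hDt
  refine ⟨fun L hL => ?_⟩
  have hDL : D ≤ L.comap (QuotientGroup.mk' D) := by
    intro d hd
    have : QuotientGroup.mk' D d = 1 := (QuotientGroup.eq_one_iff d).2 hd
    rw [Subgroup.mem_comap, this]; exact one_mem _
  have hLn : (L.comap (QuotientGroup.mk' D)).Normal := hL.comap _
  rcases IsChief.eq hA (L := A ⊓ L.comap (QuotientGroup.mk' D)) inferInstance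
    (le_inf hA.2.2.1.le ((hAD'.ge.trans inf_le_right).trans hDL)) inf_le_left with e | e
  · left
    rw [eq_bot_iff]
    intro x hx
    obtain ⟨g, rfl⟩ := hsurj x
    obtain ⟨y, hy, d, hd, rfl⟩ := hAD g
    have hyL : y ∈ L.comap (QuotientGroup.mk' D) := by
      have := mul_mem (show y * d ∈ L.comap (QuotientGroup.mk' D) from hx) (inv_mem (hDL hd))
      simpa using this
    have hyD : y ∈ D := (hAD'.ge.trans inf_le_right) (e ▸ (⟨hy, hyL⟩ : y ∈ A ⊓ _))
    exact Subgroup.mem_bot.2 ((QuotientGroup.eq_one_iff _).2 (mul_mem hyD hd))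
  · right
    rw [eq_top_iff]
    intro x _
    obtain ⟨g, rfl⟩ := hsurj x
    obtain ⟨y, hy, d, hd, rfl⟩ := hAD g
    have hAL : A ≤ L.comap (QuotientGroup.mk' D) := by rw [← e]; exact inf_le_right
    exact mul_mem (hAL hy) (hDL hd)

lemma stepA [Finite G] (H : Subgroup G) (hH : H.Normal)
    (hyp : ∀ p : ℕ, p.Prime → ∀ P : Subgroup G, IsSylowIn p P (FStarIn H) →
      ¬ IsCyclic P → ∀ M : Subgroup G, IsMaximalIn M P →
        ¬ HasSupersolubleSupplement M → UsQuasinormal M) : Group.IsSolvable (FStarIn H) := by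
  by_contra hs
  have h1 := (FStar_mem (H := H)).2.2
  have h2 : IsQuasinilpotentGroup (FStarIn H) := by
    rw [QN_iff (FStarIn H).subtype (Subgroup.subtype_injective _), Subgroup.range_subtype]; exact h1
  obtain ⟨D, hD, hsim, hns⟩ := exists_simple_quot h2 hs
  exact stepA_core (FStar_normal H hH) hns (QuotientGroup.mk' D) (QuotientGroup.mk'_surjective D) hyp

end Ss

set_option linter.unusedVariables false
open scoped Pointwise
namespace Ss
variable {G : Type*} [Group G]

lemma chief_abelian {Γ : Type*} [Group Γ] [Finite Γ] (hs : Group.IsSolvable Γ) {A B : Subgroup Γ}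
    (h : IsChiefFactor A B) {a b : Γ} (ha : a ∈ A) (hb : b ∈ A) : a * b * a⁻¹ * b⁻¹ ∈ B := by
  have hB := h.2.1
  have hA := h.1
  have hs' : Group.IsSolvable (Γ ⧸ B) := Group.isSolvable_of_surjective (QuotientGroup.mk'_surjective B)
  set N := A.map (QuotientGroup.mk' B) with hN
  have hNn : N.Normal := hA.map _ (QuotientGroup.mk'_surjective B)
  have hne : N ≠ ⊥ := by
    intro e
    rw [hN, Subgroup.map_eq_bot_iff, QuotientGroup.ker_mk'] at e
    exact h.2.2.1.not_ge e
  have hlt := Group.IsSolvable.commutator_lt_of_ne_bot hne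
  have hL : (⁅N, N⁆.comap (QuotientGroup.mk' B)).Normal := Subgroup.Normal.comap inferInstance _
  have hm : a * b * a⁻¹ * b⁻¹ ∈ ⁅N, N⁆.comap (QuotientGroup.mk' B) := by
    rw [Subgroup.mem_comap]
    have := Subgroup.commutator_mem_commutator (Subgroup.mem_map_of_mem (QuotientGroup.mk' B) ha)
      (Subgroup.mem_map_of_mem (QuotientGroup.mk' B) hb)
    rw [commutatorElement_def] at this
    simpa using this
  have hle : ⁅N, N⁆.comap (QuotientGroup.mk' B) ≤ A := by
    intro x hx
    obtain ⟨a, ha, e⟩ := hlt.le hx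
    have : a⁻¹ * x ∈ B := QuotientGroup.eq.1 e
    have := A.mul_mem ha (h.2.2.1.le this)
    simpa using this
  rcases IsChief.eq h hL (by
    intro x hx; rw [Subgroup.mem_comap, show QuotientGroup.mk' B x = 1 from (QuotientGroup.eq_one_iff _).2 hx]
    exact one_mem _) hle with e | e
  · exact e ▸ hm
  · exfalso
    refine hlt.not_ge ?_
    rintro _ ⟨x, hx, rfl⟩
    have hx' : x ∈ A := hx
    rw [← e] at hx'
    exact hx'

lemma nilp_of_QN {Γ : Type*} [Group Γ] [Finite Γ] (hs : Group.IsSolvable Γ)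
    (hq : IsQuasinilpotentGroup Γ) : Group.IsNilpotent Γ := by
  refine ((Group.isNilpotent_of_finite_tfae (G := Γ)).out 0 2).2 fun M hM => ?_
  by_contra hMn
  have hKM : M.normalCore ≤ M := M.normalCore_le
  have hKt : M.normalCore < ⊤ := lt_of_le_of_lt hKM hM.lt_top
  obtain ⟨B, -, hB⟩ := exists_chief_above (A := ⊤) (C := M.normalCore) inferInstance inferInstance hKt
  have hBn := hB.1
  have hBM : ¬ B ≤ M := fun h => hB.2.2.1.not_ge (Subgroup.normal_le_normalCore.2 h)
  have hcen : ∀ x : Γ, ∀ h ∈ B, x * h * x⁻¹ * h⁻¹ ∈ M := by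
    intro x h hh
    obtain ⟨y, hy, hxy⟩ := hq B _ hB x
    have h1 := hxy h hh
    have h2 := chief_abelian hs hB hy hh
    have := mul_mem h1 h2
    refine hKM ?_
    convert this using 1
    group
  apply hMn
  refine NB.normal ?_
  have : (⊤ : Subgroup Γ) ≤ M ⊔ B := by
    rw [hM.2 (M ⊔ B) (lt_of_le_of_ne le_sup_left fun e => hBM (by rw [e]; exact le_sup_right))]
  refine NB.mono (NB.sup_left (NB.self M) ?_) this
  intro k hk a ha
  have := M.inv_mem (hcen a k hk)
  have := M.mul_mem this ha
  convert this using 1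
  group

lemma QN_of_nilp {Γ : Type*} [Group Γ] [Finite Γ] (hn : Group.IsNilpotent Γ) : IsQuasinilpotentGroup Γ := by
  intro A B h x
  have hB := h.2.1
  have hA := h.1
  suffices hc : ∀ a ∈ A, ∀ x, a * x * a⁻¹ * x⁻¹ ∈ B by
    refine ⟨1, one_mem _, fun a ha => ?_⟩
    have := B.inv_mem (hc a ha x)
    simpa [mul_assoc] using this
  set N := A.map (QuotientGroup.mk' B) with hN
  have hNn : N.Normal := hA.map _ (QuotientGroup.mk'_surjective B)
  have hne : N ≠ ⊥ := by
    intro e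
    rw [hN, Subgroup.map_eq_bot_iff, QuotientGroup.ker_mk'] at e
    exact h.2.2.1.not_ge e
  have hL : (⁅N, (⊤ : Subgroup (Γ ⧸ B))⁆.comap (QuotientGroup.mk' B)).Normal := Subgroup.Normal.comap inferInstance _
  have hm : ∀ a ∈ A, ∀ b, a * b * a⁻¹ * b⁻¹ ∈ ⁅N, (⊤ : Subgroup (Γ ⧸ B))⁆.comap (QuotientGroup.mk' B) := by
    intro a ha b
    rw [Subgroup.mem_comap]
    have := Subgroup.commutator_mem_commutator (Subgroup.mem_map_of_mem (QuotientGroup.mk' B) ha)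
      (Subgroup.mem_top (QuotientGroup.mk' B b))
    rw [commutatorElement_def] at this
    simpa using this
  have hlt : ⁅N, (⊤ : Subgroup (Γ ⧸ B))⁆ ≤ N := Subgroup.commutator_le_left _ _
  have hle : ⁅N, (⊤ : Subgroup (Γ ⧸ B))⁆.comap (QuotientGroup.mk' B) ≤ A := by
    intro x hx
    obtain ⟨a, ha, e⟩ := hlt hx
    have : a⁻¹ * x ∈ B := QuotientGroup.eq.1 e
    have := A.mul_mem ha (h.2.2.1.le this)
    simpa using this
  rcases IsChief.eq h hL (by
    intro x hx; rw [Subgroup.mem_comap, show QuotientGroup.mk' B x = 1 from (QuotientGroup.eq_one_iff _).2 hx]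
    exact one_mem _) hle with e | e
  · exact fun a ha x => e ▸ hm a ha x
  · exfalso
    have hNe : N ≤ ⁅N, (⊤ : Subgroup (Γ ⧸ B))⁆ := by
      rintro _ ⟨x, hx, rfl⟩
      have hx' : x ∈ A := hx
      rw [← e] at hx'
      exact hx'
    have hall : ∀ n, N ≤ Subgroup.lowerCentralSeries (⊤ : Subgroup (Γ ⧸ B)) n := by
      intro n
      induction n with
      | zero => exact le_top
      | succ n ih => exact hNe.trans (Subgroup.commutator_mono ih le_rfl)
    have hnq : Group.IsNilpotent (Γ ⧸ B) := inferInstance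
    obtain ⟨n, hn⟩ := Subgroup.nilpotent_iff_lowerCentralSeries.1 hnq
    exact hne (eq_bot_iff.2 (hn ▸ hall n))

lemma FStar_nilp [Finite G] (H : Subgroup G) (hs : Group.IsSolvable (FStarIn H)) :
    Group.IsNilpotent (FStarIn H) := by
  refine nilp_of_QN hs ?_
  rw [QN_iff (FStarIn H).subtype (Subgroup.subtype_injective _), Subgroup.range_subtype]
  exact (FStar_mem (H := H)).2.2

lemma nilp_le_FStar [Finite G] {H N : Subgroup G} (hN : N.Normal) (hNH : N ≤ H)
    (hn : Group.IsNilpotent N) : N ≤ FStarIn H := by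
  rw [FStar_eq]
  refine le_sSup ⟨hNH, NB.of_normal _ _, ?_⟩
  have := QN_of_nilp hn
  rwa [QN_iff N.subtype (Subgroup.subtype_injective _), Subgroup.range_subtype] at this

lemma sylF [Finite G] {F : Subgroup G} (hF : F.Normal) (hn : Group.IsNilpotent F) (p : ℕ) (hp : p.Prime) :
    ∃ P : Subgroup G, P.Normal ∧ IsSylowIn p P F ∧ ∀ x ∈ F, (∃ k, orderOf x = p ^ k) → x ∈ P := by
  have : Fact p.Prime := ⟨hp⟩
  let S : Sylow p F := default
  have hall : ∀ (p : ℕ) (_hp : Fact p.Prime) (P : Sylow p F), (P : Subgroup F).Normal :=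
    ((Group.isNilpotent_of_finite_tfae (G := F)).out 0 3).1 hn
  have hSn : (S : Subgroup F).Normal := hall p this S
  have hc := S.characteristic_of_normal hSn
  refine ⟨(S : Subgroup F).map F.subtype, ConjAct.normal_of_characteristic_of_normal, ⟨?_, S.2.map _, ?_⟩, ?_⟩
  · exact Subgroup.map_subtype_le _
  · have := S.not_dvd_index
    have e : ((S : Subgroup F).map F.subtype).subgroupOf F = S := by
      exact Subgroup.comap_map_eq_self_of_injective F.subtype_injective _
    rwa [e]
  · rintro x hx ⟨k, hk⟩
    have hz : IsPGroup p (Subgroup.zpowers (⟨x, hx⟩ : F)) := by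
      refine IsPGroup.of_card (n := k) ?_
      rw [Nat.card_zpowers, ← hk, ← Subgroup.orderOf_coe]
    obtain ⟨Q, hQ⟩ := hz.exists_le_sylow
    have hu := Sylow.unique_of_normal S hSn
    have : Q = S := hu.uniq Q |>.trans (hu.uniq S).symm
    rw [this] at hQ
    exact ⟨⟨x, hx⟩, hQ (Subgroup.mem_zpowers _), rfl⟩

end Ss

set_option linter.unusedVariables false
open scoped Pointwise
namespace Ss
variable {G : Type*} [Group G]

lemma cyc_index [Finite G] {p : ℕ} [hp : Fact p.Prime] {A B : Subgroup G} (hB : B.Normal) (hlt : B < A)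
    (hc : CycMod B A) (hx : ∀ x ∈ A, x ^ p ∈ B) : B.relIndex A = p := by
  have h1 : B.relIndex A = Nat.card (A.map (QuotientGroup.mk' B)) := by
    have := Subgroup.relIndex_ker (f := QuotientGroup.mk' B) A
    rwa [QuotientGroup.ker_mk'] at this
  have h2 := hc.isCyclic
  obtain ⟨g, hg⟩ := h2.exists_generator
  have h3 : orderOf g = B.relIndex A := by
    rw [h1]; exact orderOf_eq_card_of_forall_mem_zpowers hg
  have h4 : orderOf g ∣ p := by
    apply orderOf_dvd_of_pow_eq_one
    obtain ⟨_, x, hxA, rfl⟩ := g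
    apply Subtype.ext
    show (QuotientGroup.mk' B x) ^ p = 1
    rw [← map_pow]
    exact (QuotientGroup.eq_one_iff _).2 (hx x hxA)
  rw [h3] at h4
  rcases (Nat.dvd_prime hp.out).1 h4 with e | e
  · exact absurd (Subgroup.relIndex_eq_one.1 e) hlt.not_ge
  · exact e

lemma stepB_supp [Finite G] {p : ℕ} [hp : Fact p.Prime] {P A B M T : Subgroup G} (hPn : P.Normal) (hP : IsPGroup p P)
    (h : IsChiefFactor A B) (hFB : Fr P ≤ B) (hAP : A ≤ P)
    (hmax : ∀ L : Subgroup G, L.Normal → B < L → L ≤ P → A ≤ L)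
    (hM : IsMaximalIn M P) (hBM : B ≤ M) (hT : IsSupersoluble T)
    (hMT : (M : Set G) * (T : Set G) = Set.univ) : CycMod B A := by
  have hB := h.2.1
  have hA := h.1
  have htop : (⊤ : Subgroup G) ≤ P ⊔ T := by
    intro g _
    have : g ∈ (M : Set G) * (T : Set G) := hMT ▸ Set.mem_univ g
    obtain ⟨m, hm, t, ht, rfl⟩ := this
    exact mul_mem (Subgroup.mem_sup_left (hM.1.le hm)) (Subgroup.mem_sup_right ht)
  have hnorm : ∀ V : Subgroup G, Fr P ≤ V → V ≤ P → NB T V → V.Normal := fun V h1 h2 h3 =>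
    NB.normal ((NB.sup_left (NB_of_Fr hP h1 h2) h3).mono htop)
  have hBP : B ≤ P := h.2.2.1.le.trans hAP
  have hW : A ≤ (P ⊓ T) ⊔ B := by
    have hWn : ((P ⊓ T) ⊔ B).Normal := hnorm _ (hFB.trans le_sup_right) (sup_le inf_le_left hBP)
      (NB.sup (NB.inf_self (NB.of_normal _ _)) (NB.of_normal _ _))
    refine hmax _ hWn (lt_of_le_of_ne le_sup_right fun e => ?_) (sup_le inf_le_left hBP)
    refine hM.1.not_ge fun x hx => ?_
    have : x ∈ (M : Set G) * (T : Set G) := hMT ▸ Set.mem_univ x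
    obtain ⟨m, hm, t, ht, rfl⟩ := this
    refine M.mul_mem hm (hBM ?_)
    rw [e]
    refine Subgroup.mem_sup_left ⟨?_, ht⟩
    have := P.mul_mem (P.inv_mem (hM.1.le hm)) hx
    simpa using this
  have key : ∀ c : Subgroup T, Relation.ReflTransGen SStep ⊥ c → A ⊓ c.map T.subtype ≤ B ∨ CycMod B A := by
    intro c hc
    induction hc with
    | refl => left; rw [Subgroup.map_bot, inf_bot_eq]; exact bot_le
    | @tail c c' _ hs ih =>
      rcases ih with ih | ih
      swap
      · exact Or.inr ih
      by_cases hle : A ⊓ c'.map T.subtype ≤ B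
      · exact Or.inl hle
      right
      obtain ⟨hcn, hcn', hcc, hcyc⟩ := hs
      have hNB : NB T (c'.map T.subtype) := by
        rintro t ht _ ⟨y, hy, rfl⟩
        exact ⟨_, hcn'.conj_mem y hy ⟨t, ht⟩, rfl⟩
      have hV := hnorm ((A ⊓ c'.map T.subtype) ⊔ B) (hFB.trans le_sup_right)
        (sup_le (inf_le_left.trans hAP) hBP) (NB.sup (NB.inf (NB.of_normal _ _) hNB) (NB.of_normal _ _))
      have hVA : (A ⊓ c'.map T.subtype) ⊔ B = A := by
        rcases IsChief.eq h hV le_sup_right (sup_le inf_le_left h.2.2.1.le) with e | e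
        · exact absurd (le_sup_left.trans e.le) hle
        · exact e
      let D : Subgroup T := A.subgroupOf T ⊓ c'
      have hDc : IsCyclic (D.map (QuotientGroup.mk' c)) := by
        have := hcyc.isCyclic
        exact Subgroup.isCyclic_of_le (Subgroup.map_mono (inf_le_right : D ≤ c'))
      obtain ⟨g, hg, hgx⟩ := CycMod.of_hom (QuotientGroup.mk' c) D hDc
      rw [QuotientGroup.ker_mk'] at hgx
      refine ⟨g, hg.1, fun x hx => ?_⟩
      rw [← hVA] at hx
      obtain ⟨d, ⟨hdA, y, hy, rfl⟩, b, hb, rfl⟩ := (mem_sup_NB (NB.of_normal _ _)).1 hx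
      obtain ⟨m, hm⟩ := hgx y ⟨hdA, hy⟩
      refine ⟨m, ?_⟩
      have hin : T.subtype (y⁻¹ * g ^ m) ∈ B := by
        refine ih ⟨?_, ⟨_, hm, rfl⟩⟩
        have h1 : (g : G) ∈ A := hg.1
        have h2 : (y : G) ∈ A := hdA
        exact A.mul_mem (A.inv_mem h2) (A.zpow_mem h1 m)
      have := B.mul_mem (B.inv_mem hb) hin
      simpa [mul_assoc] using this
  rcases key ⊤ (ss_iff.1 hT) with hk | hk
  · exfalso
    refine h.2.2.1.not_ge fun x hx => ?_
    obtain ⟨t, ht, b, hb, rfl⟩ := (mem_sup_NB (NB.of_normal _ _)).1 (hW hx)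
    refine B.mul_mem (hk ⟨?_, ⟨⟨t, ht.2⟩, trivial, rfl⟩⟩) hb
    have := A.mul_mem hx (A.inv_mem (h.2.2.1.le hb))
    simpa using this
  · exact hk

lemma stepB_us [Finite G] {p : ℕ} [hp : Fact p.Prime] {P A B M : Subgroup G} (hPn : P.Normal) (hP : IsPGroup p P)
    (h : IsChiefFactor A B) (hAP : A ≤ P)
    (hmax : ∀ L : Subgroup G, L.Normal → B < L → L ≤ P → A ≤ L)
    (hM : IsMaximalIn M P) (hBM : B ≤ M) (hAM : ¬ A ≤ M) (hU : UsQuasinormal M) :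
    (B.relIndex A).Prime ∨ ∀ q : ℕ, q.Prime → q ≠ p → ∀ Q : Sylow q G, NB (Q : Subgroup G) M := by
  by_contra hcon
  push Not at hcon
  obtain ⟨hnp, q, hq, hqp, Q, hQ⟩ := hcon
  apply hQ
  have hB := h.2.1
  have hA := h.1
  have hBP : B ≤ P := h.2.2.1.le.trans hAP
  obtain ⟨T, hT, hsp, hz⟩ := hU
  have hcore : M.normalCore ≤ B := by
    have h1 : B ≤ M.normalCore := Subgroup.normal_le_normalCore.2 hBM
    by_contra hne
    exact hAM ((hmax M.normalCore inferInstance (lt_of_le_not_ge h1 hne)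
      (M.normalCore_le.trans hM.1.le)).trans M.normalCore_le)
  have hZn := ZU_normal M.normalCore
  have hcZ : B ≤ ZU M.normalCore := by
    intro x hx
    have hx' : x ∈ M.normalCore := (Subgroup.normal_le_normalCore.2 hBM) hx
    show QuotientGroup.mk' M.normalCore x ∈ UHypercenter (G ⧸ M.normalCore)
    rw [show QuotientGroup.mk' M.normalCore x = 1 from (QuotientGroup.eq_one_iff _).2 hx']
    exact one_mem _
  have hZP : ZU M.normalCore ⊓ P ≤ B := by
    by_contra hne
    have hlt : B < ZU M.normalCore ⊓ P := lt_of_le_not_ge (le_inf hcZ hBP) hne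
    exact hnp (ZU_prime h hcore ((hmax _ inferInstance hlt inf_le_right).trans inf_le_left))
  have hMT : M ⊓ T ≤ B := fun x hx => hZP ⟨hz x hx, hM.1.le hx.1⟩
  have hPT : P ⊓ T ≤ B := by
    by_contra hne
    have hNn : (B ⊔ (P ⊓ T)).Normal := inferInstance
    have hAN := hmax _ hNn (lt_of_le_of_ne le_sup_left fun e => hne (by rw [e]; exact le_sup_right))
      (sup_le hBP inf_le_left)
    have hMA : M ⊓ A = B := by
      refine le_antisymm (fun x hx => ?_) (le_inf hBM h.2.2.1.le)
      obtain ⟨b, hb, t, ht, rfl⟩ := (mem_sup_NB (NB.of_normal _ _)).1 (hAN hx.2)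
      refine B.mul_mem hb (hMT ⟨?_, ht.2⟩)
      have := M.mul_mem (M.inv_mem (hBM hb)) hx.1
      simpa using this
    have e : B.relIndex A = M.relIndex A := by rw [← hMA, Subgroup.inf_relIndex_right]
    have hd := relIndex_dvd_of_NB hM.1.le hAP (NB.of_normal _ _)
    rw [(maxIn_pgroup hP hM).2.1, ← e] at hd
    rcases (Nat.dvd_prime hp.out).1 hd with e | e
    · exact absurd (Subgroup.relIndex_eq_one.1 e) h.2.2.1.not_ge
    · exact hnp (e ▸ hp.out)
  have hSP : (M ⊔ T) ⊓ P ≤ M := by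
    refine (ded (NB.of_normal _ _) hM.1.le).trans (sup_le le_rfl ?_)
    rw [inf_comm]; exact hPT.trans hBM
  have : Fact q.Prime := ⟨hq⟩
  obtain ⟨k, hk⟩ := lemmaK (q := q) hPn (sperm_PQ hsp Q) Q.2
  have hin : ((M ⊔ T) ⊔ (Q : Subgroup G)) ⊓ P ≤ M ⊔ T := by
    rw [← Subgroup.relIndex_eq_one, hk]
    have hd : (M ⊔ T).relIndex (((M ⊔ T) ⊔ (Q : Subgroup G)) ⊓ P) ∣ Nat.card P :=
      (Subgroup.relIndex_dvd_card _ _).trans (Subgroup.card_dvd_of_le inf_le_right)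
    obtain ⟨n, hn⟩ := IsPGroup.iff_card.1 hP
    rw [hk, hn] at hd
    have hco : Nat.Coprime (q ^ k) (p ^ n) := Nat.Coprime.pow _ _ ((Nat.coprime_primes hq hp.out).2 hqp)
    exact Nat.eq_one_of_dvd_coprimes hco dvd_rfl hd
  intro g hg m hm
  have hP' : g * m * g⁻¹ ∈ P := hPn.conj_mem m (hM.1.le hm) g
  refine hSP ⟨hin ⟨?_, hP'⟩, hP'⟩
  have hgm : m ∈ (M ⊔ T) ⊔ (Q : Subgroup G) := Subgroup.mem_sup_left (Subgroup.mem_sup_left hm)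
  have hgg : g ∈ (M ⊔ T) ⊔ (Q : Subgroup G) := Subgroup.mem_sup_right hg
  exact Subgroup.mul_mem _ (Subgroup.mul_mem _ hgg hgm) (Subgroup.inv_mem _ hgg)

lemma fix_pt [Finite G] {p : ℕ} [hp : Fact p.Prime] {K A B : Subgroup G} (hA : A.Normal) (hB : B.Normal)
    (hd : p ∣ B.relIndex A)
    (hK : ∀ g ∈ K, ∃ k : ℕ, ∀ a ∈ A, g ^ (p ^ k) * a * (g ^ (p ^ k))⁻¹ * a⁻¹ ∈ B) :
    ∃ x ∈ A, x ∉ B ∧ ∀ g ∈ K, g * x * g⁻¹ * x⁻¹ ∈ B := by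
  let N := A.map (QuotientGroup.mk' B)
  have hNn : N.Normal := hA.map _ (QuotientGroup.mk'_surjective B)
  let f : K →* MulAut N := (MulAut.conjNormal (H := N)).comp ((QuotientGroup.mk' B).comp K.subtype)
  have hf : ∀ g : K, ∀ x : N, ((f g x : N) : G ⧸ B) = (QuotientGroup.mk' B g) * x * (QuotientGroup.mk' B g)⁻¹ :=
    fun g x => rfl
  have hR : IsPGroup p f.range := by
    rintro ⟨_, g, rfl⟩
    obtain ⟨k, hk⟩ := hK g g.2
    refine ⟨k, ?_⟩
    apply Subtype.ext
    show (f g) ^ (p ^ k) = 1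
    rw [← map_pow]
    ext x
    rw [hf]
    obtain ⟨_, a, ha, rfl⟩ := x
    have := (QuotientGroup.eq_one_iff (N := B) _).2 (hk a ha)
    simp only [QuotientGroup.mk_mul, QuotientGroup.mk_inv] at this
    simpa using mul_inv_eq_one.1 this
  have hcard : p ∣ Nat.card N := by
    have := Subgroup.relIndex_ker (f := QuotientGroup.mk' B) A
    rw [QuotientGroup.ker_mk'] at this
    rwa [← this]
  have h1 : (1 : N) ∈ MulAction.fixedPoints f.range N := by
    rintro ⟨φ, _⟩
    exact map_one φ
  obtain ⟨⟨_, a, ha, rfl⟩, hb, hne⟩ := hR.exists_fixed_point_of_prime_dvd_card_of_fixed_point N hcard h1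
  refine ⟨a, ha, fun haB => hne ?_, fun g hg => ?_⟩
  · apply Subtype.ext
    exact ((QuotientGroup.eq_one_iff _).2 haB).symm
  · have := hb ⟨f ⟨g, hg⟩, ⟨g, hg⟩, rfl⟩
    have := congrArg (Subtype.val) this
    have h2 := (hf ⟨g, hg⟩ ⟨_, a, ha, rfl⟩).symm.trans this
    rw [← QuotientGroup.eq_one_iff]
    simp only [QuotientGroup.mk_mul, QuotientGroup.mk_inv]
    exact mul_inv_eq_one.2 h2

lemma L0' [Finite G] {K : Subgroup G}
    (h : ∀ q : ℕ, q.Prime → ∃ Q : Sylow q G, (Q : Subgroup G) ≤ K) : K = ⊤ := by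
  rw [← Subgroup.index_eq_one]
  by_contra hne
  obtain ⟨q, hq, hd⟩ := Nat.exists_prime_and_dvd hne
  have : Fact q.Prime := ⟨hq⟩
  obtain ⟨Q, hQ⟩ := h q hq
  exact Q.not_dvd_index (hd.trans (Subgroup.index_dvd_of_le hQ))

lemma chief_dvd [Finite G] {p : ℕ} [hp : Fact p.Prime] {P A B : Subgroup G} (hP : IsPGroup p P)
    (hAP : A ≤ P) (h : B < A) : p ∣ B.relIndex A := by
  obtain ⟨n, hn⟩ := IsPGroup.iff_card.1 (hP.to_le hAP)
  have hd : B.relIndex A ∣ p ^ n := hn ▸ Subgroup.relIndex_dvd_card _ _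
  obtain ⟨k, -, hk⟩ := (Nat.dvd_prime_pow hp.out).1 hd
  rw [hk]
  refine dvd_pow_self _ ?_
  rintro rfl
  exact h.not_ge (Subgroup.relIndex_eq_one.1 (by simpa using hk))

theorem stepB [Finite G] {p : ℕ} [hp : Fact p.Prime] {P : Subgroup G} (hPn : P.Normal) (hP : IsPGroup p P)
    (hyp : ¬ IsCyclic P → ∀ M : Subgroup G, IsMaximalIn M P →
        ¬ HasSupersolubleSupplement M → UsQuasinormal M)
    {A B : Subgroup G} (h : IsChiefFactor A B) (hFB : Fr P ≤ B) (hAP : A ≤ P) :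
    (B.relIndex A).Prime := by
  by_cases hcyc : IsCyclic P
  · have hAc : IsCyclic A := Subgroup.isCyclic_of_le hAP
    have hAB : CycMod B A := by
      obtain ⟨g, hg⟩ := hAc.exists_generator
      refine ⟨g, g.2, fun x hx => ?_⟩
      obtain ⟨m, hm⟩ := hg ⟨x, hx⟩
      refine ⟨m, ?_⟩
      have : (g : G) ^ m = x := congrArg Subtype.val hm
      rw [this, inv_mul_cancel]
      exact one_mem _
    rw [cyc_index h.2.1 h.2.2.1 hAB fun x hx => hFB (Fr_pow hP (hAP hx))]
    exact hp.out
  by_contra hnp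
  obtain ⟨B', hB'⟩ := (Set.toFinite {B : Subgroup G | ∃ A, IsChiefFactor A B ∧ Fr P ≤ B ∧ A ≤ P ∧
    ¬ (B.relIndex A).Prime}).exists_maximal ⟨B, A, h, hFB, hAP, hnp⟩
  clear h hFB hAP hnp
  clear A B
  obtain ⟨⟨A, h, hFB, hAP, hnp⟩, hBmax⟩ := hB'
  have hA := h.1
  have hB := h.2.1
  have hmax : ∀ L : Subgroup G, L.Normal → B' < L → L ≤ P → A ≤ L := by
    intro L hL hBL hLP
    by_contra hAL
    have hAB : A ⊓ L ≤ B' := by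
      rcases IsChief.eq h (L := A ⊓ L) inferInstance (le_inf h.2.2.1.le hBL.le) inf_le_left with e | e
      · exact e.le
      · exact absurd (e ▸ inf_le_right) hAL
    obtain ⟨h1, h2⟩ := chief_sup h hL hAB
    rw [sup_eq_right.2 hBL.le] at h1 h2
    refine hBL.not_ge (hBmax ⟨A ⊔ L, h1, hFB.trans hBL.le, sup_le hAP hLP, ?_⟩ hBL.le)
    rwa [h2]
  have hpow : ∀ x ∈ A, x ^ p ∈ B' := fun x hx => hFB (Fr_pow hP (hAP hx))
  have hstar : ∀ M : Subgroup G, IsMaximalIn M P → B' ≤ M → ¬ A ≤ M →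
      ∀ q : ℕ, q.Prime → q ≠ p → ∀ Q : Sylow q G, NB (Q : Subgroup G) M := by
    intro M hM hBM hAM
    by_cases hs : HasSupersolubleSupplement M
    · obtain ⟨T, hT, hMT⟩ := hs
      have := cyc_index h.2.1 h.2.2.1 (stepB_supp hPn hP h hFB hAP hmax hM hBM hT hMT) hpow
      exact absurd (this ▸ hp.out) hnp
    · exact (stepB_us hPn hP h hAP hmax hM hBM hAM (hyp hcyc M hM hs)).resolve_left hnp
  let Gp : Sylow p G := default
  obtain ⟨x, hxA, hxB, hx⟩ := fix_pt (p := p) (K := (Gp : Subgroup G)) hA hB (chief_dvd hP hAP h.2.2.1) (by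
    intro g hg
    obtain ⟨k, hk⟩ := Gp.2 ⟨g, hg⟩
    have hk' : g ^ (p ^ k) = 1 := congrArg Subtype.val hk
    refine ⟨k, fun a _ => ?_⟩
    simp [hk'])
  let L := Subgroup.zpowers x ⊔ B'
  have hxL : x ∈ L := Subgroup.mem_sup_left (Subgroup.mem_zpowers x)
  have hBL : B' ≤ L := le_sup_right
  have hLA : L ≤ A := sup_le (by rw [Subgroup.zpowers_le]; exact hxA) h.2.2.1.le
  have hmemL : ∀ y ∈ L, ∃ m : ℤ, ∃ b ∈ B', x ^ m * b = y := by
    intro y hy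
    obtain ⟨_, ⟨m, rfl⟩, b, hb, e⟩ := (mem_sup_NB (NB.of_normal _ _)).1 hy
    exact ⟨m, b, hb, e⟩
  have hpL : NB (Gp : Subgroup G) L := by
    intro g hg l hl
    obtain ⟨m, b, hb, rfl⟩ := hmemL l hl
    have h1 : g * x * g⁻¹ ∈ L := by
      have := L.mul_mem (hBL (hx g hg)) hxL
      simpa using this
    have h2 := L.mul_mem (L.zpow_mem h1 m) (hBL (hB.conj_mem b hb g))
    rw [conj_zpow] at h2
    simpa [mul_assoc] using h2
  have hqL : ∀ q : ℕ, q.Prime → q ≠ p → ∀ Q : Sylow q G, NB (Q : Subgroup G) L := by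
    intro q hq hqp Q g hg l hl
    by_contra hcon
    obtain ⟨M, hM, hLM, hn⟩ := avoid hP (hFB.trans hBL) (hLA.trans hAP)
      (hAP (hA.conj_mem l (hLA hl) g)) hcon
    exact hn (hstar M hM (hBL.trans hLM) (fun hAM => hn (hAM (hA.conj_mem l (hLA hl) g))) q hq hqp Q g hg l
      (hLM hl))
  have hnt : Subgroup.normalizer (L : Set G) = ⊤ := by
    refine L0' fun q hq => ?_
    by_cases hqp : q = p
    · subst hqp
      exact ⟨Gp, hpL.le_normalizer⟩
    · exact ⟨default, (hqL q hq hqp _).le_normalizer⟩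
  have hLn : L.Normal := Subgroup.normalizer_eq_top_iff.1 hnt
  have hLe : L = A := by
    rcases IsChief.eq h hLn hBL hLA with e | e
    · exact absurd (e ▸ hxL) hxB
    · exact e
  have hc : CycMod B' A := by
    refine ⟨x, hxA, fun y hy => ?_⟩
    rw [← hLe] at hy
    obtain ⟨m, b, hb, rfl⟩ := hmemL y hy
    refine ⟨m, ?_⟩
    have := B'.inv_mem hb
    simpa using this
  have := cyc_index hB h.2.2.1 hc hpow
  exact hnp (this ▸ hp.out)

end Ss

set_option linter.unusedVariables false
open scoped Pointwise
namespace Ss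
variable {G : Type*} [Group G]

lemma eigen_add {V : Type*} [AddCommGroup V] [Finite V] [Nontrivial V] {p : ℕ} [hp : Fact p.Prime]
    [Module (ZMod p) V] (T : V →ₗ[ZMod p] V) (hTp : T ^ p = T) : ∃ m : ℕ, ∃ v : V, v ≠ 0 ∧ T v = m • v := by
  have haev : Polynomial.aeval T (Polynomial.X ^ p - Polynomial.X : Polynomial (ZMod p)) = 0 := by
    simp [hTp]
  have hdvd := minpoly.dvd (ZMod p) T haev
  have hne : (Polynomial.X ^ p - Polynomial.X : Polynomial (ZMod p)) ≠ 0 :=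
    FiniteField.X_pow_card_sub_X_ne_zero _ hp.out.one_lt
  have hs := (GaloisField.splits_zmod_X_pow_sub_X p).of_dvd hne hdvd
  have hint : IsIntegral (ZMod p) T := Algebra.IsIntegral.isIntegral T
  obtain ⟨μ, hμ⟩ := hs.exists_eval_eq_zero (minpoly.degree_pos hint).ne'
  obtain ⟨v, hv⟩ := (Module.End.hasEigenvalue_of_isRoot (f := T) hμ).exists_hasEigenvector
  refine ⟨μ.val, v, hv.2, ?_⟩
  have h1 := hv.apply_eq_smul
  rwa [← ZMod.natCast_zmod_val μ, Nat.cast_smul_eq_nsmul] at h1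

lemma eigen_add' {V : Type*} [AddCommGroup V] [Finite V] [Nontrivial V] {p : ℕ} [hp : Fact p.Prime]
    (hpow : ∀ v : V, p • v = 0) (f : V →+ V) (hf : ∀ v, f^[p] v = f v) :
    ∃ m : ℕ, ∃ v : V, v ≠ 0 ∧ f v = m • v := by
  let _ : Module (ZMod p) V := AddCommGroup.zmodModule hpow
  refine eigen_add (f.toZModLinearMap p) ?_
  refine LinearMap.ext fun v => ?_
  rw [Module.End.pow_apply]
  exact hf v

lemma eigen {N : Type*} [CommGroup N] [Finite N] [Nontrivial N] {p : ℕ} [hp : Fact p.Prime]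
    (hpow : ∀ x : N, x ^ p = 1) (σ : MulAut N) (hσ : σ ^ p = σ) :
    ∃ m : ℕ, ∃ x : N, x ≠ 1 ∧ σ x = x ^ m := by
  have hk : ∀ (k : ℕ) (v : N), σ^[k] v = (σ ^ k) v := by
    intro k
    induction k with
    | zero => intro v; rfl
    | succ k ih => intro v; rw [Function.iterate_succ_apply, ih, pow_succ]; rfl
  obtain ⟨m, v, hv, h⟩ := eigen_add' (V := Additive N) (p := p) (fun v => hpow v.toMul)
    (MonoidHom.toAdditive σ.toMonoidHom) (fun v => by
      have := hk p v.toMul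
      rw [hσ] at this
      exact this)
  exact ⟨m, v.toMul, hv, h⟩

def actN (A B : Subgroup G) (hA : A.Normal) (hB : B.Normal) : G →* MulAut (A.map (QuotientGroup.mk' B)) :=
  have : (A.map (QuotientGroup.mk' B)).Normal := hA.map _ (QuotientGroup.mk'_surjective B)
  (MulAut.conjNormal (H := A.map (QuotientGroup.mk' B))).comp (QuotientGroup.mk' B)

lemma actN_apply {A B : Subgroup G} (hA : A.Normal) (hB : B.Normal) (g : G) (x : A.map (QuotientGroup.mk' B)) :
    ((actN A B hA hB g x : _) : G ⧸ B) = (QuotientGroup.mk' B g) * x * (QuotientGroup.mk' B g)⁻¹ := rfl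

lemma actN_eq_one {A B : Subgroup G} (hA : A.Normal) (hB : B.Normal) (g : G) :
    actN A B hA hB g = 1 ↔ ∀ a ∈ A, g * a * g⁻¹ * a⁻¹ ∈ B := by
  constructor
  · intro h a ha
    have h1 := actN_apply hA hB g ⟨_, Subgroup.mem_map_of_mem _ ha⟩
    rw [h] at h1
    rw [← QuotientGroup.eq_one_iff]
    simp only [QuotientGroup.mk_mul, QuotientGroup.mk_inv]
    exact mul_inv_eq_one.2 h1.symm
  · intro h
    ext x
    rw [actN_apply]
    obtain ⟨_, a, ha, rfl⟩ := x
    have := (QuotientGroup.eq_one_iff (N := B) _).2 (h a ha)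
    simp only [QuotientGroup.mk_mul, QuotientGroup.mk_inv] at this
    simpa using mul_inv_eq_one.1 this

lemma card_map [Finite G] (A B : Subgroup G) [B.Normal] :
    Nat.card (A.map (QuotientGroup.mk' B)) = B.relIndex A := by
  have := Subgroup.relIndex_ker (f := QuotientGroup.mk' B) A
  rw [QuotientGroup.ker_mk'] at this
  exact this.symm

/-- elements centralizing all chief factors between `Fr P` and `P` -/
def CC (P : Subgroup G) : Subgroup G :=
  sInf {C | ∃ A B, IsChiefFactor A B ∧ Fr P ≤ B ∧ A ≤ P ∧ C = Cz A B}

lemma mem_CC {P : Subgroup G} {g : G} : g ∈ CC P ↔ ∀ A B, IsChiefFactor A B → Fr P ≤ B → A ≤ P →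
    ∀ a ∈ A, g * a * g⁻¹ * a⁻¹ ∈ B := by
  constructor
  · intro h A B hc h1 h2
    exact (Subgroup.mem_sInf.1 h (Cz A B) ⟨A, B, hc, h1, h2, rfl⟩).2
  · intro h
    refine Subgroup.mem_sInf.2 ?_
    rintro _ ⟨A, B, hc, h1, h2, rfl⟩
    have := hc.2.1
    exact (mem_Cz' (NB.of_normal ⊤ B) (Subgroup.mem_top g)).2 (h A B hc h1 h2)

lemma rel_eq_p [Finite G] {p : ℕ} [hp : Fact p.Prime] {P : Subgroup G} (hPn : P.Normal) (hP : IsPGroup p P)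
    (hB : ∀ A B : Subgroup G, IsChiefFactor A B → Fr P ≤ B → A ≤ P → (B.relIndex A).Prime) {A B : Subgroup G} (h : IsChiefFactor A B) (hF : Fr P ≤ B) (hAP : A ≤ P) : B.relIndex A = p := by
  have h1 := chief_dvd hP hAP h.2.2.1
  exact ((Nat.prime_dvd_prime_iff_eq hp.out (hB A B h hF hAP)).1 h1).symm

lemma CC_aux [Finite G] {p : ℕ} [hp : Fact p.Prime] {P : Subgroup G} (hPn : P.Normal) (hP : IsPGroup p P)
    (hB : ∀ A B : Subgroup G, IsChiefFactor A B → Fr P ≤ B → A ≤ P → (B.relIndex A).Prime) {A B : Subgroup G} (h : IsChiefFactor A B) (hF : Fr P ≤ B) (hAP : A ≤ P) :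
    (∀ g k : G, actN A B h.1 h.2.1 (g * k * g⁻¹ * k⁻¹) = 1) ∧ ∀ g, actN A B h.1 h.2.1 (g ^ (p - 1)) = 1 := by
  have hBn := h.2.1
  have hc : Nat.card (A.map (QuotientGroup.mk' B)) = p := by
    rw [card_map]; exact rel_eq_p hPn hP hB h hF hAP
  have hcyc : IsCyclic (A.map (QuotientGroup.mk' B)) := isCyclic_of_prime_card hc
  let e := IsCyclic.mulAutMulEquiv (A.map (QuotientGroup.mk' B))
  constructor
  · intro g k
    apply e.injective
    rw [map_mul, map_mul, map_mul, map_mul, map_mul, map_mul, map_inv, map_inv, map_inv, map_inv, map_one]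
    rw [mul_right_comm, mul_assoc (e _), mul_comm (e _) (e _)⁻¹]
    group
  · intro g
    apply e.injective
    rw [map_pow, map_pow, map_one]
    have hall : ∀ u : (ZMod (Nat.card (A.map (QuotientGroup.mk' B))))ˣ, u ^ (p - 1) = 1 := by
      rw [hc]
      exact fun u => ZMod.units_pow_card_sub_one_eq_one p u
    exact hall _

lemma CC_comm [Finite G] {p : ℕ} [hp : Fact p.Prime] {P : Subgroup G} (hPn : P.Normal) (hP : IsPGroup p P)
    (hB : ∀ A B : Subgroup G, IsChiefFactor A B → Fr P ≤ B → A ≤ P → (B.relIndex A).Prime) (g k : G) : g * k * g⁻¹ * k⁻¹ ∈ CC P :=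
  mem_CC.2 fun A B h hF hAP => (actN_eq_one h.1 h.2.1 _).1 ((CC_aux hPn hP hB h hF hAP).1 g k)

lemma CC_pow [Finite G] {p : ℕ} [hp : Fact p.Prime] {P : Subgroup G} (hPn : P.Normal) (hP : IsPGroup p P)
    (hB : ∀ A B : Subgroup G, IsChiefFactor A B → Fr P ≤ B → A ≤ P → (B.relIndex A).Prime) (g : G) : g ^ (p - 1) ∈ CC P :=
  mem_CC.2 fun A B h hF hAP => (actN_eq_one h.1 h.2.1 _).1 ((CC_aux hPn hP hB h hF hAP).2 g)

lemma CC_normal [Finite G] {p : ℕ} [hp : Fact p.Prime] {P : Subgroup G} (hPn : P.Normal) (hP : IsPGroup p P)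
    (hB : ∀ A B : Subgroup G, IsChiefFactor A B → Fr P ≤ B → A ≤ P → (B.relIndex A).Prime) : (CC P).Normal := ⟨fun x hx g => by
  have := (CC P).mul_mem (CC_comm hPn hP hB g x) hx
  simpa using this⟩

lemma fix_coset [Finite G] {p q : ℕ} [hp : Fact p.Prime] [hq : Fact q.Prime] (hqp : q ≠ p) {D : Subgroup G} (hD : D.Normal)
    (hDp : IsPGroup p D) {x b : G} (hx : ∃ k, orderOf x = q ^ k)
    (hb : ∀ z ∈ Subgroup.zpowers x, z * b * z⁻¹ * b⁻¹ ∈ D) : ∃ y, b⁻¹ * y ∈ D ∧ x * y = y * x := by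
  have hm : ∀ z ∈ Subgroup.zpowers x, ∀ y, b⁻¹ * y ∈ D → b⁻¹ * (z * y * z⁻¹) ∈ D := by
    intro z hz y hy
    have h1 := hD.conj_mem _ (hb z hz) b⁻¹
    have h2 := hD.conj_mem _ hy z
    have := D.mul_mem h1 h2
    convert this using 1
    group
  let act : MulAction (Subgroup.zpowers x) {y : G // b⁻¹ * y ∈ D} :=
    { smul := fun z y => ⟨z * y * (z : G)⁻¹, hm z z.2 y y.2⟩
      one_smul := fun y => Subtype.ext (by show (1 : G) * y * (1 : G)⁻¹ = y; simp)
      mul_smul := fun z w y => Subtype.ext (by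
        show ((z : G) * w) * y * ((z : G) * w)⁻¹ = z * (w * y * (w : G)⁻¹) * (z : G)⁻¹
        group) }
  have hz : IsPGroup q (Subgroup.zpowers x) := by
    obtain ⟨k, hk⟩ := hx
    exact IsPGroup.of_card (n := k) (by rw [Nat.card_zpowers, hk])
  have hcard : Nat.card {y : G // b⁻¹ * y ∈ D} = Nat.card D :=
    Nat.card_congr
      { toFun := fun y => ⟨b⁻¹ * y, y.2⟩
        invFun := fun d => ⟨b * d, by simp⟩
        left_inv := fun y => by simp
        right_inv := fun d => by simp }
  have hnd : ¬ q ∣ Nat.card {y : G // b⁻¹ * y ∈ D} := by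
    rw [hcard]
    obtain ⟨n, hn⟩ := IsPGroup.iff_card.1 hDp
    rw [hn]
    intro hd
    exact hqp ((Nat.prime_dvd_prime_iff_eq hq.out hp.out).1 (hq.out.dvd_of_dvd_pow hd))
  obtain ⟨y, hy⟩ := hz.nonempty_fixed_point_of_prime_not_dvd_card _ hnd
  refine ⟨y, y.2, ?_⟩
  have h1 : x * y * x⁻¹ = y := congrArg Subtype.val (hy ⟨x, Subgroup.mem_zpowers x⟩)
  exact mul_inv_eq_iff_eq_mul.1 h1

lemma cent_q [Finite G] {p q : ℕ} [hp : Fact p.Prime] [hq : Fact q.Prime] (hqp : q ≠ p) {P : Subgroup G}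
    (hPn : P.Normal) (hP : IsPGroup p P) {x : G} (hx : ∃ k, orderOf x = q ^ k) (hxC : x ∈ CC P) :
    ∀ y ∈ P, x * y = y * x := by
  have hΦ := Fr_normal hPn
  obtain ⟨B, ⟨hBn, hFB, hBP, hB⟩, hmin⟩ := (Set.toFinite {B : Subgroup G | B.Normal ∧ Fr P ≤ B ∧ B ≤ P ∧
    ∀ y ∈ P, ∃ c ∈ P, x * c = c * x ∧ c⁻¹ * y ∈ B}).exists_minimal
      ⟨P, hPn, Fr_le P, le_rfl, fun y hy => ⟨1, one_mem _, by simp, by simpa using hy⟩⟩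
  have hBe : B = Fr P := by
    by_contra hne
    obtain ⟨D, hFD, hD⟩ := exists_chief_below hBn hΦ (lt_of_le_of_ne hFB (Ne.symm hne))
    refine hD.2.2.1.not_ge (hmin ⟨hD.2.1, hFD, hD.2.2.1.le.trans hBP, fun y hy => ?_⟩ hD.2.2.1.le)
    obtain ⟨c, hc, hxc, hcB⟩ := hB y hy
    obtain ⟨b, hb, hxb⟩ := fix_coset hqp hD.2.1 (hP.to_le (hD.2.2.1.le.trans hBP)) (b := c⁻¹ * y) hx (by
      intro z hz
      have hzC : z ∈ CC P := (Subgroup.zpowers_le.2 hxC) hz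
      exact mem_CC.1 hzC B D hD hFD hBP _ hcB)
    have hbB : b ∈ B := by
      have := B.mul_mem hcB (hD.2.2.1.le hb)
      rwa [mul_inv_cancel_left] at this
    refine ⟨c * b, P.mul_mem hc (hBP hbB), ?_, ?_⟩
    · rw [← mul_assoc, hxc, mul_assoc, hxb, mul_assoc]
    · have := D.inv_mem hb
      simpa [mul_assoc] using this
  have hL : P ⊓ Subgroup.centralizer {x} = P := by
    refine Fr_nongen (fun y hy => ?_) inf_le_left
    obtain ⟨c, hc, hxc, hcB⟩ := hB y hy
    rw [hBe] at hcB
    have h1 : c ∈ P ⊓ Subgroup.centralizer {x} := ⟨hc, Subgroup.mem_centralizer_singleton_iff.2 (by rw [hxc])⟩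
    have := mul_mem (Subgroup.mem_sup_left (T := Fr P) h1) (Subgroup.mem_sup_right hcB)
    simpa using this
  intro y hy
  rw [← hL] at hy
  have := Subgroup.mem_centralizer_singleton_iff.1 hy.2
  first | exact this | exact this.symm

lemma cent_coprime [Finite G] {p : ℕ} [hp : Fact p.Prime] {P : Subgroup G}
    (hPn : P.Normal) (hP : IsPGroup p P) {z : G} (hz : (orderOf z).Coprime p) (hzC : z ∈ CC P) :
    ∀ y ∈ P, z * y = y * z := by
  have hle : Subgroup.zpowers z ≤ Subgroup.centralizer (P : Set G) := by
    refine L0 fun q hq w hw ⟨k, hk⟩ => ?_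
    have : Fact q.Prime := ⟨hq⟩
    by_cases hqp : q = p
    · have hd : orderOf w ∣ orderOf z := by
        have := orderOf_dvd_natCard (⟨w, hw⟩ : Subgroup.zpowers z)
        rwa [Nat.card_zpowers, ← Subgroup.orderOf_coe] at this
      have h1 : orderOf w = 1 := by
        have h2 : (orderOf w).Coprime p := Nat.Coprime.coprime_dvd_left hd hz
        rw [hk, hqp] at h2 ⊢
        by_contra hne
        have h3 : p ∣ p ^ k := dvd_pow_self p (by rintro rfl; exact hne (pow_zero _))
        have := Nat.Coprime.eq_one_of_dvd (Nat.Coprime.symm h2) h3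
        exact hp.out.one_lt.ne' this
      rw [orderOf_eq_one_iff.1 h1]
      exact one_mem _
    · have := cent_q hqp hPn hP ⟨k, hk⟩ ((Subgroup.zpowers_le.2 hzC) hw)
      exact Subgroup.mem_centralizer_iff.2 fun y hy => (this y hy).symm
  intro y hy
  exact (Subgroup.mem_centralizer_iff.1 (hle (Subgroup.mem_zpowers z)) y hy).symm

end Ss

set_option linter.unusedVariables false
open scoped Pointwise
namespace Ss
variable {G : Type*} [Group G]

lemma chief_el [Finite G] {p : ℕ} [hp : Fact p.Prime] {A B : Subgroup G} (hA : IsPGroup p A)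
    (h : IsChiefFactor A B) : (∀ x ∈ A, x ^ p ∈ B) ∧ ∀ x ∈ A, ∀ y ∈ A, x * y * x⁻¹ * y⁻¹ ∈ B := by
  have hF := Fr_normal h.1
  have hB := h.2.1
  have hle : Fr A ≤ B := by
    rcases IsChief.eq h (L := B ⊔ Fr A) inferInstance le_sup_left (sup_le h.2.2.1.le (Fr_le A)) with e | e
    · exact le_sup_right.trans e.le
    · exact absurd (Fr_nongen e.ge h.2.2.1.le) h.2.2.1.ne
  exact ⟨fun x hx => hle (Fr_pow hA hx), fun x hx y hy => hle (Fr_comm hA hx hy)⟩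

lemma fix_all [Finite G] {p : ℕ} [hp : Fact p.Prime] {K A B : Subgroup G} (hKn : K.Normal) (h : IsChiefFactor A B)
    (hd : p ∣ B.relIndex A)
    (hK : ∀ g ∈ K, ∃ k : ℕ, ∀ a ∈ A, g ^ (p ^ k) * a * (g ^ (p ^ k))⁻¹ * a⁻¹ ∈ B) :
    ∀ g ∈ K, ∀ a ∈ A, g * a * g⁻¹ * a⁻¹ ∈ B := by
  have hA := h.1
  have hB := h.2.1
  obtain ⟨x, hxA, hxB, hx⟩ := fix_pt hA hB hd hK
  have hKm : (K.map (QuotientGroup.mk' B)).Normal := hKn.map _ (QuotientGroup.mk'_surjective B)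
  let Z := (Subgroup.centralizer (K.map (QuotientGroup.mk' B) : Set (G ⧸ B))).comap (QuotientGroup.mk' B)
  have hZ : ∀ a, a ∈ Z ↔ ∀ g ∈ K, g * a * g⁻¹ * a⁻¹ ∈ B := by
    intro a
    rw [Subgroup.mem_comap, Subgroup.mem_centralizer_iff]
    constructor
    · intro hh g hg
      have := hh _ (Subgroup.mem_map_of_mem _ hg)
      rw [← QuotientGroup.eq_one_iff]
      simp only [QuotientGroup.mk_mul, QuotientGroup.mk_inv]
      rw [mul_inv_eq_one, mul_inv_eq_iff_eq_mul]
      exact this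
    · rintro hh _ ⟨g, hg, rfl⟩
      have := hh g hg
      rw [← QuotientGroup.eq_one_iff] at this
      simp only [QuotientGroup.mk_mul, QuotientGroup.mk_inv] at this
      rw [mul_inv_eq_one, mul_inv_eq_iff_eq_mul] at this
      exact this
  have hZn : Z.Normal := Subgroup.Normal.comap inferInstance _
  have hBZ : B ≤ Z := fun b hb => (hZ b).2 fun g _ => B.mul_mem (hB.conj_mem b hb g) (B.inv_mem hb)
  rcases IsChief.eq h (L := A ⊓ Z) inferInstance (le_inf h.2.2.1.le hBZ) inf_le_left with e | e
  · exact absurd (e ▸ (⟨hxA, (hZ x).2 hx⟩ : x ∈ A ⊓ Z)) hxB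
  · intro g hg a ha
    rw [← e] at ha
    exact (hZ a).1 ha.2 g hg

lemma zs_mem {B : Subgroup G} (hB : B.Normal) {x y : G} (hy : y ∈ Subgroup.zpowers x ⊔ B) :
    ∃ m : ℤ, ∃ b ∈ B, x ^ m * b = y := by
  obtain ⟨_, ⟨m, rfl⟩, b, hb, e⟩ := (mem_sup_NB (NB.of_normal _ _)).1 hy
  exact ⟨m, b, hb, e⟩

lemma zs_step {B : Subgroup G} (hB : B.Normal) {x : G} (hx : ∀ g, g * x * g⁻¹ ∈ Subgroup.zpowers x ⊔ B) :
    SStep B (Subgroup.zpowers x ⊔ B) := by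
  refine ⟨hB, ⟨fun l hl g => ?_⟩, le_sup_right, x, Subgroup.mem_sup_left (Subgroup.mem_zpowers x), fun y hy => ?_⟩
  · obtain ⟨m, b, hb, rfl⟩ := zs_mem hB hl
    have h2 := mul_mem (zpow_mem (hx g) m) (Subgroup.mem_sup_right (hB.conj_mem b hb g))
    rw [conj_zpow] at h2
    simpa [mul_assoc] using h2
  · obtain ⟨m, b, hb, rfl⟩ := zs_mem hB hy
    refine ⟨m, ?_⟩
    have := B.inv_mem hb
    simpa using this

lemma split_order {q : ℕ} (hq : q.Prime) [Finite G] (x : G) : ∃ a, (orderOf (x ^ q ^ a)).Coprime q := by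
  obtain ⟨a, m, hm, e⟩ := Nat.exists_eq_pow_mul_and_not_dvd (orderOf_pos x).ne' q hq.ne_one
  refine ⟨a, ?_⟩
  rw [orderOf_pow_of_dvd (pow_ne_zero _ hq.ne_zero) (e ▸ Dvd.intro _ rfl), e,
    Nat.mul_div_cancel_left _ (pow_pos hq.pos _)]
  exact ((Nat.Prime.coprime_iff_not_dvd hq).2 hm).symm

lemma coprime_elt [Finite G] {p k : ℕ} (hp : p.Prime) {z w : G} (hz : (orderOf z).Coprime p)
    (hw : w ∈ Subgroup.zpowers z) (hk : orderOf w = p ^ k) : w = 1 := by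
  have hd : orderOf w ∣ orderOf z := by
    have := orderOf_dvd_natCard (⟨w, hw⟩ : Subgroup.zpowers z)
    rwa [Nat.card_zpowers, ← Subgroup.orderOf_coe] at this
  rw [← orderOf_eq_one_iff]
  have h2 : (orderOf w).Coprime p := Nat.Coprime.coprime_dvd_left hd hz
  rw [hk] at h2 ⊢
  by_contra hne
  have h3 : p ∣ p ^ k := dvd_pow_self p (by rintro rfl; exact hne (pow_zero _))
  have := Nat.Coprime.eq_one_of_dvd (Nat.Coprime.symm h2) h3
  exact hp.one_lt.ne' this

lemma stepC1 [Finite G] {p : ℕ} [hp : Fact p.Prime] {P : Subgroup G} (hPn : P.Normal) (hP : IsPGroup p P)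
    (hB : ∀ A B : Subgroup G, IsChiefFactor A B → Fr P ≤ B → A ≤ P → (B.relIndex A).Prime)
    {A B : Subgroup G} (h : IsChiefFactor A B) (hAP : A ≤ P) : B.relIndex A = p := by
  have hAn := h.1
  have hBn := h.2.1
  obtain ⟨hpw, hcm⟩ := chief_el (hP.to_le hAP) h
  have hCn := CC_normal hPn hP hB
  have hfix := fix_all hCn h (chief_dvd hP hAP h.2.2.1) (by
    intro g hg
    obtain ⟨k, hk⟩ := split_order hp.out g
    refine ⟨k, fun a ha => ?_⟩
    have := cent_coprime hPn hP hk ((CC P).pow_mem hg _) a (hAP ha)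
    rw [this]
    simp)
  have hf : ∀ g ∈ CC P, actN A B hAn hBn g = 1 := fun g hg => (actN_eq_one hAn hBn g).2 (hfix g hg)
  let N := A.map (QuotientGroup.mk' B)
  let _ : CommGroup N := { (inferInstance : Group N) with
    mul_comm := by
      rintro ⟨_, a, ha, rfl⟩ ⟨_, b, hb, rfl⟩
      apply Subtype.ext
      have := (QuotientGroup.eq_one_iff (N := B) _).2 (hcm a ha b hb)
      simp only [QuotientGroup.mk_mul, QuotientGroup.mk_inv] at this
      rw [mul_inv_eq_one, mul_inv_eq_iff_eq_mul] at this
      exact this }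
  have hNt : Nontrivial N := by
    rw [Subgroup.nontrivial_iff_ne_bot]
    intro e
    rw [Subgroup.map_eq_bot_iff, QuotientGroup.ker_mk'] at e
    exact h.2.2.1.not_ge e
  have hNp : ∀ x : N, x ^ p = 1 := by
    rintro ⟨_, a, ha, rfl⟩
    apply Subtype.ext
    exact (QuotientGroup.eq_one_iff (N := B) _).2 (hpw a ha)
  have key : ∀ g : G, ∃ m : ℕ, ∀ x : N, actN A B hAn hBn g x = x ^ m := by
    intro g
    have h1 : (actN A B hAn hBn g) ^ p = actN A B hAn hBn g := by
      have h2 : (actN A B hAn hBn g) ^ (p - 1) = 1 := by rw [← map_pow]; exact hf _ (CC_pow hPn hP hB g)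
      obtain ⟨r, rfl⟩ : ∃ r, p = r + 1 := ⟨p - 1, (Nat.succ_pred_prime hp.out).symm⟩
      rw [Nat.add_sub_cancel] at h2
      rw [pow_succ, h2, one_mul]
    obtain ⟨m, x, hx1, hx⟩ := eigen (N := N) (p := p) hNp (actN A B hAn hBn g) h1
    refine ⟨m, ?_⟩
    let E : Subgroup N := ((actN A B hAn hBn g).toMonoidHom).eqLocus (powMonoidHom m)
    have hE : ∀ y : N, y ∈ E ↔ actN A B hAn hBn g y = y ^ m := fun y => Iff.rfl
    let L := (E.map N.subtype).comap (QuotientGroup.mk' B)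
    have hL : ∀ y, y ∈ L ↔ ∃ hy : QuotientGroup.mk' B y ∈ N, (⟨QuotientGroup.mk' B y, hy⟩ : N) ∈ E := by
      intro y
      constructor
      · rintro ⟨z, hz, e⟩
        have e' : (z : G ⧸ B) = QuotientGroup.mk' B y := e
        refine ⟨e' ▸ z.2, ?_⟩
        have : (⟨QuotientGroup.mk' B y, e' ▸ z.2⟩ : N) = z := Subtype.ext e'.symm
        rw [this]; exact hz
      · rintro ⟨hy, hyE⟩
        exact ⟨_, hyE, rfl⟩
    have hLn : L.Normal := by
      refine ⟨fun y hy k => ?_⟩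
      obtain ⟨hyN, hyE⟩ := (hL y).1 hy
      have hc : actN A B hAn hBn g * actN A B hAn hBn k = actN A B hAn hBn k * actN A B hAn hBn g := by
        have := hf _ (CC_comm hPn hP hB g k)
        rw [map_mul, map_mul, map_mul, map_inv, map_inv, mul_inv_eq_one, mul_inv_eq_iff_eq_mul] at this
        exact this
      refine ⟨actN A B hAn hBn k ⟨_, hyN⟩, ?_, ?_⟩
      · refine (hE _).2 ?_
        have h3 := (hE _).1 hyE
        rw [← MulAut.mul_apply, hc, MulAut.mul_apply, h3, map_pow]
      · show ((actN A B hAn hBn k ⟨_, hyN⟩ : N) : G ⧸ B) = _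
        rw [actN_apply]
        simp
    have hLA : L ≤ A := by
      intro y hy
      obtain ⟨⟨a, ha, e⟩, -⟩ := (hL y).1 hy
      have : a⁻¹ * y ∈ B := QuotientGroup.eq.1 e
      have := A.mul_mem ha (h.2.2.1.le this)
      rwa [mul_inv_cancel_left] at this
    have hBL : B ≤ L := by
      intro b hb
      have : QuotientGroup.mk' B b = 1 := (QuotientGroup.eq_one_iff _).2 hb
      show QuotientGroup.mk' B b ∈ E.map N.subtype
      rw [this]; exact one_mem _
    have hLe : L = A := by
      rcases IsChief.eq h hLn hBL hLA with e | e
      · exfalso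
        obtain ⟨_, a, ha, rfl⟩ := x
        have haL : a ∈ L := (hL a).2 ⟨⟨a, ha, rfl⟩, hx⟩
        rw [e] at haL
        exact hx1 (Subtype.ext ((QuotientGroup.eq_one_iff _).2 haL))
      · exact e
    rintro ⟨_, a, ha, rfl⟩
    have ha' : a ∈ A := ha
    rw [← hLe] at ha'
    exact ((hL a).1 ha').2
  obtain ⟨a, haA, haB⟩ := Set.exists_of_ssubset h.2.2.1
  have hs : SStep B (Subgroup.zpowers a ⊔ B) := by
    refine zs_step hBn fun g => ?_
    obtain ⟨m, hm⟩ := key g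
    have h1 := congrArg Subtype.val (hm ⟨_, Subgroup.mem_map_of_mem _ haA⟩)
    rw [actN_apply] at h1
    have h2 : (a ^ m)⁻¹ * (g * a * g⁻¹) ∈ B := by
      refine QuotientGroup.eq.1 ?_
      exact h1.symm
    have h3 : a ^ m ∈ Subgroup.zpowers a ⊔ B := Subgroup.mem_sup_left (pow_mem (Subgroup.mem_zpowers a) m)
    have := mul_mem h3 (Subgroup.mem_sup_right h2)
    rwa [mul_inv_cancel_left] at this
  have hle : Subgroup.zpowers a ⊔ B ≤ A := sup_le (Subgroup.zpowers_le.2 haA) h.2.2.1.le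
  rcases IsChief.eq h hs.2.1 le_sup_right hle with e | e
  · exact absurd (e ▸ (Subgroup.mem_sup_left (Subgroup.mem_zpowers a) : a ∈ Subgroup.zpowers a ⊔ B)) haB
  · have hc := hs.2.2.2
    rw [e] at hc
    exact cyc_index hBn h.2.2.1 hc hpw

end Ss

set_option linter.unusedVariables false
open scoped Pointwise
namespace Ss
variable {G : Type*} [Group G]

def Good (F : Subgroup G) (p : ℕ) (P : Subgroup G) : Prop :=
  P.Normal ∧ IsPGroup p P ∧ P ≤ F ∧ (∀ x ∈ F, (∃ k, orderOf x = p ^ k) → x ∈ P) ∧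
    ∀ A B : Subgroup G, IsChiefFactor A B → Fr P ≤ B → A ≤ P → (B.relIndex A).Prime

lemma stepC2_N [Finite G] {H E : Subgroup G} (hH : H.Normal) (hEn : E.Normal) (hEH : E ≤ H)
    (hgood : ∀ p : ℕ, p.Prime → ∃ P, Good (FStarIn H) p P)
    (hE : ∀ p P, p.Prime → Good (FStarIn H) p P → E ≤ CC P) {q : ℕ} (hq : q.Prime) {z : G} (hz : z ∈ E)
    (hzq : ∃ k, orderOf z = q ^ k) : z ∈ FStarIn H := by
  have hFn := FStar_normal H hH
  set F := FStarIn H with hF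
  have hfq : Fact q.Prime := ⟨hq⟩
  let S : Set G := {f | f ∈ F ∧ (orderOf f).Coprime q}
  let N : Subgroup G := E ⊓ Subgroup.centralizer S
  have hmem : ∀ n, n ∈ N ↔ n ∈ E ∧ ∀ f ∈ F, (orderOf f).Coprime q → f * n = n * f := by
    intro n
    show n ∈ E ⊓ Subgroup.centralizer S ↔ _
    rw [Subgroup.mem_inf, Subgroup.mem_centralizer_iff]
    exact and_congr Iff.rfl ⟨fun h f h1 h2 => h f ⟨h1, h2⟩, fun h f hf => h f hf.1 hf.2⟩
  have hNn : N.Normal := by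
    refine ⟨fun n hn g => ?_⟩
    rw [hmem] at hn ⊢
    refine ⟨hEn.conj_mem n hn.1 g, fun f hf hfo => ?_⟩
    have ho : orderOf (g⁻¹ * f * g) = orderOf f := by
      have := orderOf_injective (MulAut.conj g⁻¹).toMonoidHom (MulAut.conj g⁻¹).injective f
      simpa using this
    have h1 : g⁻¹ * f * g ∈ F := by simpa using hFn.conj_mem f hf g⁻¹
    have h2 := hn.2 _ h1 (by rw [ho]; exact hfo)
    calc f * (g * n * g⁻¹) = g * ((g⁻¹ * f * g) * n) * g⁻¹ := by group
      _ = g * (n * (g⁻¹ * f * g)) * g⁻¹ := by rw [h2]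
      _ = _ := by group
  have hzN : z ∈ N := by
    rw [hmem]
    refine ⟨hz, fun f hf hfo => ?_⟩
    have hle : Subgroup.zpowers f ≤ Subgroup.centralizer {z} := by
      refine L0 fun r hr w hw ⟨k, hk⟩ => ?_
      have hfr : Fact r.Prime := ⟨hr⟩
      rw [Subgroup.mem_centralizer_singleton_iff]
      by_cases hrq : r = q
      · subst hrq
        rw [coprime_elt hr hfo hw hk]; simp
      · obtain ⟨P, hP⟩ := hgood r hr
        have hwF : w ∈ F := (Subgroup.zpowers_le.2 hf) hw
        have := cent_q (p := r) (q := q) (Ne.symm hrq) hP.1 hP.2.1 hzq (hE r P hr hP hz) w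
          (hP.2.2.2.1 w hwF ⟨k, hk⟩)
        first | exact this | exact this.symm
    have := Subgroup.mem_centralizer_singleton_iff.1 (hle (Subgroup.mem_zpowers f))
    first | exact this | exact this.symm
  have hnil : Group.IsNilpotent N := by
    have hpg : IsPGroup q (N ⧸ Subgroup.center N) := by
      intro u
      obtain ⟨x, rfl⟩ := QuotientGroup.mk_surjective u
      obtain ⟨a, ha⟩ := split_order hq (x : G)
      refine ⟨a, ?_⟩
      rw [← QuotientGroup.mk_pow, QuotientGroup.eq_one_iff]
      obtain ⟨P, hP⟩ := hgood q hq
      set y : G := (x : G) ^ q ^ a with hy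
      have hyN : y ∈ N := N.pow_mem x.2 _
      have hyE := ((hmem y).1 hyN).1
      have hc := cent_coprime hP.1 hP.2.1 ha (hE q P hq hP hyE)
      have hle : F ≤ Subgroup.centralizer {y} := by
        refine L0 fun r hr w hw ⟨k, hk⟩ => ?_
        rw [Subgroup.mem_centralizer_singleton_iff]
        by_cases hrq : r = q
        · subst hrq
          have := hc w (hP.2.2.2.1 w hw ⟨k, hk⟩)
          first | exact this | exact this.symm
        · have := ((hmem y).1 hyN).2 w hw (by
            rw [hk]; exact Nat.Coprime.pow_left _ ((Nat.coprime_primes hr hq).2 hrq))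
          first | exact this | exact this.symm
      have hyF : y ∈ F := by
        refine cent_FStar H (hEH hyE) fun f hf => ?_
        have := Subgroup.mem_centralizer_singleton_iff.1 (hle hf)
        first | exact this | exact this.symm
      rw [Subgroup.mem_center_iff]
      rintro ⟨n, hn⟩
      apply Subtype.ext
      exact (((hmem n).1 hn).2 y hyF ha).symm
    have := hpg.isNilpotent
    exact Group.of_quotient_center_nilpotent this
  exact nilp_le_FStar hNn (inf_le_left.trans hEH) hnil hzN

lemma stepC2 [Finite G] {H : Subgroup G} (hH : H.Normal)
    (hgood : ∀ p : ℕ, p.Prime → ∃ P, Good (FStarIn H) p P) (g h : G) (hh : h ∈ H) :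
    g * h * g⁻¹ * h⁻¹ ∈ FStarIn H := by
  have hEH : ⁅(⊤ : Subgroup G), H⁆ ≤ H := Subgroup.commutator_le_right _ _
  have : ⁅(⊤ : Subgroup G), H⁆ ≤ FStarIn H := by
    refine L0 fun q hq z hz hzq => ?_
    refine stepC2_N hH inferInstance hEH hgood ?_ hq hz hzq
    intro p P hp hP
    have : Fact p.Prime := ⟨hp⟩
    rw [Subgroup.commutator_le]
    intro a _ b _
    exact CC_comm hP.1 hP.2.1 hP.2.2.2.2 a b
  exact this (Subgroup.commutator_mem_commutator (Subgroup.mem_top g) hh)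

theorem main [Finite G] (H : Subgroup G) (hH : H.Normal) (hGH : IsSupersoluble (G ⧸ H))
    (hyp : ∀ p : ℕ, p.Prime → ∀ P : Subgroup G, IsSylowIn p P (FStarIn H) →
      ¬ IsCyclic P → ∀ M : Subgroup G, IsMaximalIn M P →
        ¬ HasSupersolubleSupplement M → UsQuasinormal M) :
    IsSupersoluble G := by
  have hFn := FStar_normal H hH
  have hFH : FStarIn H ≤ H := (FStar_mem H).1
  have hnil := FStar_nilp H (stepA H hH hyp)
  have hgood : ∀ p : ℕ, p.Prime → ∃ P, Good (FStarIn H) p P := by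
    intro p hp
    have : Fact p.Prime := ⟨hp⟩
    obtain ⟨P, h1, h2, h3⟩ := sylF hFn hnil p hp
    exact ⟨P, h1, h2.2.1, h2.1, h3, fun A B h hF hA => stepB h1 h2.2.1 (hyp p hp P h2) h hF hA⟩
  have hcomm := stepC2 hH hgood
  set F := FStarIn H with hF
  have c1 : Relation.ReflTransGen (SStep (G := G)) ⊥ F := by
    obtain ⟨B, ⟨hBn, hBF, hBc⟩, hmax⟩ := (Set.toFinite {B : Subgroup G | B.Normal ∧ B ≤ F ∧
      Relation.ReflTransGen (SStep (G := G)) ⊥ B}).exists_maximal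
      ⟨⊥, inferInstance, bot_le, Relation.ReflTransGen.refl⟩
    rcases hBF.eq_or_lt with e | hlt
    · exact e ▸ hBc
    exfalso
    obtain ⟨A, hAF, hA⟩ := exists_chief_above hFn hBn hlt
    have hex : ∃ p P, p.Prime ∧ Good F p P ∧ ¬ A ⊓ P ≤ B := by
      by_contra hcon
      push Not at hcon
      refine hA.2.2.1.not_ge (L0 fun q hq z hz hzq => ?_)
      obtain ⟨P, hP⟩ := hgood q hq
      exact hcon q P hq hP ⟨hz, hP.2.2.2.1 z (hAF hz) hzq⟩
    obtain ⟨p, P, hp, hP, hAP⟩ := hex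
    have hfp : Fact p.Prime := ⟨hp⟩
    obtain ⟨h1, h2⟩ := chief_inf hA hP.1 hAP
    have h3 := stepC1 hP.1 hP.2.1 hP.2.2.2.2 h1 inf_le_right
    rw [h2, ← card_map] at h3
    have hcy : IsCyclic (A.map (QuotientGroup.mk' B)) := isCyclic_of_prime_card h3
    have hc := CycMod.of_hom _ A hcy
    rw [QuotientGroup.ker_mk'] at hc
    exact hA.2.2.1.not_ge (hmax ⟨hA.1, hAF, hBc.tail ⟨hBn, hA.1, hA.2.2.1.le, hc⟩⟩ hA.2.2.1.le)
  have c2 : Relation.ReflTransGen (SStep (G := G)) ⊥ H := by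
    obtain ⟨L, ⟨hLn, hFL, hLH, hLc⟩, hmax⟩ := (Set.toFinite {B : Subgroup G | B.Normal ∧ F ≤ B ∧ B ≤ H ∧
      Relation.ReflTransGen (SStep (G := G)) ⊥ B}).exists_maximal
      ⟨F, hFn, le_rfl, hFH, c1⟩
    rcases hLH.eq_or_lt with e | hlt
    · exact e ▸ hLc
    exfalso
    obtain ⟨x, hxH, hxL⟩ := SetLike.exists_of_lt hlt
    have hst : SStep L (Subgroup.zpowers x ⊔ L) := by
      refine zs_step hLn fun g => ?_
      have h1 := hFL (hcomm g x hxH)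
      have h2 := mul_mem (Subgroup.mem_sup_right (S := Subgroup.zpowers x) h1)
        (Subgroup.mem_sup_left (T := L) (Subgroup.mem_zpowers x))
      simpa using h2
    refine hxL (hmax ⟨hst.2.1, hFL.trans le_sup_right, sup_le (Subgroup.zpowers_le.2 hxH) hLH,
      hLc.tail hst⟩ le_sup_right (Subgroup.mem_sup_left (Subgroup.mem_zpowers x)))
  rw [ss_iff] at hGH ⊢
  have c3 : Relation.ReflTransGen (SStep (G := G)) ((⊥ : Subgroup (G ⧸ H)).comap (QuotientGroup.mk' H))
      ((⊤ : Subgroup (G ⧸ H)).comap (QuotientGroup.mk' H)) :=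
    hGH.lift (p := SStep) (fun A => A.comap (QuotientGroup.mk' H)) (fun _ _ h => h.comap _)
  rw [MonoidHom.comap_bot, QuotientGroup.ker_mk', Subgroup.comap_top] at c3
  exact c2.trans c3

end Ss

/-- If `H ⊴ G` with `G/H` supersoluble and every maximal subgroup of
every non-cyclic Sylow subgroup of `F*(H)` having no supersoluble supplement in `G`
is 𝔘ₛ-quasinormal in `G`, then `G` is supersoluble. -/
theorem stmt_3 {G : Type*} [Group G] [Finite G]
    (H : Subgroup G) (hH : H.Normal) (hGH : IsSupersoluble (G ⧸ H))
    (hyp : ∀ p : ℕ, p.Prime → ∀ P : Subgroup G, IsSylowIn p P (FStarIn H) →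
      ¬ IsCyclic P → ∀ M : Subgroup G, IsMaximalIn M P →
        ¬ HasSupersolubleSupplement M → UsQuasinormal M) :
    IsSupersoluble G := by
  exact Ss.main H hH hGH hyp
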